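/- Let f and its polynomial sieving system (I_p) be as in the context. For every integer ν ≥ 0, the limit ρ_ν = lim_{x→∞} #{p ≤ x prime : |I_p| = ν} / (x/log x) exists; moreover, ρ_ν equals the proportion of elements of the Galois group G of the splitting field of f over ℚ which fix exactly ν of the d roots of f (under the natural action of G on the roots). -/

import Mathlib

section
open Filter Topology MeasureTheory Set

namespace PIT

noncomputable def kf (x : ℝ) : ℝ := ∫ y in (0:ℝ)..1, (1 - y) * Real.cos (x * y)

lemma kf_eq {x : ℝ} (hx : x ≠ 0) : kf x = (1 - Real.cos x) / x ^ 2 := by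
  have h : ∀ y ∈ Set.uIcc (0:ℝ) 1, HasDerivAt
      (fun y : ℝ => (1 - y) * (Real.sin (x * y) / x) - Real.cos (x * y) / x ^ 2)
      ((1 - y) * Real.cos (x * y)) y := by
    intro y _
    have h1 : HasDerivAt (fun y : ℝ => x * y) x y := by
      simpa using (hasDerivAt_id y).const_mul x
    have h2 := ((Real.hasDerivAt_sin (x * y)).comp y h1).div_const x
    have h3 := ((Real.hasDerivAt_cos (x * y)).comp y h1).div_const (x ^ 2)
    have h4 : HasDerivAt (fun y : ℝ => 1 - y) (-1) y := by
      simpa using (hasDerivAt_id y).const_sub 1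
    refine ((h4.mul h2).sub h3).congr_deriv ?_
    simp only [Function.comp]
    field_simp
    ring
  rw [kf, intervalIntegral.integral_eq_sub_of_hasDerivAt h]
  · simp
    ring
  · exact Continuous.intervalIntegrable (by fun_prop) _ _

lemma kf_nonneg (x : ℝ) : 0 ≤ kf x := by
  by_cases hx : x = 0
  · subst hx
    rw [kf]
    apply intervalIntegral.integral_nonneg (by norm_num)
    intro u hu
    have := hu.2
    simp; linarith
  · rw [kf_eq hx]
    have := Real.cos_le_one x
    exact div_nonneg (by linarith) (by positivity)

lemma kf_le_one (x : ℝ) : kf x ≤ 1 := by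
  have : ‖kf x‖ ≤ 1 * |(1:ℝ) - 0| := by
    apply intervalIntegral.norm_integral_le_of_norm_le_const
    intro y hy
    rw [Set.uIoc_of_le (by norm_num)] at hy
    rw [norm_mul]
    have h1 : ‖1 - y‖ ≤ 1 := by
      rw [Real.norm_eq_abs, abs_le]; constructor <;> linarith [hy.1, hy.2]
    have h2 : ‖Real.cos (x * y)‖ ≤ 1 := Real.abs_cos_le_one _
    nlinarith [norm_nonneg (1 - y), norm_nonneg (Real.cos (x*y))]
  simpa using (le_abs_self _).trans (this)

lemma kf_le (x : ℝ) : kf x ≤ 3 * (1 + x ^ 2)⁻¹ := by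
  rw [← div_eq_mul_inv, le_div_iff₀ (by positivity)]
  have h1 := kf_le_one x
  have h2 : kf x * x ^ 2 ≤ 2 := by
    by_cases hx : x = 0
    · simp [hx]
    · rw [kf_eq hx, div_mul_cancel₀ _ (by positivity)]
      linarith [Real.neg_one_le_cos x]
  linarith

lemma kf_cont : Continuous kf := by
  unfold kf
  apply intervalIntegral.continuous_parametric_intervalIntegral_of_continuous' (by fun_prop)

lemma kf_int : Integrable kf := by
  refine (integrable_inv_one_add_sq.const_mul 3).mono' kf_cont.aestronglyMeasurable ?_
  filter_upwards with x
  rw [Real.norm_eq_abs, abs_of_nonneg (kf_nonneg x)]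
  exact kf_le x

lemma kf_integral_pos : 0 < ∫ x, kf x := by
  apply integral_pos_of_integrable_nonneg_nonzero (x := Real.pi) kf_cont kf_int kf_nonneg
  rw [kf_eq Real.pi_ne_zero]
  simp

end PIT
end

section
open Filter Topology MeasureTheory Set

namespace PIT

lemma kf_eq_re (x : ℝ) :
    kf x = (∫ y in (0:ℝ)..1, ((1 - y : ℝ) : ℂ) * Complex.exp (Complex.I * (x * y : ℝ))).re := by
  have h : Complex.reCLM (∫ y in (0:ℝ)..1, ((1 - y : ℝ) : ℂ) * Complex.exp (Complex.I * (x * y : ℝ)))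
      = ∫ y in (0:ℝ)..1, Complex.reCLM
        (((1 - y : ℝ) : ℂ) * Complex.exp (Complex.I * (x * y : ℝ))) := by
    rw [ContinuousLinearMap.intervalIntegral_comp_comm]
    exact Continuous.intervalIntegrable (by fun_prop) _ _
  rw [Complex.reCLM_apply] at h
  rw [h, kf]
  congr 1
  ext y
  rw [Complex.reCLM_apply, Complex.re_ofReal_mul, mul_comm Complex.I, Complex.exp_ofReal_mul_I_re]

lemma swap_step {b : ℝ → ℝ} (hb : Measurable b) {M : ℝ} (hM : ∀ v, |b v| ≤ M) {G : ℂ → ℂ}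
    (h : ∀ s : ℂ, 1 < s.re → ∫ v in Ioi (0:ℝ), (b v : ℂ) * Complex.exp (-(s - 1) * v) = G s)
    (L u : ℝ) {ε : ℝ} (hε : 0 < ε) :
    ∫ v in Ioi (0:ℝ), b v * Real.exp (-ε * v) * kf (L * (u - v)) =
      (∫ y in (0:ℝ)..1, ((1 - y : ℝ) : ℂ) * Complex.exp (Complex.I * (L * u * y : ℝ)) *
        G (1 + ε + Complex.I * (L * y : ℝ))).re := by
  set F : ℝ → ℝ → ℂ := fun v y => ((b v * Real.exp (-ε * v) : ℝ) : ℂ) * (((1 - y : ℝ) : ℂ) *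
    Complex.exp (Complex.I * (L * (u - v) * y : ℝ))) with hF
  have hint : Integrable (Function.uncurry F)
      ((volume.restrict (Ioi (0:ℝ))).prod (volume.restrict (Ioc (0:ℝ) 1))) := by
    have hi : Integrable (fun v : ℝ => M * Real.exp (-ε * v)) (volume.restrict (Ioi (0:ℝ))) :=
      (integrableOn_exp_mul_Ioi (neg_lt_zero.mpr hε) 0).const_mul M
    have hj : Integrable (fun z : ℝ × ℝ => M * Real.exp (-ε * z.1))
      ((volume.restrict (Ioi (0:ℝ))).prod (volume.restrict (Ioc (0:ℝ) 1))) := hi.comp_fst _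
    refine hj.mono' ?_ ?_
    · apply Measurable.aestronglyMeasurable
      simp only [hF, Function.uncurry_def]
      fun_prop
    · rw [Measure.prod_restrict]
      filter_upwards [ae_restrict_mem (measurableSet_Ioi.prod measurableSet_Ioc)] with z hz
      obtain ⟨hz1, hz2⟩ := hz
      simp only [hF, Function.uncurry_def, norm_mul]
      rw [mul_comm Complex.I, Complex.norm_exp_ofReal_mul_I, mul_one, Complex.norm_real,
        Complex.norm_real, norm_mul, Real.norm_eq_abs, Real.norm_eq_abs, Real.norm_eq_abs,
        Real.abs_exp]
      have h1 : |1 - z.2| ≤ 1 := by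
        rw [abs_le]; constructor <;> linarith [hz2.1, hz2.2]
      have h2 := hM z.1
      have h3 := Real.exp_pos (-ε * z.1)
      calc _ ≤ |b z.1| * Real.exp (-ε * z.1) * 1 := by gcongr
        _ ≤ _ := by rw [mul_one]; gcongr
  have hsw := integral_integral_swap hint
  have hl : ∀ v, ∫ y in Ioc (0:ℝ) 1, F v y = ((b v * Real.exp (-ε * v) : ℝ) : ℂ) *
     ∫ y in (0:ℝ)..1, ((1 - y : ℝ) : ℂ) * Complex.exp (Complex.I * (L * (u - v) * y : ℝ)) := by
    intro v
    rw [intervalIntegral.integral_of_le zero_le_one, ← integral_const_mul]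
  have hr : ∀ y, ∫ v in Ioi (0:ℝ), F v y = ((1 - y : ℝ) : ℂ) *
      Complex.exp (Complex.I * (L * u * y : ℝ)) * G (1 + ε + Complex.I * (L * y : ℝ)) := by
    intro y
    rw [← h _ (by simp; exact hε), ← integral_const_mul]
    congr 1
    ext v
    simp only [hF]
    have e1 : Complex.exp (Complex.I * (L * (u - v) * y : ℝ)) * ((Real.exp (-ε * v) : ℝ) : ℂ) =
        Complex.exp (Complex.I * (L * u * y : ℝ)) *
        Complex.exp (-(1 + ε + Complex.I * (L * y : ℝ) - 1) * v) := by
      rw [Complex.ofReal_exp, ← Complex.exp_add, ← Complex.exp_add]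
      congr 1
      push_cast
      ring
    push_cast at e1 ⊢
    linear_combination ((b v : ℂ) * (1 - y)) * e1
  have hlhs : ∫ v in Ioi (0:ℝ), b v * Real.exp (-ε * v) * kf (L * (u - v)) =
      (∫ v in Ioi (0:ℝ), ∫ y in Ioc (0:ℝ) 1, F v y).re := by
    have := Complex.reCLM.integral_comp_comm hint.integral_prod_left
    simp only [Complex.reCLM_apply, Function.uncurry_apply_pair] at this
    rw [← this]
    congr 1
    ext v
    rw [hl, Complex.re_ofReal_mul, kf_eq_re]
  rw [hlhs, hsw, intervalIntegral.integral_of_le zero_le_one]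
  simp_rw [hr]

lemma limit_step {b : ℝ → ℝ} (hb : Measurable b) {M : ℝ} (hM : ∀ v, |b v| ≤ M) {G : ℂ → ℂ}
    (hG : ContinuousOn G {s | 1 ≤ s.re})
    (h : ∀ s : ℂ, 1 < s.re → ∫ v in Ioi (0:ℝ), (b v : ℂ) * Complex.exp (-(s - 1) * v) = G s)
    {L : ℝ} (hL : 0 < L) (u : ℝ) :
    ∫ v in Ioi (0:ℝ), b v * kf (L * (u - v)) =
      (∫ y in (0:ℝ)..1, ((1 - y : ℝ) : ℂ) * Complex.exp (Complex.I * (L * u * y : ℝ)) *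
        G (1 + Complex.I * (L * y : ℝ))).re := by
  have hk : Integrable (fun v => kf (L * (u - v))) := by
    have := (kf_int.comp_mul_left' hL.ne').comp_sub_left u
    exact this
  have hM0 : 0 ≤ M := (abs_nonneg _).trans (hM 0)
  have t1 : Tendsto (fun ε : ℝ => ∫ v in Ioi (0:ℝ), b v * Real.exp (-ε * v) * kf (L * (u - v)))
      (𝓝[>] 0) (𝓝 (∫ v in Ioi (0:ℝ), b v * kf (L * (u - v)))) := by
    refine tendsto_integral_filter_of_dominated_convergence (fun v => M * kf (L * (u - v))) ?_ ?_ ?_ ?_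
    · filter_upwards with ε
      have := kf_cont.measurable
      exact Measurable.aestronglyMeasurable (by fun_prop)
    · filter_upwards [self_mem_nhdsWithin] with ε hε
      filter_upwards [ae_restrict_mem measurableSet_Ioi] with v hv
      rw [norm_mul, norm_mul, Real.norm_eq_abs, Real.norm_eq_abs, Real.norm_eq_abs, Real.abs_exp,
        abs_of_nonneg (kf_nonneg _)]
      have h1 : Real.exp (-ε * v) ≤ 1 := by
        rw [Real.exp_le_one_iff]
        have : 0 < ε * v := mul_pos hε hv
        linarith
      have := kf_nonneg (L * (u - v))
      have h2 := hM v
      have h3 := Real.exp_pos (-ε * v)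
      gcongr
      calc _ ≤ M * 1 := by gcongr
        _ = M := mul_one M
    · exact (hk.const_mul M).integrableOn
    · filter_upwards with v
      have : Tendsto (fun ε : ℝ => b v * Real.exp (-ε * v) * kf (L * (u - v))) (𝓝 0)
        (𝓝 (b v * Real.exp (-0 * v) * kf (L * (u - v)))) :=
          Continuous.tendsto (by fun_prop) 0
      simpa using this.mono_left nhdsWithin_le_nhds
  obtain ⟨C, hC⟩ : ∃ C, ∀ z ∈ Icc (0:ℝ) 1 ×ˢ Icc (0:ℝ) 1,
      ‖G (1 + z.1 + Complex.I * (L * z.2 : ℝ))‖ ≤ C := by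
    apply (isCompact_Icc.prod isCompact_Icc).exists_bound_of_continuousOn
    refine hG.comp (Continuous.continuousOn (by fun_prop)) ?_
    rintro ⟨a, c⟩ ⟨ha, hc⟩
    simp at ha ⊢
    linarith
  have hGy : ∀ y : ℝ, ContinuousWithinAt G {s | 1 ≤ s.re} (1 + Complex.I * (L * y : ℝ)) := by
    intro y
    apply hG
    simp
  have t2 : Tendsto (fun ε : ℝ => ∫ y in (0:ℝ)..1, ((1 - y : ℝ) : ℂ) *
      Complex.exp (Complex.I * (L * u * y : ℝ)) * G (1 + ε + Complex.I * (L * y : ℝ)))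
      (𝓝[>] 0) (𝓝 (∫ y in (0:ℝ)..1, ((1 - y : ℝ) : ℂ) *
      Complex.exp (Complex.I * (L * u * y : ℝ)) * G (1 + Complex.I * (L * y : ℝ)))) := by
    refine intervalIntegral.tendsto_integral_filter_of_dominated_convergence (fun _ => C) ?_ ?_ ?_ ?_
    · filter_upwards [self_mem_nhdsWithin] with ε hε
      apply Continuous.aestronglyMeasurable
      have : Continuous fun y : ℝ => G (1 + ε + Complex.I * (L * y : ℝ)) := by
        rw [← continuousOn_univ]
        refine hG.comp (Continuous.continuousOn (by fun_prop)) ?_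
        intro y _
        simp at hε ⊢
        exact hε.le
      exact Continuous.mul (by fun_prop) this
    · have : ∀ᶠ ε : ℝ in 𝓝[>] 0, ε ∈ Ioc (0:ℝ) 1 := Ioc_mem_nhdsGT zero_lt_one
      filter_upwards [this] with ε hε
      filter_upwards with y hy
      rw [uIoc_of_le zero_le_one] at hy
      have := hC (ε, y) ⟨⟨hε.1.le, hε.2⟩, ⟨hy.1.le, hy.2⟩⟩
      rw [norm_mul, norm_mul, mul_comm Complex.I, Complex.norm_exp_ofReal_mul_I, Complex.norm_real,
        mul_one]
      have h1 : ‖1 - y‖ ≤ 1 := by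
        rw [Real.norm_eq_abs, abs_le]; constructor <;> linarith [hy.1, hy.2]
      calc _ ≤ 1 * C := by gcongr
        _ = C := one_mul C
    · exact intervalIntegrable_const
    · filter_upwards with y _
      apply Tendsto.const_mul
      apply (hGy y).tendsto.comp
      apply tendsto_nhdsWithin_of_tendsto_nhds_of_eventually_within
      · have : Tendsto (fun ε : ℝ => (1 + ε + Complex.I * (L * y : ℝ) : ℂ)) (𝓝 0)
          (𝓝 (1 + (0:ℝ) + Complex.I * (L * y : ℝ))) := Continuous.tendsto (by fun_prop) 0
        simpa using this.mono_left nhdsWithin_le_nhds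
      · filter_upwards [self_mem_nhdsWithin] with ε hε
        simp at hε ⊢
        exact hε.le
  have t3 := (Complex.continuous_re.tendsto _).comp t2
  refine tendsto_nhds_unique t1 (t3.congr' ?_)
  filter_upwards [self_mem_nhdsWithin] with ε hε
  exact (swap_step hb hM h L u hε).symm

lemma conv_zero {b : ℝ → ℝ} (hb : Measurable b) {M : ℝ} (hM : ∀ v, |b v| ≤ M) {G : ℂ → ℂ}
    (hG : ContinuousOn G {s | 1 ≤ s.re})
    (h : ∀ s : ℂ, 1 < s.re → ∫ v in Ioi (0:ℝ), (b v : ℂ) * Complex.exp (-(s - 1) * v) = G s)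
    {L : ℝ} (hL : 0 < L) :
    Tendsto (fun u => ∫ v in Ioi (0:ℝ), b v * kf (L * (u - v))) atTop (𝓝 0) := by
  have := Real.tendsto_integral_exp_smul_cocompact
    ((Ioc (0:ℝ) 1).indicator (fun y => ((1 - y : ℝ) : ℂ) * G (1 + Complex.I * (L * y : ℝ))))
  have hw : Tendsto (fun u : ℝ => (-L / (2 * Real.pi)) * u) atTop (cocompact ℝ) := by
    refine Tendsto.mono_right (tendsto_id.const_mul_atTop_of_neg ?_) atBot_le_cocompact
    have := Real.pi_pos
    exact div_neg_of_neg_of_pos (by linarith) (by positivity)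
  have t := (Complex.continuous_re.tendsto _).comp (this.comp hw)
  rw [Complex.zero_re] at t
  refine t.congr fun u => ?_
  rw [limit_step hb hM hG h hL u]
  simp only [Function.comp]
  rw [intervalIntegral.integral_of_le zero_le_one, ← integral_indicator measurableSet_Ioc]
  congr 2
  ext y
  rw [Circle.smul_def, Real.fourierChar_apply]
  by_cases hy : y ∈ Ioc (0:ℝ) 1
  · rw [indicator_of_mem hy, indicator_of_mem hy, smul_eq_mul]
    have : (2 * Real.pi * -(y * (-L / (2 * Real.pi) * u)) : ℝ) = L * u * y := by
      have := Real.pi_ne_zero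
      field_simp
    rw [this, mul_comm ((L * u * y : ℝ) : ℂ) Complex.I]
    ring
  · simp [indicator_of_notMem hy]

end PIT
end

section
open Filter Topology MeasureTheory Set

namespace PIT

/-- window masses -/
lemma window_tendsto {h : ℝ} (hh : 0 < h) :
    Tendsto (fun L : ℝ => (∫ x, kf x) / ∫ x in Icc (-(L * h)) (L * h), kf x) atTop (𝓝 1) := by
  have h1 : Tendsto (fun L : ℝ => ∫ x in (-(L * h))..(L * h), kf x) atTop (𝓝 (∫ x, kf x)) := by
    apply intervalIntegral_tendsto_integral kf_int
    · exact tendsto_neg_atTop_atBot.comp (tendsto_id.atTop_mul_const hh)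
    · exact tendsto_id.atTop_mul_const hh
  have h2 := (tendsto_const_nhds (x := ∫ x, kf x)).div h1 kf_integral_pos.ne'
  rw [div_self kf_integral_pos.ne'] at h2
  refine h2.congr' ?_
  filter_upwards [eventually_ge_atTop 0] with L hL
  have : 0 ≤ L * h := mul_nonneg hL hh.le
  simp only [Pi.div_apply]
  rw [intervalIntegral.integral_of_le (by linarith), integral_Icc_eq_integral_Ioc]

lemma kf_scale_int {L : ℝ} (hL : 0 < L) (u : ℝ) : Integrable (fun v => kf (L * (u - v))) :=
  (kf_int.comp_mul_left' hL.ne').comp_sub_left u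

lemma kf_scale_integral {L : ℝ} (hL : 0 < L) (u : ℝ) :
    ∫ v, kf (L * (u - v)) = L⁻¹ * ∫ x, kf x := by
  rw [integral_sub_left_eq_self (fun v => kf (L * v)) volume u]
  rw [Measure.integral_comp_mul_left (fun v => kf v) L, abs_of_pos (by positivity), smul_eq_mul]

lemma kf_scale_window {L h : ℝ} (hL : 0 < L) (hh : 0 < h) (u : ℝ) :
    ∫ v in Icc (u - h) (u + h), kf (L * (u - v)) =
      L⁻¹ * ∫ x in Icc (-(L * h)) (L * h), kf x := by
  have e : ∀ v, (Icc (u - h) (u + h)).indicator (fun v => kf (L * (u - v))) v =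
      (Icc (-(L * h)) (L * h)).indicator kf (L * (u - v)) := by
    intro v
    by_cases hv : v ∈ Icc (u - h) (u + h)
    · rw [indicator_of_mem hv, indicator_of_mem]
      constructor
      · nlinarith [hv.2]
      · nlinarith [hv.1]
    · rw [indicator_of_notMem hv, indicator_of_notMem]
      intro hc
      apply hv
      have h1 := hc.1
      have h2 := hc.2
      rw [mul_le_mul_iff_right₀ hL] at h2
      rw [neg_eq_neg_one_mul, ← mul_assoc, mul_comm (-1 : ℝ) L, mul_assoc,
        mul_le_mul_iff_right₀ hL] at h1
      constructor <;> linarith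
  rw [← integral_indicator measurableSet_Icc, ← integral_indicator measurableSet_Icc]
  simp_rw [e]
  rw [integral_sub_left_eq_self (fun v => (Icc (-(L * h)) (L * h)).indicator kf (L * v)) volume u]
  rw [Measure.integral_comp_mul_left (fun v => (Icc (-(L * h)) (L * h)).indicator kf v) L,
    abs_of_pos (by positivity), smul_eq_mul]

/-- Splitting bound: if `b ≥ c` on the window and `b ≥ -D` elsewhere. -/
lemma split_lower {b : ℝ → ℝ} (hb : Measurable b) {M : ℝ} (hM : ∀ v, |b v| ≤ M)
    {L h u c D : ℝ} (hL : 0 < L) (hh : 0 < h) (hu : h < u) (hD : 0 ≤ D)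
    (hc : ∀ v ∈ Icc (u - h) (u + h), c ≤ b v) (hD' : ∀ v, 0 < v → -D ≤ b v) :
    (c + D) * (L⁻¹ * ∫ x in Icc (-(L * h)) (L * h), kf x) - D * (L⁻¹ * ∫ x, kf x) ≤
      ∫ v in Ioi (0:ℝ), b v * kf (L * (u - v)) := by
  have hi := kf_scale_int hL u
  have hbk : Integrable (fun v => b v * kf (L * (u - v))) :=
    hi.bdd_mul hb.aestronglyMeasurable (c := M) (Eventually.of_forall hM)
  have h1 : (c + D) * (L⁻¹ * ∫ x in Icc (-(L * h)) (L * h), kf x) ≤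
      ∫ v in Ioi (0:ℝ), (b v + D) * kf (L * (u - v)) := by
    rw [← kf_scale_window hL hh u, ← integral_const_mul]
    have hbD : Integrable (fun v => (b v + D) * kf (L * (u - v))) := by
      simp_rw [add_mul]
      exact hbk.add (hi.const_mul D)
    calc _ ≤ ∫ v in Icc (u - h) (u + h), (b v + D) * kf (L * (u - v)) := by
          apply setIntegral_mono_on (hi.const_mul _).integrableOn hbD.integrableOn measurableSet_Icc
          intro v hv
          have := hc v hv
          have := kf_nonneg (L * (u - v))
          gcongr
      _ ≤ _ := by
          apply setIntegral_mono_set hbD.integrableOn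
          · filter_upwards [ae_restrict_mem measurableSet_Ioi] with v hv
            exact mul_nonneg (by linarith [hD' v hv]) (kf_nonneg _)
          · apply LE.le.eventuallyLE
            intro v hv
            have := hv.1
            simp; linarith
  have h2 : ∫ v in Ioi (0:ℝ), (b v + D) * kf (L * (u - v)) =
      (∫ v in Ioi (0:ℝ), b v * kf (L * (u - v))) + D * ∫ v in Ioi (0:ℝ), kf (L * (u - v)) := by
    simp_rw [add_mul]
    rw [integral_add hbk.integrableOn (hi.const_mul D).integrableOn, integral_const_mul]
  have h3 : ∫ v in Ioi (0:ℝ), kf (L * (u - v)) ≤ L⁻¹ * ∫ x, kf x := by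
    rw [← kf_scale_integral hL u]
    exact setIntegral_le_integral hi (Eventually.of_forall fun v => kf_nonneg _)
  have h4 := mul_le_mul_of_nonneg_left h3 hD
  linarith

theorem tauber {S : ℝ → ℝ} (hS : Monotone S) (hS0 : ∀ x, 0 ≤ S x) {M : ℝ}
    (hM : ∀ x, 0 < x → S x ≤ M * x) {G : ℂ → ℂ} (hG : ContinuousOn G {s | 1 ≤ s.re})
    (h : ∀ s : ℂ, 1 < s.re → ∫ v in Ioi (0:ℝ), ((S (Real.exp v) * Real.exp (-v) - 1 : ℝ) : ℂ) *
      Complex.exp (-(s - 1) * v) = G s) :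
    Tendsto (fun x => S x / x) atTop (𝓝 1) := by
  set B : ℝ → ℝ := fun v => S (Real.exp v) * Real.exp (-v) with hB
  set b : ℝ → ℝ := fun v => B v - 1 with hbdef
  have hB0 : ∀ v, 0 ≤ B v := fun v => mul_nonneg (hS0 _) (Real.exp_pos _).le
  have hBM : ∀ v, B v ≤ M := by
    intro v
    have := hM (Real.exp v) (Real.exp_pos v)
    simp only [hB]
    rw [Real.exp_neg, ← div_eq_mul_inv, div_le_iff₀ (Real.exp_pos v)]
    exact this
  have hM0 : 0 ≤ M := (hB0 0).trans (hBM 0)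
  have hSm : Measurable S := hS.measurable
  have hBm : Measurable b := by simp only [hbdef, hB]; fun_prop
  have hbM : ∀ v, |b v| ≤ M + 1 := by
    intro v
    rw [abs_le]
    simp only [hbdef]
    constructor <;> linarith [hB0 v, hBM v]
  have hBe : ∀ u v, u ≤ v → B u * Real.exp (-(v - u)) ≤ B v := by
    intro u v huv
    simp only [hB]
    rw [mul_assoc, ← Real.exp_add]
    have : -u + -(v - u) = -v := by ring
    rw [this]
    have := hS (Real.exp_le_exp.mpr huv)
    gcongr
  have key := fun (L : ℝ) (hL : 0 < L) => conv_zero hBm hbM hG h hL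
  have key2 : ∀ (L : ℝ) (hL : 0 < L),
      Tendsto (fun u => ∫ v in Ioi (0:ℝ), (-b v) * kf (L * (u - v))) atTop (𝓝 0) := by
    intro L hL
    have := (key L hL).neg
    simp_rw [neg_mul, integral_neg]
    simpa using this
  set κ := ∫ x, kf x with hκ
  have hκ0 : 0 < κ := kf_integral_pos
  have main : Tendsto B atTop (𝓝 1) := by
    rw [tendsto_order]
    constructor
    · intro a ha
      -- choose h small
      obtain ⟨h, hh, hh2⟩ : ∃ h : ℝ, 0 < h ∧ a < Real.exp (-(2 * h)) := by
        have : Tendsto (fun h : ℝ => Real.exp (-(2 * h))) (𝓝[>] 0) (𝓝 (Real.exp (-(2*0)))) :=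
          (Continuous.tendsto (by fun_prop) 0).mono_left nhdsWithin_le_nhds
        simp only [mul_zero, neg_zero, Real.exp_zero] at this
        obtain ⟨h, h1, h2⟩ := ((this.eventually_const_lt ha).and self_mem_nhdsWithin).exists
        exact ⟨h, h2, h1⟩
      -- choose L large
      have hlim : Tendsto (fun L : ℝ => Real.exp (-(2 * h)) *
          (1 - M * (κ / (∫ x in Icc (-(L * h)) (L * h), kf x) - 1))) atTop
          (𝓝 (Real.exp (-(2 * h)) * (1 - M * (1 - 1)))) :=
        ((((window_tendsto hh).sub_const 1).const_mul M).const_sub 1).const_mul _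
      rw [sub_self, mul_zero, sub_zero, mul_one] at hlim
      have hw0 : ∀ᶠ L : ℝ in atTop, 0 < κ / ∫ x in Icc (-(L * h)) (L * h), kf x :=
        (window_tendsto hh).eventually_const_lt zero_lt_one
      obtain ⟨L, ⟨hL1, hL2⟩, hL⟩ :=
        (((hlim.eventually_const_lt hh2).and hw0).and (eventually_gt_atTop 0)).exists
      set m := ∫ x in Icc (-(L * h)) (L * h), kf x with hm
      have hm0 : 0 < m := by
        by_contra hneg
        exact absurd hL2 (not_lt.mpr (div_nonpos_of_nonneg_of_nonpos hκ0.le (not_lt.mp hneg)))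
      have ht : Tendsto (fun u => Real.exp (-(2 * h)) * (1 - M * (κ / m - 1) -
          (L / m) * ∫ v in Ioi (0:ℝ), (-b v) * kf (L * ((u - h) - v)))) atTop
          (𝓝 (Real.exp (-(2 * h)) * (1 - M * (κ / m - 1) - (L / m) * 0))) :=
        ((((key2 L hL).comp (tendsto_atTop_add_const_right atTop (-h) tendsto_id)).const_mul
          (L / m)).const_sub _).const_mul _
      rw [mul_zero, sub_zero] at ht
      filter_upwards [ht.eventually_const_lt hL1, eventually_gt_atTop (2 * h)] with u hu1 hu2
      refine hu1.trans_le ?_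
      have hs := split_lower (b := fun v => -b v) (hBm.neg) (M := M + 1)
        (by intro v; rw [abs_neg]; exact hbM v) (L := L) (h := h) (u := u - h)
        (c := 1 - B u * Real.exp (2 * h)) (D := M) hL hh (by linarith) hM0 ?_ ?_
      · rw [← hm, ← hκ] at hs
        have h1 : Real.exp (-(2 * h)) * (1 - M * (κ / m - 1) -
          (L / m) * ∫ v in Ioi (0:ℝ), (-b v) * kf (L * ((u - h) - v))) ≤
            Real.exp (-(2 * h)) * (B u * Real.exp (2 * h)) := by
          gcongr
          have h2 := mul_le_mul_of_nonneg_left hs (div_pos hL hm0).le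
          have h3 : L / m * ((1 - B u * Real.exp (2 * h) + M) * (L⁻¹ * m) - M * (L⁻¹ * κ)) =
            (1 - B u * Real.exp (2 * h) + M) - M * (κ / m) := by
            field_simp
          rw [h3] at h2
          linarith
        refine h1.trans_eq ?_
        rw [mul_comm (B u), ← mul_assoc, ← Real.exp_add]
        simp
      · intro v hv
        have h1 := hBe v u (by linarith [hv.2])
        have h2 : B v ≤ B u * Real.exp (u - v) := by
          rw [Real.exp_neg, ← div_eq_mul_inv, div_le_iff₀ (Real.exp_pos _)] at h1
          exact h1
        have h3 : B u * Real.exp (u - v) ≤ B u * Real.exp (2 * h) := by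
          have := hB0 u
          gcongr
          linarith [hv.1]
        simp only [hbdef]
        linarith
      · intro v _
        simp only [hbdef]
        linarith [hBM v]
    · intro a ha
      obtain ⟨h, hh, hh2⟩ : ∃ h : ℝ, 0 < h ∧ Real.exp (2 * h) < a := by
        have : Tendsto (fun h : ℝ => Real.exp (2 * h)) (𝓝[>] 0) (𝓝 (Real.exp (2*0))) :=
          (Continuous.tendsto (by fun_prop) 0).mono_left nhdsWithin_le_nhds
        simp only [mul_zero, Real.exp_zero] at this
        obtain ⟨h, h1, h2⟩ := ((this.eventually_lt_const ha).and self_mem_nhdsWithin).exists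
        exact ⟨h, h2, h1⟩
      have hlim : Tendsto (fun L : ℝ => Real.exp (2 * h) *
          (κ / (∫ x in Icc (-(L * h)) (L * h), kf x))) atTop
          (𝓝 (Real.exp (2 * h) * 1)) := (window_tendsto hh).const_mul _
      rw [mul_one] at hlim
      have hw0 : ∀ᶠ L : ℝ in atTop, 0 < κ / ∫ x in Icc (-(L * h)) (L * h), kf x :=
        (window_tendsto hh).eventually_const_lt zero_lt_one
      obtain ⟨L, ⟨hL1, hL2⟩, hL⟩ :=
        (((hlim.eventually_lt_const hh2).and hw0).and (eventually_gt_atTop 0)).exists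
      set m := ∫ x in Icc (-(L * h)) (L * h), kf x with hm
      have hm0 : 0 < m := by
        by_contra hneg
        exact absurd hL2 (not_lt.mpr (div_nonpos_of_nonneg_of_nonpos hκ0.le (not_lt.mp hneg)))
      have ht : Tendsto (fun u => Real.exp (2 * h) * (κ / m +
          (L / m) * ∫ v in Ioi (0:ℝ), (b v) * kf (L * ((u + h) - v)))) atTop
          (𝓝 (Real.exp (2 * h) * (κ / m + (L / m) * 0))) :=
        ((((key L hL).comp (tendsto_atTop_add_const_right atTop h tendsto_id)).const_mul
          (L / m)).const_add _).const_mul _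
      rw [mul_zero, add_zero] at ht
      filter_upwards [ht.eventually_lt_const hL1, eventually_gt_atTop 0] with u hu1 hu2
      refine lt_of_le_of_lt ?_ hu1
      have hs := split_lower (b := b) hBm (M := M + 1)
        hbM (L := L) (h := h) (u := u + h)
        (c := B u * Real.exp (-(2 * h)) - 1) (D := 1) hL hh (by linarith) zero_le_one ?_ ?_
      · rw [← hm, ← hκ] at hs
        have h1 : Real.exp (2 * h) * (B u * Real.exp (-(2 * h))) ≤
            Real.exp (2 * h) * (κ / m +
              (L / m) * ∫ v in Ioi (0:ℝ), (b v) * kf (L * ((u + h) - v))) := by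
          gcongr
          have h2 := mul_le_mul_of_nonneg_left hs (div_pos hL hm0).le
          have h3 : L / m * ((B u * Real.exp (-(2 * h)) - 1 + 1) * (L⁻¹ * m) - 1 * (L⁻¹ * κ)) =
            B u * Real.exp (-(2 * h)) - (κ / m) := by
            field_simp
            ring
          rw [h3] at h2
          linarith
        refine le_trans (le_of_eq ?_) h1
        rw [mul_comm (B u), ← mul_assoc, ← Real.exp_add]
        simp
      · intro v hv
        have h1 := hBe u v (by linarith [hv.1])
        have h3 : B u * Real.exp (-(2 * h)) ≤ B u * Real.exp (-(v - u)) := by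
          have := hB0 u
          gcongr
          linarith [hv.2]
        simp only [hbdef]
        linarith
      · intro v _
        simp only [hbdef]
        linarith [hB0 v]
  refine (main.comp Real.tendsto_log_atTop).congr' ?_
  filter_upwards [eventually_gt_atTop 0] with x hx
  simp only [hB, Function.comp]
  rw [Real.exp_neg, Real.exp_log hx, div_eq_mul_inv]

end PIT
end

section
open Filter Topology MeasureTheory Set
namespace PIT

noncomputable def Wf (a : ℕ → ℝ) (x : ℝ) : ℝ :=
  ∑ n ∈ Finset.Icc 1 ⌊x⌋₊, a n * (n / x * (1 - n / x))

lemma sum1_le {a : ℕ → ℝ} (ha : ∀ n, 0 ≤ a n) {c δ C : ℝ} (hδ : 0 < δ)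
    (hW : ∀ x : ℝ, 1 ≤ x → |Wf a x - c * x| ≤ C * x ^ (1 - δ)) (N : ℕ) (hN : 1 ≤ N) :
    ∑ k ∈ Finset.Icc 1 N, (k : ℝ) * a k ≤ 8 * (|c| + |C|) * (N : ℝ) ^ (2 : ℝ) := by
  have hN' : (1 : ℝ) ≤ N := by exact_mod_cast hN
  have h1 := hW (2 * N) (by linarith)
  have h2 : (2 * N : ℝ) ^ (1 - δ) ≤ 2 * N := by
    calc (2 * N : ℝ) ^ (1 - δ) ≤ (2 * N : ℝ) ^ (1 : ℝ) :=
          Real.rpow_le_rpow_of_exponent_le (by linarith) (by linarith)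
      _ = _ := Real.rpow_one _
  have h3 : Wf a (2 * N) ≤ (|c| + |C|) * (2 * N) := by
    have e1 := (abs_le.mp h1).2
    have e2 : C * (2 * N : ℝ) ^ (1 - δ) ≤ |C| * (2 * N) :=
      mul_le_mul (le_abs_self C) h2 (by positivity) (abs_nonneg _)
    have e3 : c * (2 * N : ℝ) ≤ |c| * (2 * N) := by
      gcongr; exact le_abs_self c
    linarith
  have h4 : ∑ k ∈ Finset.Icc 1 N, (k : ℝ) * a k ≤ 4 * N * Wf a (2 * N) := by
    have hf : ⌊(2 * N : ℝ)⌋₊ = 2 * N := by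
      have : (2 * N : ℝ) = ((2 * N : ℕ) : ℝ) := by push_cast; ring
      rw [this, Nat.floor_natCast]
    rw [Wf, hf, Finset.mul_sum]
    calc ∑ k ∈ Finset.Icc 1 N, (k : ℝ) * a k
        ≤ ∑ k ∈ Finset.Icc 1 N, 4 * N * (a k * (k / (2 * N) * (1 - k / (2 * N)))) := by
          apply Finset.sum_le_sum
          intro k hk
          have hk2 : (k : ℝ) ≤ N := by exact_mod_cast (Finset.mem_Icc.mp hk).2
          have : (k : ℝ) / (2 * N) ≤ 1 / 2 := by
            rw [div_le_iff₀ (by linarith)]; linarith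
          have e : 4 * N * (a k * (k / (2 * N) * (1 - k / (2 * N)))) =
            (k * a k) * (2 * (1 - k / (2 * N))) := by
            field_simp; ring
          rw [e]
          have : 0 ≤ k * a k := mul_nonneg (Nat.cast_nonneg _) (ha k)
          nlinarith
      _ ≤ _ := by
          apply Finset.sum_le_sum_of_subset_of_nonneg
          · apply Finset.Icc_subset_Icc_right; omega
          · intro k hk _
            have hk2 : (k : ℝ) ≤ 2 * N := by exact_mod_cast (Finset.mem_Icc.mp hk).2
            have : (k : ℝ) / (2 * N) ≤ 1 := by
              rw [div_le_iff₀ (by linarith)]; linarith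
            have := ha k
            have : 0 ≤ 1 - (k : ℝ) / (2 * N) := by linarith
            positivity
  have : (N : ℝ) ^ (2 : ℝ) = N * N := by
    rw [Real.rpow_two]; ring
  rw [this]
  nlinarith

lemma sum2_le {a : ℕ → ℝ} (ha : ∀ n, 0 ≤ a n) {c δ C : ℝ} (hδ : 0 < δ)
    (hW : ∀ x : ℝ, 1 ≤ x → |Wf a x - c * x| ≤ C * x ^ (1 - δ)) (N : ℕ) (hN : 1 ≤ N) :
    ∑ k ∈ Finset.Icc 1 N, (k : ℝ) ^ 2 * a k ≤ 8 * (|c| + |C|) * (N : ℝ) ^ (3 : ℝ) := by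
  have h := sum1_le ha hδ hW N hN
  have : (N : ℝ) ^ (3 : ℝ) = N * N ^ (2 : ℝ) := by
    have : (N : ℝ) ^ (3 : ℝ) = (N : ℝ) ^ (3 : ℕ) := by exact_mod_cast Real.rpow_natCast (N : ℝ) 3
    rw [this, Real.rpow_two]; ring
  calc ∑ k ∈ Finset.Icc 1 N, (k : ℝ) ^ 2 * a k ≤ N * ∑ k ∈ Finset.Icc 1 N, (k : ℝ) * a k := by
        rw [Finset.mul_sum]
        apply Finset.sum_le_sum
        intro k hk
        have hk2 : (k : ℝ) ≤ N := by exact_mod_cast (Finset.mem_Icc.mp hk).2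
        rw [pow_two, mul_assoc]
        have : 0 ≤ k * a k := mul_nonneg (Nat.cast_nonneg _) (ha k)
        gcongr
    _ ≤ N * (8 * (|c| + |C|) * (N : ℝ) ^ (2 : ℝ)) := by gcongr
    _ = _ := by rw [this]; ring

lemma isBigO_of_le' {f : ℕ → ℝ} (hf : ∀ n, 0 ≤ f n) {K r : ℝ}
    (h : ∀ N : ℕ, 1 ≤ N → f N ≤ K * (N : ℝ) ^ r) :
    f =O[atTop] fun n : ℕ => (n : ℝ) ^ r := by
  refine Asymptotics.IsBigO.of_bound K ?_
  filter_upwards [eventually_ge_atTop 1] with N hN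
  rw [Real.norm_of_nonneg (hf N), Real.norm_of_nonneg (by positivity)]
  exact h N hN

lemma lseries_shift (a : ℕ → ℝ) (k : ℕ) (hk : k ≠ 0) (s : ℂ) :
    (LSeries (fun n => (((n : ℝ) ^ k * a n : ℝ) : ℂ)) (s + k) = LSeries (fun n => (a n : ℂ)) s) ∧
    (LSeriesSummable (fun n => (((n : ℝ) ^ k * a n : ℝ) : ℂ)) (s + k) ↔
      LSeriesSummable (fun n => (a n : ℂ)) s) := by
  have : LSeries.term (fun n => (((n : ℝ) ^ k * a n : ℝ) : ℂ)) (s + k)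
      = LSeries.term (fun n => (a n : ℂ)) s := by
    ext n
    rcases eq_or_ne n 0 with rfl | hn
    · simp
    · have hn' : (n : ℂ) ≠ 0 := by exact_mod_cast hn
      rw [LSeries.term_of_ne_zero hn, LSeries.term_of_ne_zero hn, Complex.cpow_add _ _ hn',
        Complex.cpow_natCast]
      push_cast
      field_simp
  rw [LSeries, LSeriesSummable, this]
  exact ⟨rfl, Iff.rfl⟩

lemma int_aux (b : ℕ → ℝ) (hb : ∀ n, 0 ≤ b n) {r K : ℝ} (hr : 0 ≤ r)
    (h : ∀ N : ℕ, 1 ≤ N → ∑ k ∈ Finset.Icc 1 N, b k ≤ K * (N : ℝ) ^ r) {s : ℂ} (hs : r < s.re) :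
    LSeriesSummable (fun n => (b n : ℂ)) s ∧
    LSeries (fun n => (b n : ℂ)) s = s * ∫ t in Ioi (1 : ℝ),
      (((∑ k ∈ Finset.Icc 1 ⌊t⌋₊, b k : ℝ)) : ℂ) * (t : ℂ) ^ (-(s + 1)) ∧
    IntegrableOn (fun t : ℝ => (((∑ k ∈ Finset.Icc 1 ⌊t⌋₊, b k : ℝ)) : ℂ) * (t : ℂ) ^ (-(s + 1)))
      (Ioi 1) := by
  have hO := isBigO_of_le' (f := fun N => ∑ k ∈ Finset.Icc 1 N, b k)
    (fun N => Finset.sum_nonneg fun k _ => hb k) h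
  refine ⟨LSeriesSummable_of_sum_norm_bigO_and_nonneg hO hb hr hs, ?_, ?_⟩
  · rw [LSeries_eq_mul_integral_of_nonneg b hr hs hO hb]
    push_cast
    rfl
  · have h₁ : LocallyIntegrableOn (fun t : ℝ ↦ (t : ℂ) ^ (-(s + 1)) * (∑ k ∈ Finset.Icc 1 ⌊t⌋₊, (b k : ℂ)))
        (Set.Ici 1) := by
      refine locallyIntegrableOn_mul_sum_Icc _ zero_le_one ?_
      refine ContinuousOn.locallyIntegrableOn (fun t ht ↦ ?_) measurableSet_Ici
      exact (Complex.continuousAt_ofReal_cpow_const _ _ <|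
        Or.inr (zero_lt_one.trans_le ht).ne').continuousWithinAt
    have h2 : IntegrableOn (fun t : ℝ ↦ (t : ℂ) ^ (-(s + 1)) * (∑ k ∈ Finset.Icc 1 ⌊t⌋₊, (b k : ℂ)))
        (Set.Ici 1) := by
      refine h₁.integrableOn_of_isBigO_atTop (g := fun t => t ^ (r - s.re - 1)) ?_ ?_
      · refine Asymptotics.IsBigO.of_bound |K| ?_
        filter_upwards [eventually_ge_atTop 1] with t ht
        have ht0 : 0 < t := by linarith
        rw [norm_mul, Complex.norm_cpow_eq_rpow_re_of_pos ht0, Real.norm_of_nonneg (by positivity)]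
        have hfl : 1 ≤ ⌊t⌋₊ := by rwa [Nat.one_le_floor_iff]
        have h3 := h ⌊t⌋₊ hfl
        have h4 : ‖∑ k ∈ Finset.Icc 1 ⌊t⌋₊, (b k : ℂ)‖ ≤ |K| * t ^ r := by
          rw [← Complex.ofReal_sum, Complex.norm_real, Real.norm_of_nonneg
            (Finset.sum_nonneg fun k _ => hb k)]
          refine h3.trans ?_
          gcongr
          · exact le_abs_self K
          · exact Nat.floor_le ht0.le
        calc _ ≤ t ^ (-(s + 1)).re * (|K| * t ^ r) := by gcongr
          _ = |K| * (t ^ (-(s + 1)).re * t ^ r) := by ring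
          _ = _ := by
            rw [← Real.rpow_add ht0]
            simp
            left; congr 1; ring
      · refine ⟨Ioi 1, Ioi_mem_atTop 1, ?_⟩
        exact integrableOn_Ioi_rpow_of_lt (by linarith) zero_lt_one
    refine (h2.mono_set Ioi_subset_Ici_self).congr_fun (fun t _ => ?_) measurableSet_Ioi
    simp [mul_comm]

lemma Wf_eq (a : ℕ → ℝ) {t : ℝ} (ht : 0 < t) : Wf a t =
    (∑ k ∈ Finset.Icc 1 ⌊t⌋₊, (k : ℝ) ^ 1 * a k) / t - (∑ k ∈ Finset.Icc 1 ⌊t⌋₊, (k : ℝ) ^ 2 * a k) / t ^ 2 := by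
  rw [Wf, Finset.sum_div, Finset.sum_div, ← Finset.sum_sub_distrib]
  refine Finset.sum_congr rfl fun k _ => ?_
  field_simp

lemma B_cont {a : ℕ → ℝ} (ha : ∀ n, 0 ≤ a n) {c δ C : ℝ} (hδ : 0 < δ)
    (hW : ∀ x : ℝ, 1 ≤ x → |Wf a x - c * x| ≤ C * x ^ (1 - δ)) :
    (∀ s : ℂ, 1 < s.re → LSeriesSummable (fun n => (a n : ℂ)) s) ∧
    ∃ H : ℂ → ℂ, DifferentiableOn ℂ H {s | 1 - δ < s.re} ∧ H 1 = 6 * c ∧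
      ∀ s : ℂ, 1 < s.re → H s = (s - 1) * LSeries (fun n => (a n : ℂ)) s := by
  have key1 (s : ℂ) (hs : 1 < s.re) := int_aux (fun n => (n : ℝ) ^ 1 * a n)
    (fun n => by have := ha n; positivity) (r := 2) (s := s + (1 : ℕ)) (by norm_num)
    (by simpa using sum1_le ha hδ hW) (by simp; linarith)
  have key2 (s : ℂ) (hs : 1 < s.re) := int_aux (fun n => (n : ℝ) ^ 2 * a n)
    (fun n => by have := ha n; positivity) (r := 3) (s := s + (2 : ℕ)) (by norm_num)
    (sum2_le ha hδ hW) (by simp; linarith)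
  have shift1 (s) := lseries_shift a 1 one_ne_zero s
  have shift2 (s) := lseries_shift a 2 two_ne_zero s
  have hsum : ∀ s : ℂ, 1 < s.re → LSeriesSummable (fun n => (a n : ℂ)) s := fun s hs =>
    (shift1 s).2.1 (key1 s hs).1
  refine ⟨hsum, ?_⟩
  -- the error term
  set E : ℝ → ℂ := (Ioi (1 : ℝ)).indicator (fun t => ((Wf a t - c * t : ℝ) : ℂ)) with hE
  have hEloc : LocallyIntegrableOn E (Ioi 0) := by
    have h₁ (k : ℕ) : LocallyIntegrableOn (fun t : ℝ ↦ (t : ℂ) ^ (-(k : ℂ)) * (∑ j ∈ Finset.Icc 1 ⌊t⌋₊, (((j : ℝ) ^ k * a j : ℝ) : ℂ)))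
        (Set.Ici 1) := by
      refine locallyIntegrableOn_mul_sum_Icc _ zero_le_one ?_
      refine ContinuousOn.locallyIntegrableOn (fun t ht ↦ ?_) measurableSet_Ici
      exact (Complex.continuousAt_ofReal_cpow_const _ _ <|
        Or.inr (zero_lt_one.trans_le ht).ne').continuousWithinAt
    have h2 : LocallyIntegrableOn (fun t : ℝ => ((Wf a t - c * t : ℝ) : ℂ)) (Ici 1) := by
      have h3 : LocallyIntegrableOn (fun t : ℝ => ((c * t : ℝ) : ℂ)) (Ici 1) := by
        refine ContinuousOn.locallyIntegrableOn ?_ measurableSet_Ici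
        fun_prop
      have h4 := ((h₁ 1).sub (h₁ 2)).sub h3
      intro x hx
      obtain ⟨U, hU, hi⟩ := h4 x hx
      refine ⟨U ∩ Ici 1, inter_mem hU self_mem_nhdsWithin, ?_⟩
      have hi2 := hi.mono_set (inter_subset_left (t := Ici 1))
      rw [inter_comm] at hi2 ⊢
      refine IntegrableOn.congr_fun_ae hi2 ?_
      have : ∀ᵐ t ∂(volume.restrict (Ici (1:ℝ) ∩ U)), t ∈ Ici (1 : ℝ) := by
        have h5 : ∀ᵐ t ∂(volume.restrict (Ici (1:ℝ))), t ∈ Ici (1 : ℝ) := ae_restrict_mem measurableSet_Ici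
        exact ae_mono (Measure.restrict_mono inter_subset_left le_rfl) h5
      filter_upwards [this] with t ht
      have ht0 : 0 < t := zero_lt_one.trans_le ht
      have ht0' : (t : ℂ) ≠ 0 := by exact_mod_cast ht0.ne'
      rw [Wf_eq a ht0]
      have e1 : (t : ℂ) ^ (-((1 : ℕ) : ℂ)) = (t : ℂ)⁻¹ := by
        rw [Complex.cpow_neg, Complex.cpow_natCast, pow_one]
      have e2 : (t : ℂ) ^ (-((2 : ℕ) : ℂ)) = ((t : ℂ) ^ 2)⁻¹ := by
        rw [Complex.cpow_neg, Complex.cpow_natCast]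
      simp only [Pi.sub_apply, e1, e2]
      push_cast
      ring
    have h5 : LocallyIntegrableOn (fun t : ℝ => ((Wf a t - c * t : ℝ) : ℂ)) (Ioi 1) :=
      h2.mono_set Ioi_subset_Ici_self
    -- locally integrable on Ioi 0 of indicator
    rw [locallyIntegrableOn_iff isOpen_Ioi.isLocallyClosed]
    intro k hk hkc
    have hk1 : IntegrableOn (fun t : ℝ => ((Wf a t - c * t : ℝ) : ℂ)) (k ∩ Ici 1) := by
      have := (locallyIntegrableOn_iff isClosed_Ici.isLocallyClosed).1 h2 (k ∩ Ici 1)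
        inter_subset_right (hkc.inter_right isClosed_Ici)
      exact this
    rw [hE]
    rw [IntegrableOn, integrable_indicator_iff measurableSet_Ioi, IntegrableOn,
      Measure.restrict_restrict measurableSet_Ioi]
    refine hk1.mono_set ?_
    rintro t ⟨h, h'⟩
    exact ⟨h', (mem_Ioi.1 h).le⟩
  have hEtop : E =O[atTop] (fun t : ℝ => t ^ (-(-(1 - δ)))) := by
    refine Asymptotics.IsBigO.of_bound C ?_
    filter_upwards [eventually_gt_atTop 1] with t ht
    rw [hE, indicator_of_mem (mem_Ioi.2 ht), Complex.norm_real, neg_neg,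
      Real.norm_eq_abs, Real.norm_of_nonneg (Real.rpow_nonneg (by linarith) _)]
    exact hW t ht.le
  have hEbot (b : ℝ) : E =O[𝓝[>] 0] (fun t : ℝ => t ^ (-b)) := by
    refine Asymptotics.IsBigO.of_bound 0 ?_
    have : Ioo (0:ℝ) 1 ∈ 𝓝[>] (0:ℝ) := Ioo_mem_nhdsGT one_pos
    filter_upwards [this] with t ht
    rw [hE, indicator_of_notMem (by simpa using ht.2.le)]
    simp
  have hdiff : ∀ s : ℂ, 1 - δ < s.re → DifferentiableAt ℂ (fun s => mellin E (-s)) s := by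
    intro s hs
    have := mellin_differentiableAt_of_isBigO_rpow (s := -s) (b := (-s).re - 1) hEloc hEtop (by simpa using by linarith)
      (hEbot _) (by linarith)
    exact DifferentiableAt.comp (g := mellin E) (f := fun s => -s) s this differentiableAt_id.neg
  refine ⟨fun s => (s + 1) * (s + 2) * (c + (s - 1) * mellin E (-s)), ?_, ?_, ?_⟩
  · intro s hs
    have := hdiff s hs
    apply DifferentiableAt.differentiableWithinAt
    fun_prop
  · norm_num
  · intro s hs
    have hA1 := (key1 s hs).2.1
    have hA2 := (key2 s hs).2.1
    rw [(shift1 s).1] at hA1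
    rw [(shift2 s).1] at hA2
    have hi1 := (key1 s hs).2.2
    have hi2 := (key2 s hs).2.2
    have hi3 : IntegrableOn (fun t : ℝ => (c : ℂ) * (t : ℂ) ^ (-s)) (Ioi 1) :=
      (integrableOn_Ioi_cpow_of_lt (by simpa using hs) zero_lt_one).const_mul _
    have hm : mellin E (-s) = (∫ t in Ioi (1 : ℝ), (((∑ k ∈ Finset.Icc 1 ⌊t⌋₊, (k : ℝ) ^ 1 * a k : ℝ)) : ℂ) * (t : ℂ) ^ (-(s + (1 : ℕ) + 1)))
       - (∫ t in Ioi (1 : ℝ), (((∑ k ∈ Finset.Icc 1 ⌊t⌋₊, (k : ℝ) ^ 2 * a k : ℝ)) : ℂ) * (t : ℂ) ^ (-(s + (2 : ℕ) + 1)))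
       - ∫ t in Ioi (1 : ℝ), (c : ℂ) * (t : ℂ) ^ (-s) := by
      rw [← integral_sub hi1 hi2]
      erw [← integral_sub (hi1.sub hi2) hi3]
      rw [mellin]
      have : ∀ t : ℝ, (t : ℂ) ^ (-s - 1) • E t = (Ioi (1 : ℝ)).indicator (fun t : ℝ => (t : ℂ) ^ (-s - 1) • ((Wf a t - c * t : ℝ) : ℂ)) t := by
        intro t
        by_cases h : t ∈ Ioi (1 : ℝ) <;> simp [hE, h]
      simp_rw [this]
      rw [setIntegral_indicator measurableSet_Ioi]
      have : Ioi (0 : ℝ) ∩ Ioi 1 = Ioi 1 := by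
        rw [Ioi_inter_Ioi]; simp
      rw [this]
      refine setIntegral_congr_fun measurableSet_Ioi fun t ht => ?_
      have ht0 : 0 < t := zero_lt_one.trans (mem_Ioi.1 ht)
      have ht0' : (t : ℂ) ≠ 0 := by exact_mod_cast ht0.ne'
      simp only [Wf_eq a ht0, smul_eq_mul, Pi.sub_apply]
      have e0 : (t : ℂ) ^ (-s) = (t : ℂ) ^ (-s - 1) * t := by
        rw [Complex.cpow_sub _ _ ht0', Complex.cpow_one]; field_simp
      have e1 : (t : ℂ) ^ (-(s + (1 : ℕ) + 1)) = (t : ℂ) ^ (-s - 1) / t := by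
        rw [show -(s + (1 : ℕ) + 1) = -s - 1 - 1 by push_cast; ring, Complex.cpow_sub _ 1 ht0', Complex.cpow_one]
      have e2 : (t : ℂ) ^ (-(s + (2 : ℕ) + 1)) = (t : ℂ) ^ (-s - 1) / t ^ 2 := by
        rw [show -(s + (2 : ℕ) + 1) = -s - 1 - (2 : ℕ) by push_cast; ring, Complex.cpow_sub _ ((2 : ℕ) : ℂ) ht0', Complex.cpow_natCast]
      rw [e0, e1, e2]
      push_cast
      field_simp
    have hc : (s - 1) * ∫ t in Ioi (1 : ℝ), (c : ℂ) * (t : ℂ) ^ (-s) = c := by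
      have hs1 : s - 1 ≠ 0 := by
        intro h; have : s = 1 := by linear_combination h
        simp [this] at hs
      rw [integral_const_mul, integral_Ioi_cpow_of_lt (by simpa using hs) zero_lt_one]
      have : -s + 1 ≠ 0 := by intro h; apply hs1; linear_combination -h
      simp
      field_simp
      ring
    show (s + 1) * (s + 2) * (c + (s - 1) * mellin E (-s)) = _
    rw [hm]
    push_cast at hA1 hA2 hc ⊢
    generalize (∫ t in Ioi (1 : ℝ), (∑ k ∈ Finset.Icc 1 ⌊t⌋₊, (k : ℂ) ^ 1 * (a k : ℂ)) * (t : ℂ) ^ (-(s + 1 + 1))) = I1 at *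
    generalize (∫ t in Ioi (1 : ℝ), (∑ k ∈ Finset.Icc 1 ⌊t⌋₊, (k : ℂ) ^ 2 * (a k : ℂ)) * (t : ℂ) ^ (-(s + 2 + 1))) = I2 at *
    generalize (∫ t in Ioi (1 : ℝ), (c : ℂ) * (t : ℂ) ^ (-s)) = I3 at *
    generalize LSeries (fun n => (a n : ℂ)) s = A at *
    linear_combination (-(s - 1) * (s + 2)) * hA1 + (s - 1) * (s + 1) * hA2 - (s + 1) * (s + 2) * hc
end PIT
end

section
open Filter Topology MeasureTheory Set
namespace PIT

lemma ord_lim {H : ℂ → ℂ} {s0 : ℂ} (hH : AnalyticAt ℂ H s0) (hne : ¬ ∀ᶠ z in 𝓝 s0, H z = 0) :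
    ∃ m : ℕ, (m = 0 → H s0 ≠ 0) ∧ (H s0 ≠ 0 → m = 0) ∧
      Tendsto (fun ε : ℝ => (ε : ℂ) * (deriv H (s0 + ε) / H (s0 + ε))) (𝓝[>] 0) (𝓝 m) ∧
      ∀ᶠ ε : ℝ in 𝓝[>] 0, H (s0 + ε) ≠ 0 := by
  obtain ⟨m, g, hg, hg0, hev⟩ := hH.exists_eventuallyEq_pow_smul_nonzero_iff.2 hne
  have hlim : Tendsto (fun ε : ℝ => s0 + (ε : ℂ)) (𝓝[>] 0) (𝓝 s0) := by
    have : Tendsto (fun ε : ℝ => s0 + (ε : ℂ)) (𝓝 0) (𝓝 (s0 + ((0 : ℝ) : ℂ))) := by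
      apply Continuous.tendsto; fun_prop
    simp only [Complex.ofReal_zero, add_zero] at this
    exact this.mono_left nhdsWithin_le_nhds
  have hs0 : H s0 = (s0 - s0) ^ m • g s0 := hev.self_of_nhds
  have hgne : ∀ᶠ z in 𝓝 s0, g z ≠ 0 := hg.continuousAt.eventually_ne hg0
  have hgd : ∀ᶠ z in 𝓝 s0, DifferentiableAt ℂ g z :=
    hg.eventually_analyticAt.mono fun z hz => hz.differentiableAt
  refine ⟨m, ?_, ?_, ?_, ?_⟩
  · rintro rfl; rw [hs0]; simpa using hg0
  · intro h; by_contra hm; apply h; rw [hs0]; simp [hm]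
  · have hev2 := hev.eventually_nhds
    have key : ∀ᶠ ε : ℝ in 𝓝[>] 0, (ε : ℂ) * (deriv H (s0 + ε) / H (s0 + ε)) =
        m + ε * (deriv g (s0 + ε) / g (s0 + ε)) := by
      filter_upwards [hlim.eventually hev2, hlim.eventually hgne, hlim.eventually hgd,
        self_mem_nhdsWithin] with ε h1 h2 h3 h4
      have h1' : H =ᶠ[𝓝 (s0 + ε)] fun z => (z - s0) ^ m • g z := h1
      have hε : (ε : ℂ) ≠ 0 := by exact_mod_cast (ne_of_gt h4)
      rw [h1'.deriv_eq, h1'.self_of_nhds]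
      have hd : HasDerivAt (fun z => (z - s0) ^ m • g z)
          ((m * (s0 + ε - s0) ^ (m - 1) * 1) * g (s0 + ε) + (s0 + ε - s0) ^ m * deriv g (s0 + ε)) (s0 + ε) := by
        exact (((hasDerivAt_id (s0 + (ε:ℂ))).sub_const s0).pow m).mul h3.hasDerivAt
      rw [hd.deriv]
      simp only [add_sub_cancel_left, smul_eq_mul, mul_one]
      rcases m with _ | m
      · simp
      · simp only [Nat.add_sub_cancel]
        field_simp
        ring
    refine Tendsto.congr' (EventuallyEq.symm key) ?_
    have h5 : Tendsto (fun z => deriv g z / g z) (𝓝 s0) (𝓝 (deriv g s0 / g s0)) :=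
      (hg.deriv.continuousAt.div hg.continuousAt hg0)
    have h6 : Tendsto (fun ε : ℝ => (ε : ℂ)) (𝓝[>] 0) (𝓝 0) := by
      have : Tendsto (fun ε : ℝ => (ε : ℂ)) (𝓝 0) (𝓝 ((0 : ℝ) : ℂ)) :=
        Complex.continuous_ofReal.tendsto _
      simpa using this.mono_left nhdsWithin_le_nhds
    have := (h6.mul (h5.comp hlim)).const_add (m : ℂ)
    simpa using this
  · filter_upwards [hlim.eventually hev, hlim.eventually hgne, self_mem_nhdsWithin] with ε h1 h2 h4
    have hε : (ε : ℂ) ≠ 0 := by exact_mod_cast (ne_of_gt h4)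
    rw [h1]
    simp [hε, h2]

lemma threefour {b : ℕ → ℝ} (hb : ∀ n, 0 ≤ b n)
    (hs : ∀ s : ℂ, 1 < s.re → LSeriesSummable (fun n => (b n : ℂ)) s) {σ : ℝ} (hσ : 1 < σ) (t : ℝ) :
    0 ≤ (3 * LSeries (fun n => (b n : ℂ)) σ + 4 * LSeries (fun n => (b n : ℂ)) (σ + t * Complex.I)
      + LSeries (fun n => (b n : ℂ)) (σ + (2 * t : ℝ) * Complex.I)).re := by
  have h0 := (hs σ (by simpa using hσ)).LSeriesHasSum
  have h1 := (hs (σ + t * Complex.I) (by simpa using hσ)).LSeriesHasSum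
  have h2 := (hs (σ + (2 * t : ℝ) * Complex.I) (by simpa using hσ)).LSeriesHasSum
  have h3 := Complex.hasSum_re (((h0.mul_left 3).add (h1.mul_left 4)).add h2)
  refine h3.nonneg fun n => ?_
  rcases eq_or_ne n 0 with rfl | hn
  · simp
  have hn' : (n : ℂ) ≠ 0 := by exact_mod_cast hn
  have hnp : (0 : ℝ) < n := by exact_mod_cast Nat.pos_of_ne_zero hn
  set z : ℂ := ((n : ℂ) ^ (t * Complex.I))⁻¹ with hz
  have hzn : ‖z‖ = 1 := by
    rw [hz, norm_inv]
    have := Complex.norm_cpow_eq_rpow_re_of_pos hnp (t * Complex.I)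
    simp at this
    simp [this]
  have e0 : (n : ℂ) ^ (σ : ℂ) = (((n : ℝ) ^ σ : ℝ) : ℂ) := by
    rw [Complex.ofReal_cpow hnp.le]; simp
  have e2 : (n : ℂ) ^ (((2 * t : ℝ) : ℂ) * Complex.I) = ((n : ℂ) ^ (t * Complex.I)) ^ 2 := by
    rw [← Complex.cpow_nat_mul]; congr 1; push_cast; ring
  rw [LSeries.term_of_ne_zero hn, LSeries.term_of_ne_zero hn, LSeries.term_of_ne_zero hn,
    Complex.cpow_add _ _ hn', Complex.cpow_add _ _ hn', e0, e2]
  have e3 : 3 * ((b n : ℂ) / (((n : ℝ) ^ σ : ℝ) : ℂ)) + 4 * ((b n : ℂ) / ((((n : ℝ) ^ σ : ℝ) : ℂ) * (n : ℂ) ^ (t * Complex.I)))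
     + (b n : ℂ) / ((((n : ℝ) ^ σ : ℝ) : ℂ) * ((n : ℂ) ^ (t * Complex.I)) ^ 2) =
     ((b n / (n : ℝ) ^ σ : ℝ) : ℂ) * (3 + 4 * z + z ^ 2) := by
    rw [hz]; push_cast
    have : (n : ℂ) ^ (t * Complex.I) ≠ 0 := by simp [Complex.cpow_eq_zero_iff, hn']
    field_simp
  rw [e3, Complex.re_ofReal_mul]
  apply mul_nonneg (div_nonneg (hb n) (by positivity))
  have h4 : z.re ^ 2 + z.im ^ 2 = 1 := by
    have := Complex.sq_norm z
    rw [hzn, Complex.normSq_apply] at this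
    nlinarith
  have h5 : (3 + 4 * z + z ^ 2).re = 2 * (1 + z.re) ^ 2 := by
    simp [pow_two]
    nlinarith
  rw [h5]; positivity

/-- abstract prime number theorem -/
theorem abstract_pnt {a b : ℕ → ℝ} (ha : ∀ n, 0 ≤ a n) (hb : ∀ n, 0 ≤ b n) {D : ℝ} (hD : 0 ≤ D)
    (hbD : ∀ n, b n ≤ D * ArithmeticFunction.vonMangoldt n)
    (hconv : ∀ n, ∑ p ∈ n.divisorsAntidiagonal, a p.1 * b p.2 = a n * Real.log n)
    {c δ C : ℝ} (hδ : 0 < δ) (hc : 0 < c)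
    (hW : ∀ x : ℝ, 1 ≤ x → |Wf a x - c * x| ≤ C * x ^ (1 - δ)) :
    Tendsto (fun x : ℝ => (∑ n ∈ Finset.Icc 1 ⌊x⌋₊, b n) / x) atTop (𝓝 1) := by
  obtain ⟨hAs, H, hHd, hH1, hHA⟩ := B_cont ha hδ hW
  have hSle : ∀ x : ℝ, 0 ≤ x → ∑ n ∈ Finset.Icc 1 ⌊x⌋₊, b n ≤ D * (Real.log 4 + 4) * x := by
    intro x hx
    calc ∑ n ∈ Finset.Icc 1 ⌊x⌋₊, b n ≤ D * ∑ n ∈ Finset.Icc 1 ⌊x⌋₊, ArithmeticFunction.vonMangoldt n := by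
          rw [Finset.mul_sum]; exact Finset.sum_le_sum fun n _ => hbD n
      _ ≤ D * ((Real.log 4 + 4) * x) := by
          gcongr
          exact Chebyshev.psi_le_const_mul_self hx
      _ = _ := by ring
  have hB (s : ℂ) (hs : 1 < s.re) := int_aux b hb (K := D * (Real.log 4 + 4)) (r := 1) (s := s) zero_le_one
    (fun N hN => by simpa using hSle N (Nat.cast_nonneg _)) hs
  set L : ℂ → ℂ := LSeries (fun n => (b n : ℂ)) with hL
  set A : ℂ → ℂ := LSeries (fun n => (a n : ℂ)) with hA
  have habs (b' : ℕ → ℝ) (h : ∀ s : ℂ, 1 < s.re → LSeriesSummable (fun n => (b' n : ℂ)) s) (s : ℂ) (hs : 1 < s.re) :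
      LSeries.abscissaOfAbsConv (fun n => (b' n : ℂ)) < s.re := by
    have : LSeries.abscissaOfAbsConv (fun n => (b' n : ℂ)) ≤ ((1 : ℝ) : EReal) :=
      LSeries.abscissaOfAbsConv_le_of_forall_lt_LSeriesSummable fun y hy => h y (by simpa using hy)
    exact lt_of_le_of_lt this (by exact_mod_cast hs)
  have hAder (s : ℂ) (hs : 1 < s.re) : HasDerivAt A (-(A s * L s)) s := by
    have h1 := LSeries_hasDerivAt (habs a hAs s hs)
    convert h1 using 2
    rw [← LSeries_convolution' (hAs s hs) (hB s hs).1]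
    congr 1
    rw [LSeries.convolution_def]
    ext n
    have := hconv n
    simp only [LSeries.logMul]
    rw [mul_comm]
    have h2 : (Complex.log n) = ((Real.log n : ℝ) : ℂ) := by
      simp
    rw [h2, ← Complex.ofReal_mul, ← this]
    push_cast; rfl
  have hLcont (s : ℂ) (hs : 1 < s.re) : ContinuousAt L s :=
    (LSeries_hasDerivAt (habs b (fun s hs => (hB s hs).1) s hs)).continuousAt
  have hopen : IsOpen {s : ℂ | 1 < s.re} := isOpen_lt continuous_const Complex.continuous_re
  have hopen2 : IsOpen {s : ℂ | 1 - δ < s.re} := isOpen_lt continuous_const Complex.continuous_re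
  have hHan : AnalyticOnNhd ℂ H {s : ℂ | 1 - δ < s.re} := hHd.analyticOnNhd hopen2
  have hs1ne (s : ℂ) (hs : 1 < s.re) : s - 1 ≠ 0 := by
    intro h; have : s = 1 := by linear_combination h
    simp [this] at hs
  have hHder (s : ℂ) (hs : 1 < s.re) : deriv H s = H s * (1 / (s - 1) - L s) := by
    have h1 : H =ᶠ[𝓝 s] fun s => (s - 1) * A s := by
      filter_upwards [hopen.mem_nhds hs] with z hz using hHA z hz
    rw [h1.deriv_eq, h1.self_of_nhds]
    have h2 : HasDerivAt (fun s => (s - 1) * A s) (1 * A s + (s - 1) * (-(A s * L s))) s :=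
      ((hasDerivAt_id s).sub_const 1).mul (hAder s hs)
    rw [h2.deriv]
    have := hs1ne s hs
    field_simp
    ring
  have hH1' : H 1 ≠ 0 := by
    rw [hH1]; simp [hc.ne']
  have hne (s : ℂ) (hs : 1 - δ < s.re) : ¬ ∀ᶠ z in 𝓝 s, H z = 0 := by
    intro h
    have hpre : IsPreconnected {s : ℂ | 1 - δ < s.re} :=
      (convex_halfSpace_re_gt (1 - δ)).isPreconnected
    have := hHan.eqOn_zero_of_preconnected_of_eventuallyEq_zero hpre hs h
    exact hH1' (this (by simp [hδ]))
  have hord (s : ℂ) (hs : 1 ≤ s.re) : ∃ m : ℕ, (m = 0 → H s ≠ 0) ∧ (H s ≠ 0 → m = 0) ∧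
      Tendsto (fun ε : ℝ => (ε : ℂ) * (1 / (s + ε - 1) - L (s + ε))) (𝓝[>] 0) (𝓝 m) := by
    obtain ⟨m, h1, h1', h2, h3⟩ := ord_lim (hHan s (by simp; linarith)) (hne s (by linarith))
    refine ⟨m, h1, h1', h2.congr' ?_⟩
    filter_upwards [h3, self_mem_nhdsWithin] with ε h4 h5
    rw [hHder _ (by simp; linarith [mem_Ioi.1 h5])]
    field_simp
  have h6 : Tendsto (fun ε : ℝ => (ε : ℂ)) (𝓝[>] 0) (𝓝 0) := by
    have : Tendsto (fun ε : ℝ => (ε : ℂ)) (𝓝 0) (𝓝 ((0 : ℝ) : ℂ)) :=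
      Complex.continuous_ofReal.tendsto _
    simpa using this.mono_left nhdsWithin_le_nhds
  have hlim (s0 : ℂ) : Tendsto (fun ε : ℝ => s0 + (ε : ℂ)) (𝓝[>] 0) (𝓝 s0) := by
    simpa using h6.const_add s0
  have hL1 (s : ℂ) (hs : 1 ≤ s.re) (hs1 : s ≠ 1) : ∃ m : ℕ, (m = 0 → H s ≠ 0) ∧
      Tendsto (fun ε : ℝ => (ε : ℂ) * L (s + ε)) (𝓝[>] 0) (𝓝 (-m)) := by
    obtain ⟨m, h1, -, h2⟩ := hord s hs
    refine ⟨m, h1, ?_⟩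
    have hne : s - 1 ≠ 0 := sub_ne_zero.2 hs1
    have h3 : Tendsto (fun ε : ℝ => (ε : ℂ) * (1 / (s + ε - 1))) (𝓝[>] 0) (𝓝 (0 * (1 / (s - 1)))) := by
      refine h6.mul ?_
      exact Tendsto.div tendsto_const_nhds ((hlim s).sub_const 1) hne
    have h4 := h3.sub h2
    rw [zero_mul, zero_sub] at h4
    refine h4.congr fun ε => ?_
    ring
  have hL0 : Tendsto (fun ε : ℝ => (ε : ℂ) * L (1 + ε)) (𝓝[>] 0) (𝓝 1) := by
    obtain ⟨m, h1, h1', h2⟩ := hord 1 (by simp)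
    rw [h1' hH1'] at h2
    have h4 := h2.const_sub 1
    simp only [Nat.cast_zero, sub_zero] at h4
    refine h4.congr' ?_
    filter_upwards [self_mem_nhdsWithin] with ε hε
    have hε : (ε : ℂ) ≠ 0 := by exact_mod_cast (ne_of_gt hε)
    have : (1 : ℂ) + ε - 1 = ε := by ring
    rw [this]
    field_simp
    ring
  have hnonzero (s : ℂ) (hs : 1 ≤ s.re) : H s ≠ 0 := by
    by_cases hs1 : s = 1
    · rw [hs1]; exact hH1'
    obtain ⟨m, h1, h2⟩ := hL1 s hs hs1
    apply h1
    rcases hs.lt_or_eq with hlt | heq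
    · have h3 : Tendsto (fun ε : ℝ => (ε : ℂ) * L (s + ε)) (𝓝[>] 0) (𝓝 (0 * L s)) :=
        h6.mul ((hLcont s hlt).tendsto.comp (hlim s))
      have := tendsto_nhds_unique h2 h3
      simpa using this
    · -- boundary
      have hst : s = 1 + s.im * Complex.I := by
        apply Complex.ext <;> simp [← heq]
      have him : s.im ≠ 0 := by
        intro h; apply hs1; rw [hst, h]; simp
      obtain ⟨m2, -, h3⟩ := hL1 (1 + (2 * s.im : ℝ) * Complex.I) (by simp) (by
        intro h; apply him
        have := congrArg Complex.im h
        simpa using this)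
      rw [hst] at h2
      have h4 := Complex.continuous_re.continuousAt.tendsto.comp
        (((hL0.const_mul 3).add (h2.const_mul 4)).add h3)
      have h5 : 0 ≤ ((3 : ℂ) * 1 + 4 * (-(m : ℂ)) + -(m2 : ℂ)).re := by
        refine ge_of_tendsto h4 ?_
        filter_upwards [self_mem_nhdsWithin] with ε hε
        have hε : 0 < ε := hε
        have h7 := threefour hb (fun s hs => (hB s hs).1) (σ := 1 + ε) (by linarith) s.im
        simp only [Function.comp]
        have e : 3 * ((ε : ℂ) * L (1 + ε)) + 4 * ((ε : ℂ) * L (1 + s.im * Complex.I + ε)) +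
          (ε : ℂ) * L (1 + (2 * s.im : ℝ) * Complex.I + ε) = (ε : ℂ) * (3 * L ((1 + ε : ℝ) : ℂ) +
          4 * L ((1 + ε : ℝ) + s.im * Complex.I) + L ((1 + ε : ℝ) + (2 * s.im : ℝ) * Complex.I)) := by
          have e1 : (1 : ℂ) + s.im * Complex.I + ε = (1 + ε : ℝ) + s.im * Complex.I := by
            push_cast; ring
          have e2 : (1 : ℂ) + (2 * s.im : ℝ) * Complex.I + ε = (1 + ε : ℝ) + (2 * s.im : ℝ) * Complex.I := by
            push_cast; ring
          rw [e1, e2]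
          push_cast
          ring
        rw [e, Complex.re_ofReal_mul]
        exact mul_nonneg hε.le h7
      simp at h5
      have : 4 * m ≤ 3 := by
        have : (4 * m : ℝ) ≤ 3 := by linarith [Nat.cast_nonneg (α := ℝ) m2]
        exact_mod_cast this
      omega
  -- apply the Tauberian theorem
  refine tauber (S := fun x => ∑ n ∈ Finset.Icc 1 ⌊x⌋₊, b n) ?_ ?_ (M := D * (Real.log 4 + 4))
    (fun x hx => hSle x hx.le) (G := fun s => (-(deriv H s / H s) - 1) / s) ?_ ?_
  · intro x y hxy
    refine Finset.sum_le_sum_of_subset_of_nonneg ?_ fun n _ _ => hb n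
    exact Finset.Icc_subset_Icc_right (Nat.floor_mono hxy)
  · intro x; exact Finset.sum_nonneg fun n _ => hb n
  · intro s hs
    have hs' : 1 ≤ s.re := hs
    apply ContinuousAt.continuousWithinAt
    have h1 := hHan s (show 1 - δ < s.re by linarith)
    have hs0 : s ≠ 0 := by
      intro h; simp [h] at hs'; linarith
    exact (((h1.deriv.continuousAt.div h1.continuousAt (hnonzero s hs)).neg).sub continuousAt_const).div continuousAt_id hs0
  · intro s hs
    obtain ⟨-, h1, h2⟩ := hB s hs
    have hs0 : s ≠ 0 := by
      intro h; simp [h] at hs; linarith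
    have hs1 := hs1ne s hs
    rw [hHder s hs]
    have h3 := hnonzero s hs.le
    have e1 : (-(H s * (1 / (s - 1) - L s) / H s) - 1) / s = L s / s - 1 / (s - 1) := by
      field_simp; ring
    rw [e1]
    have hsub := integral_comp_exp_Ioi (fun t : ℝ => (((∑ k ∈ Finset.Icc 1 ⌊t⌋₊, b k : ℝ)) : ℂ) * (t : ℂ) ^ (-(s + 1))) 0
    have hsubi := (integrableOn_comp_exp_Ioi (fun t : ℝ => (((∑ k ∈ Finset.Icc 1 ⌊t⌋₊, b k : ℝ)) : ℂ) * (t : ℂ) ^ (-(s + 1))) 0).2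
      (by simpa using h2)
    rw [Real.exp_zero] at hsub
    have h4 : L s / s = ∫ x in Ioi (0 : ℝ), Real.exp x • ((((∑ k ∈ Finset.Icc 1 ⌊Real.exp x⌋₊, b k : ℝ)) : ℂ) * (Real.exp x : ℂ) ^ (-(s + 1))) := by
      rw [hsub, h1]; field_simp
    have h5i : IntegrableOn (fun v : ℝ => Complex.exp (-(s - 1) * v)) (Ioi 0) :=
      integrableOn_exp_mul_complex_Ioi (by simp; linarith) 0
    have h5 : ∫ v in Ioi (0 : ℝ), Complex.exp (-(s - 1) * v) = 1 / (s - 1) := by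
      rw [integral_exp_mul_complex_Ioi (by simp; linarith)]
      simp only [Complex.ofReal_zero, mul_zero, Complex.exp_zero]
      field_simp
    rw [h4, ← h5, ← integral_sub hsubi h5i]
    refine setIntegral_congr_fun measurableSet_Ioi fun v _ => ?_
    show ((((∑ n ∈ Finset.Icc 1 ⌊Real.exp v⌋₊, b n) * Real.exp (-v) - 1 : ℝ)) : ℂ) * Complex.exp (-(s - 1) * v) = Real.exp v • ((((∑ k ∈ Finset.Icc 1 ⌊Real.exp v⌋₊, b k : ℝ)) : ℂ) * (Real.exp v : ℂ) ^ (-(s + 1))) - Complex.exp (-(s - 1) * v)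
    have e2 : (Real.exp v : ℂ) ^ (-(s + 1)) = Complex.exp (-v) * Complex.exp (-v) * Complex.exp (-(s - 1) * v) := by
      rw [Complex.ofReal_exp, ← Complex.exp_add, ← Complex.exp_add, Complex.cpow_def_of_ne_zero (Complex.exp_ne_zero _)]
      rw [← Complex.ofReal_exp, ← Complex.ofReal_log (Real.exp_pos v).le, Real.log_exp]
      congr 1; ring
    rw [e2, Complex.real_smul]
    have e3 : (Real.exp v : ℂ) * Complex.exp (-v) = 1 := by
      rw [Complex.ofReal_exp, ← Complex.exp_add]; simp
    push_cast at e3 ⊢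
    linear_combination (-(∑ k ∈ Finset.Icc 1 ⌊Real.exp v⌋₊, (b k : ℂ)) * Complex.exp (-v) * Complex.exp (-(s - 1) * v)) * e3
end PIT
end

section
open Filter Topology MeasureTheory Set
namespace PIT

theorem partial_summation {b cc : ℕ → ℝ} (hb : ∀ n, 0 ≤ b n) {D : ℝ} (hD : 0 ≤ D)
    (hbD : ∀ n, b n ≤ D * ArithmeticFunction.vonMangoldt n)
    (hbp : ∀ p : ℕ, p.Prime → b p = cc p * Real.log p)
    (h : Tendsto (fun x : ℝ => (∑ n ∈ Finset.Icc 1 ⌊x⌋₊, b n) / x) atTop (𝓝 1)) :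
    Tendsto (fun x : ℝ => (∑ p ∈ (Finset.Icc 1 ⌊x⌋₊).filter Nat.Prime, cc p) / (x / Real.log x))
      atTop (𝓝 1) := by
  have hlogp : ∀ p : ℕ, p.Prime → 0 < Real.log p := fun p hp =>
    Real.log_pos (by exact_mod_cast hp.one_lt)
  have hc0 : ∀ p : ℕ, p.Prime → 0 ≤ cc p := by
    intro p hp
    have h1 := hb p
    rw [hbp p hp] at h1
    exact nonneg_of_mul_nonneg_left h1 (hlogp p hp)
  have hcD : ∀ p : ℕ, p.Prime → cc p ≤ D := by
    intro p hp
    have h1 := hbD p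
    rw [hbp p hp, ArithmeticFunction.vonMangoldt_apply_prime hp] at h1
    exact le_of_mul_le_mul_right h1 (hlogp p hp)
  set T : ℝ → ℝ := fun x => ∑ p ∈ (Finset.Icc 1 ⌊x⌋₊).filter Nat.Prime, cc p * Real.log p with hT
  set P : ℝ → ℝ := fun x => ∑ p ∈ (Finset.Icc 1 ⌊x⌋₊).filter Nat.Prime, cc p with hP
  obtain ⟨C, hC⟩ := Chebyshev.psi_sub_theta_le_mul_sqrt
  have hdiff : ∀ x : ℝ, 0 ≤ (∑ n ∈ Finset.Icc 1 ⌊x⌋₊, b n) - T x ∧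
      (∑ n ∈ Finset.Icc 1 ⌊x⌋₊, b n) - T x ≤ D * (C * √x) := by
    intro x
    have e1 : (∑ n ∈ Finset.Icc 1 ⌊x⌋₊, b n) - T x =
        ∑ n ∈ (Finset.Icc 1 ⌊x⌋₊).filter (fun n => ¬ n.Prime), b n := by
      rw [← Finset.sum_filter_add_sum_filter_not (Finset.Icc 1 ⌊x⌋₊) Nat.Prime b]
      have : T x = ∑ n ∈ (Finset.Icc 1 ⌊x⌋₊).filter Nat.Prime, b n :=
        Finset.sum_congr rfl fun p hp => (hbp p (Finset.mem_filter.1 hp).2).symm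
      rw [this]; ring
    rw [e1]
    refine ⟨Finset.sum_nonneg fun n _ => hb n, ?_⟩
    refine le_trans ?_ (mul_le_mul_of_nonneg_left (hC x) hD)
    rw [Chebyshev.psi_sub_theta_eq_sum_not_prime, Finset.mul_sum]
    refine Finset.sum_le_sum fun n _ => hbD n
  have hTx : Tendsto (fun x => T x / x) atTop (𝓝 1) := by
    have h1 : Tendsto (fun x : ℝ => ((∑ n ∈ Finset.Icc 1 ⌊x⌋₊, b n) - T x) / x) atTop (𝓝 0) := by
      have h2 : Tendsto (fun x : ℝ => D * C * (√x)⁻¹) atTop (𝓝 0) := by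
        have := (tendsto_inv_atTop_zero.comp Real.tendsto_sqrt_atTop).const_mul (D * C)
        simpa using this
      refine squeeze_zero' ?_ ?_ h2
      · filter_upwards [eventually_gt_atTop 0] with x hx
        exact div_nonneg (hdiff x).1 hx.le
      · filter_upwards [eventually_gt_atTop 0] with x hx
        rw [div_le_iff₀ hx]
        refine (hdiff x).2.trans (le_of_eq ?_)
        have h3 : √x * √x = x := Real.mul_self_sqrt hx.le
        have h4 : √x ≠ 0 := (Real.sqrt_pos.2 hx).ne'
        field_simp
        rw [pow_two, h3]
    have h3 := h.sub h1
    rw [sub_zero] at h3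
    refine h3.congr fun x => ?_
    ring
  have hlow : ∀ x : ℝ, 1 < x → T x / x ≤ P x / (x / Real.log x) := by
    intro x hx
    have hx0 : 0 < x := by linarith
    have hl : 0 < Real.log x := Real.log_pos hx
    rw [div_div_eq_mul_div]
    gcongr
    rw [hT, hP, Finset.sum_mul]
    refine Finset.sum_le_sum fun p hp => ?_
    have hp' := Finset.mem_filter.1 hp
    have h1 : (p : ℝ) ≤ x := (Nat.le_floor_iff hx0.le).1 (Finset.mem_Icc.1 hp'.1).2
    have := hc0 p hp'.2
    have h2 : (0 : ℝ) < p := by exact_mod_cast hp'.2.pos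
    gcongr
  have hup : ∀ x y : ℝ, 1 < x → 1 < y → P x * Real.log y ≤ T x + D * y * Real.log y := by
    intro x y hx hy
    have hl : 0 < Real.log y := Real.log_pos hy
    have h1 : P x * Real.log y ≤ T x + ∑ p ∈ (Finset.Icc 1 ⌊x⌋₊).filter Nat.Prime,
        (if p ≤ ⌊y⌋₊ then D * Real.log y else 0) := by
      rw [hT, hP, Finset.sum_mul, ← Finset.sum_add_distrib]
      refine Finset.sum_le_sum fun p hp => ?_
      have hp' := Finset.mem_filter.1 hp
      have h3 := hc0 p hp'.2
      have h4 := hcD p hp'.2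
      split_ifs with hpy
      · have := hlogp p hp'.2
        have : 0 ≤ cc p * Real.log p := by positivity
        have : cc p * Real.log y ≤ D * Real.log y := by gcongr
        linarith
      · rw [add_zero]
        have h5 : y ≤ p := by
          rw [Nat.le_floor_iff (by linarith)] at hpy
          linarith
        gcongr
    refine h1.trans ?_
    gcongr
    rw [← Finset.sum_filter, Finset.sum_const, nsmul_eq_mul]
    have h6 : (((Finset.filter Nat.Prime (Finset.Icc 1 ⌊x⌋₊)).filter (fun p => p ≤ ⌊y⌋₊)).card : ℝ) ≤ y := by
      have : ((Finset.filter Nat.Prime (Finset.Icc 1 ⌊x⌋₊)).filter (fun p => p ≤ ⌊y⌋₊)).card ≤ ⌊y⌋₊ := by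
        have h7 : (Finset.filter Nat.Prime (Finset.Icc 1 ⌊x⌋₊)).filter (fun p => p ≤ ⌊y⌋₊) ⊆ Finset.Icc 1 ⌊y⌋₊ := by
          intro p hp
          simp only [Finset.mem_filter, Finset.mem_Icc] at hp ⊢
          exact ⟨hp.1.1.1, hp.2⟩
        simpa using Finset.card_le_card h7
      calc _ ≤ (⌊y⌋₊ : ℝ) := by exact_mod_cast this
        _ ≤ y := Nat.floor_le (by linarith)
    calc _ ≤ y * (D * Real.log y) := by gcongr
      _ = _ := by ring
  -- choose y = x / log² x
  have hll : Tendsto (fun x : ℝ => Real.log (Real.log x) / Real.log x) atTop (𝓝 0) := by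
    have h1 : Tendsto (fun u : ℝ => Real.log u / u) atTop (𝓝 0) := by
      have := Real.isLittleO_log_id_atTop.tendsto_div_nhds_zero
      simpa using this
    exact h1.comp Real.tendsto_log_atTop
  have hupper : ∀ᶠ x : ℝ in atTop, P x / (x / Real.log x) ≤
      (T x / x) * (1 - 2 * (Real.log (Real.log x) / Real.log x))⁻¹ + D * (Real.log x)⁻¹ := by
    have e1 : ∀ᶠ x : ℝ in atTop, Real.log (Real.log x) / Real.log x < 1 / 4 :=
      hll.eventually (gt_mem_nhds (by norm_num))
    filter_upwards [e1, eventually_gt_atTop 1, Real.tendsto_log_atTop.eventually_gt_atTop 1] with x hx hx1 hl1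
    have hx0 : 0 < x := by linarith
    have hl : 0 < Real.log x := by linarith
    set y := x / (Real.log x) ^ 2 with hy
    have hy0 : 0 < y := by positivity
    have hly : Real.log y = Real.log x * (1 - 2 * (Real.log (Real.log x) / Real.log x)) := by
      rw [hy, Real.log_div hx0.ne' (by positivity), Real.log_pow]
      field_simp
      push_cast; ring
    have hly0 : 0 < Real.log y := by
      rw [hly]; apply mul_pos hl; linarith
    have hy1 : 1 < y := by
      by_contra hcon
      exact absurd (Real.log_nonpos hy0.le (not_lt.1 hcon)) (not_le.2 hly0)
    have h1 := hup x y hx1 hy1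
    have h2 : P x ≤ T x / Real.log y + D * y := by
      rw [div_add' _ _ _ hly0.ne', le_div_iff₀ hly0]
      exact h1
    have h3 : 0 < 1 - 2 * (Real.log (Real.log x) / Real.log x) := by linarith
    calc P x / (x / Real.log x) ≤ (T x / Real.log y + D * y) / (x / Real.log x) := by gcongr
      _ = _ := by
        rw [hly, hy]
        generalize 1 - 2 * (Real.log (Real.log x) / Real.log x) = w at *
        field_simp
  have hlimU : Tendsto (fun x => (T x / x) * (1 - 2 * (Real.log (Real.log x) / Real.log x))⁻¹ + D * (Real.log x)⁻¹) atTop (𝓝 1) := by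
    have h1 : Tendsto (fun x : ℝ => (1 - 2 * (Real.log (Real.log x) / Real.log x))⁻¹) atTop (𝓝 (1 - 2 * 0)⁻¹) :=
      ((hll.const_mul 2).const_sub 1).inv₀ (by norm_num)
    have h2 : Tendsto (fun x : ℝ => D * (Real.log x)⁻¹) atTop (𝓝 (D * 0)) :=
      (tendsto_inv_atTop_zero.comp Real.tendsto_log_atTop).const_mul D
    simpa using (hTx.mul h1).add h2
  refine tendsto_of_tendsto_of_tendsto_of_le_of_le' hTx hlimU ?_ hupper
  filter_upwards [eventually_gt_atTop 1] with x hx using hlow x hx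
end PIT
end

section
open Filter Topology MeasureTheory Set
open scoped Pointwise
namespace PIT

theorem lattice_support {E ι : Type*} [NormedAddCommGroup E] [NormedSpace ℝ E] [FiniteDimensional ℝ E]
    [Finite ι] (b : Module.Basis ι ℝ E) (R : ℝ) :
    {l : Submodule.span ℤ (Set.range b) | ‖(l : E)‖ ≤ R}.Finite := by
  have h := ZSpan.setFinite_inter b (Metric.isBounded_closedBall (x := (0 : E)) (r := R))
  refine (h.preimage (f := fun l : Submodule.span ℤ (Set.range b) => (l : E))
    Subtype.val_injective.injOn).subset ?_
  intro l hl
  simp only [Set.mem_preimage, Set.mem_inter_iff, Metric.mem_closedBall, dist_zero_right]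
  exact ⟨hl, l.2⟩

theorem lattice_sum {E ι : Type*} [NormedAddCommGroup E] [NormedSpace ℝ E] [FiniteDimensional ℝ E]
    [MeasurableSpace E] [BorelSpace E] (μ : Measure E) [μ.IsAddHaarMeasure] [Finite ι]
    (b : Module.Basis ι ℝ E) {φ : E → ℝ} {M R : ℝ} (hM : 0 ≤ M) (hR : 0 ≤ R)
    (hL : ∀ x y, |φ x - φ y| ≤ M * ‖x - y‖) (hs : ∀ x, R < ‖x‖ → φ x = 0) :
    ∃ C : ℝ, 0 ≤ C ∧ ∀ t : ℝ, 1 ≤ t →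
      |∑' l : Submodule.span ℤ (Set.range b), φ (t⁻¹ • (l : E))
        - (∫ x, φ x ∂μ) / μ.real (ZSpan.fundamentalDomain b) * t ^ Module.finrank ℝ E|
      ≤ C * (t ^ Module.finrank ℝ E / t) := by
  set F := ZSpan.fundamentalDomain b with hF
  set n := Module.finrank ℝ E
  have hFm : MeasurableSet F := ZSpan.fundamentalDomain_measurableSet b
  have hFb : Bornology.IsBounded F := ZSpan.fundamentalDomain_isBounded b
  obtain ⟨B, hB0, hB⟩ : ∃ B : ℝ, 0 ≤ B ∧ ∀ x ∈ F, ‖x‖ ≤ B := by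
    obtain ⟨B, hB⟩ := hFb.exists_norm_le
    exact ⟨max B 0, le_max_right _ _, fun x hx => (hB x hx).trans (le_max_left _ _)⟩
  have hFfin : μ F ≠ ⊤ := hFb.measure_lt_top.ne
  have hF0 : μ F ≠ 0 := ZSpan.measure_fundamentalDomain_ne_zero b
  set v := μ.real F with hv
  have hv0 : 0 < v := ENNReal.toReal_pos hF0 hFfin
  set c1 := μ.real (Metric.closedBall (0 : E) 1) with hc1
  have hc10 : 0 ≤ c1 := measureReal_nonneg
  haveI : VAddInvariantMeasure (Submodule.span ℤ (Set.range b)) E μ :=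
    inferInstanceAs (VAddInvariantMeasure (Submodule.span ℤ (Set.range b)).toAddSubgroup E μ)
  haveI : MeasurableConstVAdd (Submodule.span ℤ (Set.range b)) E :=
    inferInstanceAs (MeasurableConstVAdd (Submodule.span ℤ (Set.range b)).toAddSubgroup E)
  have hFD := ZSpan.isAddFundamentalDomain b μ
  have hcont : Continuous φ := by
    have : LipschitzWith (Real.toNNReal M) φ := by
      refine LipschitzWith.of_dist_le_mul ?_
      intro x y
      rw [Real.dist_eq, dist_eq_norm, Real.coe_toNNReal _ hM]
      exact hL x y
    exact this.continuous
  have hcs : HasCompactSupport φ := by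
    refine HasCompactSupport.intro (isCompact_closedBall (0 : E) R) ?_
    intro x hx
    apply hs
    simpa using hx
  refine ⟨(R + 2 * B) ^ n * c1 * (M * B) / v, by positivity, ?_⟩
  intro t ht
  have ht0 : 0 < t := by linarith
  set ψ : E → ℝ := fun x => φ (t⁻¹ • x) with hψ
  have hψc : Continuous ψ := hcont.comp (continuous_const_smul _)
  have hψ0 : ∀ x, R * t < ‖x‖ → ψ x = 0 := by
    intro x hx
    apply hs
    rw [norm_smul, norm_inv, Real.norm_of_nonneg ht0.le, inv_mul_eq_div, lt_div_iff₀ ht0]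
    exact hx
  have hψcs : HasCompactSupport ψ := by
    refine HasCompactSupport.intro (isCompact_closedBall (0 : E) (R * t)) ?_
    intro x hx
    apply hψ0
    simpa using hx
  have hψi : Integrable ψ μ := hψc.integrable_of_hasCompactSupport hψcs
  have hint : ∫ x, ψ x ∂μ = t ^ n * ∫ x, φ x ∂μ := by
    rw [hψ, Measure.integral_comp_inv_smul_of_nonneg μ φ ht0.le, smul_eq_mul]
  set S : Set (Submodule.span ℤ (Set.range b)) := {l | ‖(l : E)‖ ≤ R * t + B}
  have hS : S.Finite := lattice_support b _
  have hout : ∀ l ∉ hS.toFinset, ∀ x : E, ‖x‖ ≤ B → ψ ((l : E) + x) = 0 := by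
    intro l hl x hx
    apply hψ0
    simp only [Set.Finite.mem_toFinset, S, Set.mem_ofPred_eq, not_le] at hl
    have := norm_sub_le ((l : E) + x) x
    rw [add_sub_cancel_right] at this
    linarith
  have e1 : ∑' l : Submodule.span ℤ (Set.range b), ψ (l : E) = ∑ l ∈ hS.toFinset, ψ (l : E) := by
    refine tsum_eq_sum ?_
    intro l hl
    simpa using hout l hl 0 (by simpa using hB0)
  have e2 : ∫ x, ψ x ∂μ = ∑ l ∈ hS.toFinset, ∫ x in F, ψ ((l : E) + x) ∂μ := by
    rw [hFD.integral_eq_tsum'' ψ hψi]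
    refine tsum_eq_sum ?_
    intro l hl
    refine setIntegral_eq_zero_of_forall_eq_zero ?_
    intro x hx
    exact hout l hl x (hB x hx)
  have e3 : ∀ l : Submodule.span ℤ (Set.range b),
      |ψ (l : E) * v - ∫ x in F, ψ ((l : E) + x) ∂μ| ≤ M * B / t * v := by
    intro l
    have h1 : ψ (l : E) * v = ∫ x in F, ψ (l : E) ∂μ := by
      rw [setIntegral_const, smul_eq_mul, mul_comm]
    have h2 : IntegrableOn (fun x => ψ ((l : E) + x)) F μ := 
      (hψi.comp_add_left (l : E)).integrableOn
    have h3 : IntegrableOn (fun _ : E => ψ (l : E)) F μ := integrableOn_const hFfin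
    rw [h1, ← integral_sub h3 h2]
    have := norm_setIntegral_le_of_norm_le_const (μ := μ) (s := F) (C := M * B / t)
      (f := fun x => ψ (l : E) - ψ ((l : E) + x)) (lt_top_iff_ne_top.2 hFfin) ?_
    · simpa using this
    · intro x hx
      rw [Real.norm_eq_abs]
      refine (hL _ _).trans ?_
      rw [← smul_sub, norm_smul, norm_inv, Real.norm_of_nonneg ht0.le]
      have : ‖(l : E) - (l + x)‖ ≤ B := by simpa using hB x hx
      rw [mul_div_assoc, inv_mul_eq_div]
      gcongr
  have e4 : (hS.toFinset.card : ℝ) * v ≤ (R + 2 * B) ^ n * c1 * t ^ n := by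
    have h1 : (hS.toFinset.card : ENNReal) * μ F ≤ μ (Metric.closedBall (0 : E) (R * t + 2 * B)) := by
      rw [hFD.measure_eq_tsum' (Metric.closedBall (0 : E) (R * t + 2 * B))]
      refine le_trans ?_ (ENNReal.sum_le_tsum hS.toFinset)
      rw [← nsmul_eq_mul, ← Finset.sum_const]
      refine Finset.sum_le_sum ?_
      intro l hl
      have hsub : l +ᵥ F ⊆ Metric.closedBall (0 : E) (R * t + 2 * B) := by
        rintro _ ⟨x, hx, rfl⟩
        simp only [Set.Finite.mem_toFinset, S, Set.mem_ofPred_eq] at hl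
        rw [mem_closedBall_zero_iff]
        have := norm_add_le (l : E) x
        have h3 := hB x hx
        change ‖(l : E) + x‖ ≤ _
        linarith
      rw [Set.inter_eq_self_of_subset_right hsub, measure_vadd]
    have h2 := ENNReal.toReal_mono (measure_closedBall_lt_top).ne h1
    rw [ENNReal.toReal_mul, ENNReal.toReal_natCast] at h2
    refine h2.trans ?_
    change μ.real _ ≤ _
    rw [Measure.addHaar_real_closedBall' μ 0 (by positivity)]
    have : R * t + 2 * B ≤ (R + 2 * B) * t := by nlinarith
    calc (R * t + 2 * B) ^ n * c1 ≤ ((R + 2 * B) * t) ^ n * c1 := by gcongr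
      _ = _ := by rw [mul_pow]; ring
  have e5 : |∑ l ∈ hS.toFinset, ψ (l : E) * v - ∫ x, ψ x ∂μ| ≤ hS.toFinset.card * (M * B / t * v) := by
    rw [e2, ← Finset.sum_sub_distrib]
    refine (Finset.abs_sum_le_sum_abs _ _).trans ?_
    refine (Finset.sum_le_card_nsmul _ _ _ (fun l _ => e3 l)).trans ?_
    rw [nsmul_eq_mul]
  change |∑' l : Submodule.span ℤ (Set.range b), ψ (l : E) - _| ≤ _
  rw [e1]
  have e6 : ∑ l ∈ hS.toFinset, ψ (l : E) - (∫ x, φ x ∂μ) / v * t ^ n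
      = (∑ l ∈ hS.toFinset, ψ (l : E) * v - ∫ x, ψ x ∂μ) / v := by
    rw [hint, ← Finset.sum_mul]
    field_simp
  rw [e6, abs_div, abs_of_pos hv0, div_le_iff₀ hv0]
  refine e5.trans ?_
  calc (hS.toFinset.card : ℝ) * (M * B / t * v) = (hS.toFinset.card * v) * (M * B / t) := by ring
    _ ≤ ((R + 2 * B) ^ n * c1 * t ^ n) * (M * B / t) := by gcongr
    _ = _ := by field_simp

end PIT
end

section
open Filter Topology MeasureTheory Set
open scoped Pointwise
namespace PIT

/-- the weight function -/
noncomputable def gg (u : ℝ) : ℝ := u * max 0 (1 - u)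

theorem gg_nonneg {u : ℝ} (hu : 0 ≤ u) : 0 ≤ gg u := mul_nonneg hu (le_max_left _ _)

theorem gg_le {u : ℝ} (hu : 0 ≤ u) : gg u ≤ u := by
  unfold gg
  have : max 0 (1 - u) ≤ 1 := max_le (by norm_num) (by linarith)
  nlinarith

theorem gg_zero : gg 0 = 0 := by simp [gg]

theorem gg_eq_zero {u : ℝ} (hu : 1 ≤ u) : gg u = 0 := by
  unfold gg
  rw [max_eq_left (by linarith), mul_zero]

theorem gg_lip {u v : ℝ} (hu : 0 ≤ u) (hv : 0 ≤ v) : |gg u - gg v| ≤ |u - v| := by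
  wlog h : u ≤ v generalizing u v
  · rw [abs_sub_comm, abs_sub_comm u v]; exact this hv hu (le_of_not_ge h)
  have e : |u - v| = v - u := by rw [abs_sub_comm, abs_of_nonneg (by linarith)]
  rw [e, abs_le]
  unfold gg
  rcases le_total v 1 with h1 | h1
  · rw [max_eq_right (by linarith), max_eq_right (by linarith)]
    constructor <;> nlinarith
  · rw [max_eq_left (by linarith : (1 - v) ≤ 0)]
    rcases le_total u 1 with h2 | h2
    · rw [max_eq_right (by linarith)]
      constructor <;> nlinarith
    · rw [max_eq_left (by linarith)]
      constructor <;> nlinarith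

theorem abs_exp_sub_exp {s t D : ℝ} (h : |s - t| ≤ D) :
    |Real.exp s - Real.exp t| ≤ Real.exp s * Real.exp D * D := by
  have hD : 0 ≤ D := (abs_nonneg _).trans h
  have e : Real.exp s - Real.exp t = Real.exp s * (1 - Real.exp (t - s)) := by
    rw [mul_sub, ← Real.exp_add]; simp
  rw [e, abs_mul, abs_of_pos (Real.exp_pos s), mul_assoc]
  refine mul_le_mul_of_nonneg_left ?_ (Real.exp_pos s).le
  have h1 := (abs_le.1 h).1
  have h2 := (abs_le.1 h).2
  have h3 : Real.exp (t - s) ≤ Real.exp D := Real.exp_le_exp.2 (by linarith)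
  have h4 : 1 + (t - s) ≤ Real.exp (t - s) := by linarith [Real.add_one_le_exp (t - s)]
  have h6 : 1 ≤ Real.exp D := Real.one_le_exp hD
  have h5 : Real.exp D - 1 ≤ Real.exp D * D := by
    have := Real.add_one_le_exp (-D)
    have h7 : Real.exp D * Real.exp (-D) = 1 := by rw [← Real.exp_add]; simp
    nlinarith [Real.exp_pos D]
  rw [abs_le]
  constructor <;> nlinarith

theorem abs_log_sub_log {a b c η : ℝ} (hc : 0 < c) (ha : c ≤ a) (hb : c ≤ b) (h : |a - b| ≤ η) :
    |Real.log a - Real.log b| ≤ η / c := by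
  wlog hab : a ≤ b generalizing a b
  · rw [abs_sub_comm]
    rw [abs_sub_comm] at h
    exact this hb ha h (le_of_not_ge hab)
  have ha0 : 0 < a := by linarith
  have hb0 : 0 < b := by linarith
  rw [abs_sub_comm, abs_of_nonneg (sub_nonneg.2 (Real.log_le_log ha0 hab)),
    ← Real.log_div hb0.ne' ha0.ne']
  have h1 := Real.log_le_sub_one_of_pos (div_pos hb0 ha0)
  refine h1.trans ?_
  have h2 : b / a - 1 = (b - a) / a := by field_simp
  rw [h2]
  have h3 : b - a ≤ η := by have := (abs_le.1 h).1; linarith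
  have h4 : 0 ≤ η := (abs_nonneg _).trans h
  exact div_le_div₀ h4 h3 hc ha

section
variable {P : Type*} [Fintype P]

/-- generalized norm -/
noncomputable def NN (m : P → ℕ) (a : P → ℝ) : ℝ := ∏ w, a w ^ m w

/-- normalised logarithms -/
noncomputable def YY (m : P → ℕ) (a : P → ℝ) (w : P) : ℝ :=
  Real.log (a w) - Real.log (NN m a) / (∑ w, m w : ℕ)

theorem NN_nonneg (m : P → ℕ) {a : P → ℝ} (ha : ∀ w, 0 ≤ a w) : 0 ≤ NN m a :=
  Finset.prod_nonneg fun w _ => pow_nonneg (ha w) _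

theorem log_NN (m : P → ℕ) {a : P → ℝ} (ha : ∀ w, 0 < a w) :
    Real.log (NN m a) = ∑ w, m w * Real.log (a w) := by
  unfold NN
  rw [Real.log_prod (fun w _ => (pow_pos (ha w) _).ne')]
  simp

theorem pos_of_NN (m : P → ℕ) (hm : ∀ w, m w ≠ 0) {a : P → ℝ} (ha : ∀ w, 0 ≤ a w) 
    (h : NN m a ≠ 0) (w : P) : 0 < a w := by
  refine lt_of_le_of_ne (ha w) ?_
  intro h0
  apply h
  unfold NN
  refine Finset.prod_eq_zero (Finset.mem_univ w) ?_
  rw [← h0, zero_pow (hm w)]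

theorem lip_abs (m : P → ℕ) (hm : ∀ w, m w ≠ 0) [Nonempty P] {χ : (P → ℝ) → ℝ} {M0 Λ : ℝ}
    (hM0 : 0 ≤ M0) (hΛ : 0 ≤ Λ)
    (h0 : ∀ y, 0 ≤ χ y) (h1 : ∀ y, χ y ≤ 1)
    (hl : ∀ y z D, (∀ w, |y w - z w| ≤ D) → |χ y - χ z| ≤ M0 * D)
    (hs : ∀ y : P → ℝ, ∑ w, (m w : ℝ) * y w = 0 → χ y ≠ 0 → ∀ w, |y w| ≤ Λ) :
    (∀ a : P → ℝ, (∀ w, 0 ≤ a w) → gg (NN m a) * χ (YY m a) ≠ 0 → ∀ w, a w ≤ Real.exp Λ) ∧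
    ∃ M, 0 ≤ M ∧ ∀ a b : P → ℝ, (∀ w, 0 ≤ a w) → (∀ w, 0 ≤ b w) → ∀ η, (∀ w, |a w - b w| ≤ η) →
      |gg (NN m a) * χ (YY m a) - gg (NN m b) * χ (YY m b)| ≤ M * η := by
  set n : ℕ := ∑ w, m w with hn
  have hn1 : 1 ≤ n := by
    obtain ⟨w⟩ := ‹Nonempty P›
    have := Finset.single_le_sum (f := m) (fun _ _ => Nat.zero_le _) (Finset.mem_univ w)
    have := hm w
    omega
  have hn0 : (0 : ℝ) < n := by exact_mod_cast hn1
  set κ := Real.exp (-Λ) with hκ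
  have hκ0 : 0 < κ := Real.exp_pos _
  have hκ1 : κ ≤ 1 := by rw [hκ]; exact Real.exp_le_one_iff.2 (by linarith)
  -- structure of support
  have key : ∀ a : P → ℝ, (∀ w, 0 ≤ a w) → gg (NN m a) * χ (YY m a) ≠ 0 →
      ∃ r : ℝ, 0 < r ∧ r ≤ 1 ∧ NN m a ≤ r ∧ 0 < NN m a ∧ ∀ w, κ * r ≤ a w ∧ a w ≤ r / κ := by
    intro a ha hne
    have hNn := NN_nonneg m ha
    have hN0 : NN m a ≠ 0 := by
      intro h; rw [h, gg_zero, zero_mul] at hne; exact hne rfl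
    have hNpos : 0 < NN m a := lt_of_le_of_ne hNn hN0.symm
    have hN1 : NN m a ≤ 1 := by
      by_contra h
      rw [gg_eq_zero (not_le.1 h).le, zero_mul] at hne; exact hne rfl
    have hap := pos_of_NN m hm ha hN0
    have hlogN : Real.log (NN m a) ≤ 0 := Real.log_nonpos hNn hN1
    have hsum : ∑ w, (m w : ℝ) * YY m a w = 0 := by
      unfold YY
      simp only [mul_sub, Finset.sum_sub_distrib]
      rw [← log_NN m hap, ← Finset.sum_mul, ← Nat.cast_sum, ← hn]
      field_simp
      ring
    have hY := hs _ hsum (right_ne_zero_of_mul hne)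
    refine ⟨Real.exp (Real.log (NN m a) / n), Real.exp_pos _, ?_, ?_, hNpos, ?_⟩
    · exact Real.exp_le_one_iff.2 (div_nonpos_of_nonpos_of_nonneg hlogN hn0.le)
    · conv_lhs => rw [← Real.exp_log hNpos]
      refine Real.exp_le_exp.2 ?_
      rw [le_div_iff₀ hn0]
      have : (1 : ℝ) ≤ n := by exact_mod_cast hn1
      nlinarith
    · intro w
      have h3 := abs_le.1 (hY w)
      unfold YY at h3
      rw [← hn] at h3
      constructor
      · conv_rhs => rw [← Real.exp_log (hap w)]
        rw [hκ, ← Real.exp_add]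
        exact Real.exp_le_exp.2 (by linarith)
      · conv_lhs => rw [← Real.exp_log (hap w)]
        rw [hκ, ← Real.exp_sub]
        exact Real.exp_le_exp.2 (by linarith)
  have hle : ∀ a : P → ℝ, (∀ w, 0 ≤ a w) → |gg (NN m a) * χ (YY m a)| ≤ NN m a := by
    intro a ha
    have hNn := NN_nonneg m ha
    rw [abs_of_nonneg (mul_nonneg (gg_nonneg hNn) (h0 _))]
    have := gg_le hNn
    have := gg_nonneg hNn
    have := h1 (YY m a)
    have := h0 (YY m a)
    nlinarith
  refine ⟨?_, ?_⟩
  · intro a ha hne w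
    obtain ⟨r, hr0, hr1, -, -, h⟩ := key a ha hne
    refine (h w).2.trans ?_
    rw [hκ, Real.exp_neg, div_inv_eq_mul]
    nlinarith [Real.exp_pos Λ]
  · set C1 : ℝ := 2 / κ + (2 / κ ^ 2 + 1) / κ with hC1
    set C2 : ℝ := Real.exp n * (2 * n / κ) + M0 * (4 / κ) with hC2
    refine ⟨max C1 C2, le_trans (by positivity) (le_max_left _ _), ?_⟩
    -- reduce to first nonzero
    have main : ∀ a b : P → ℝ, (∀ w, 0 ≤ a w) → (∀ w, 0 ≤ b w) → ∀ η, (∀ w, |a w - b w| ≤ η) →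
        gg (NN m a) * χ (YY m a) ≠ 0 →
        |gg (NN m a) * χ (YY m a) - gg (NN m b) * χ (YY m b)| ≤ max C1 C2 * η := by
      intro a b ha hb η hη hne
      obtain ⟨w0⟩ := ‹Nonempty P›
      have hη0 : 0 ≤ η := (abs_nonneg _).trans (hη w0)
      obtain ⟨r, hr0, hr1, hNr, hNpos, h⟩ := key a ha hne
      rcases le_or_gt (κ * r / 2) η with hc | hc
      · refine le_trans ?_ (mul_le_mul_of_nonneg_right (le_max_left C1 C2) hη0)
        have hr2 : r ≤ 2 / κ * η := by
          rw [div_mul_eq_mul_div, le_div_iff₀ hκ0]; linarith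
        have hA : |gg (NN m a) * χ (YY m a)| ≤ 2 / κ * η := (hle a ha).trans (hNr.trans hr2)
        have hB : |gg (NN m b) * χ (YY m b)| ≤ (2 / κ ^ 2 + 1) / κ * η := by
          by_cases hb0 : gg (NN m b) * χ (YY m b) = 0
          · rw [hb0, abs_zero]; positivity
          obtain ⟨r', hr'0, -, hNr', -, h'⟩ := key b hb hb0
          refine (hle b hb).trans (hNr'.trans ?_)
          have e1 := (h' w0).1
          have e2 := (abs_le.1 (hη w0)).1
          have e3 := (h w0).2
          have e4 : r / κ ≤ 2 / κ ^ 2 * η := by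
            calc r / κ ≤ (2 / κ * η) / κ := by gcongr
              _ = 2 / κ ^ 2 * η := by field_simp
          rw [div_mul_eq_mul_div, le_div_iff₀ hκ0]
          linarith
        calc _ ≤ |gg (NN m a) * χ (YY m a)| + |gg (NN m b) * χ (YY m b)| := abs_sub _ _
          _ ≤ _ := by rw [hC1, add_mul]; exact add_le_add hA hB
      · refine le_trans ?_ (mul_le_mul_of_nonneg_right (le_max_right C1 C2) hη0)
        set D := 2 * η / (κ * r) with hD
        have hκr : 0 < κ * r := by positivity
        have hD0 : 0 ≤ D := by positivity
        have hD1 : D ≤ 1 := by rw [hD, div_le_one hκr]; linarith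
        have hDr : D * r = 2 / κ * η := by rw [hD]; field_simp
        have hap : ∀ w, κ * r / 2 ≤ a w := fun w => by have := (h w).1; linarith
        have hbp : ∀ w, κ * r / 2 ≤ b w := fun w => by
          have := (h w).1; have := (abs_le.1 (hη w)).2; linarith
        have hap0 : ∀ w, 0 < a w := fun w => lt_of_lt_of_le (by positivity) (hap w)
        have hbp0 : ∀ w, 0 < b w := fun w => lt_of_lt_of_le (by positivity) (hbp w)
        have hlog : ∀ w, |Real.log (a w) - Real.log (b w)| ≤ D := by
          intro w
          have := abs_log_sub_log (by positivity) (hap w) (hbp w) (hη w)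
          refine this.trans (le_of_eq ?_)
          rw [hD]; field_simp
        have hNb : 0 < NN m b := Finset.prod_pos fun w _ => pow_pos (hbp0 w) _
        have hlogN : |Real.log (NN m a) - Real.log (NN m b)| ≤ n * D := by
          rw [log_NN m hap0, log_NN m hbp0, ← Finset.sum_sub_distrib, hn, Nat.cast_sum,
            Finset.sum_mul]
          refine (Finset.abs_sum_le_sum_abs _ _).trans (Finset.sum_le_sum fun w _ => ?_)
          rw [← mul_sub, abs_mul, Nat.abs_cast]
          exact mul_le_mul_of_nonneg_left (hlog w) (Nat.cast_nonneg _)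
        have hY : ∀ w, |YY m a w - YY m b w| ≤ 2 * D := by
          intro w
          unfold YY
          rw [← hn]
          have e : Real.log (a w) - Real.log (NN m a) / n - (Real.log (b w) - Real.log (NN m b) / n)
            = (Real.log (a w) - Real.log (b w)) - (Real.log (NN m a) - Real.log (NN m b)) / n := by ring
          rw [e]
          have e2 : |(Real.log (NN m a) - Real.log (NN m b)) / n| ≤ D := by
            rw [abs_div, Nat.abs_cast, div_le_iff₀ hn0]; linarith
          have := abs_sub (Real.log (a w) - Real.log (b w)) ((Real.log (NN m a) - Real.log (NN m b)) / n)
          have := hlog w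
          linarith
        have hχ := hl _ _ _ hY
        have hN : |NN m a - NN m b| ≤ Real.exp n * (2 * n / κ) * η := by
          have := abs_exp_sub_exp hlogN
          rw [Real.exp_log hNpos, Real.exp_log hNb] at this
          refine this.trans ?_
          have e1 : Real.exp (n * D) ≤ Real.exp n := Real.exp_le_exp.2 (by nlinarith)
          calc NN m a * Real.exp (n * D) * (n * D) ≤ r * Real.exp n * (n * D) := by gcongr
            _ = Real.exp n * n * (D * r) := by ring
            _ = _ := by rw [hDr]; ring
        have hg := (gg_lip hNpos.le hNb.le).trans hN
        have e : gg (NN m a) * χ (YY m a) - gg (NN m b) * χ (YY m b)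
          = gg (NN m a) * (χ (YY m a) - χ (YY m b)) + (gg (NN m a) - gg (NN m b)) * χ (YY m b) := by ring
        rw [e]
        refine (abs_add_le _ _).trans ?_
        rw [abs_mul, abs_mul, abs_of_nonneg (gg_nonneg hNpos.le), abs_of_nonneg (h0 (YY m b))]
        have f1 : gg (NN m a) * |χ (YY m a) - χ (YY m b)| ≤ r * (M0 * (2 * D)) :=
          mul_le_mul ((gg_le hNpos.le).trans hNr) hχ (abs_nonneg _) hr0.le
        have f2 : |gg (NN m a) - gg (NN m b)| * χ (YY m b) ≤ Real.exp n * (2 * n / κ) * η * 1 :=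
          mul_le_mul hg (h1 _) (h0 _) ((abs_nonneg _).trans hg)
        have f3 : r * (M0 * (2 * D)) = M0 * (4 / κ) * η := by
          calc r * (M0 * (2 * D)) = 2 * M0 * (D * r) := by ring
            _ = _ := by rw [hDr]; ring
        rw [hC2]
        linarith
    intro a b ha hb η hη
    by_cases hA : gg (NN m a) * χ (YY m a) = 0
    · by_cases hB : gg (NN m b) * χ (YY m b) = 0
      · obtain ⟨w0⟩ := ‹Nonempty P›
        have hη0 : 0 ≤ η := (abs_nonneg _).trans (hη w0)
        rw [hA, hB, sub_self, abs_zero]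
        exact mul_nonneg (le_trans (by positivity) (le_max_left _ _)) hη0
      · rw [abs_sub_comm]
        exact main b a hb ha η (fun w => by rw [abs_sub_comm]; exact hη w) hB
    · exact main a b ha hb η hη hA

end
end PIT
end

section
open Filter Topology MeasureTheory Set
open scoped Pointwise
namespace PIT

/-- tent function -/
noncomputable def tent (c : ℝ) : ℝ := max 0 (1 - |c|)

theorem tent_nonneg (c : ℝ) : 0 ≤ tent c := le_max_left _ _
theorem tent_le_one (c : ℝ) : tent c ≤ 1 := max_le (by norm_num) (by linarith [abs_nonneg c])
theorem tent_eq_zero {c : ℝ} (h : 1 ≤ |c|) : tent c = 0 := max_eq_left (by linarith)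
theorem tent_zero : tent 0 = 1 := by simp [tent]
theorem tent_lip (a b : ℝ) : |tent a - tent b| ≤ |a - b| := by
  unfold tent
  rw [max_comm, max_comm (0 : ℝ)]
  refine (abs_max_sub_max_le_abs (1 - |a|) (1 - |b|) (0 : ℝ)).trans ?_
  · have := abs_abs_sub_abs_le a b
    rw [show 1 - |a| - (1 - |b|) = -(|a| - |b|) by ring, abs_neg]
    exact this

theorem tent_sum (c : ℝ) : ∑ j ∈ ({-⌊c⌋, -⌊c⌋ - 1} : Finset ℤ), tent (c + j) = 1 := by
  rw [Finset.sum_pair (by omega)]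
  have h0 := Int.fract_nonneg c
  have h1 := Int.fract_lt_one c
  have e : c = ⌊c⌋ + Int.fract c := (Int.floor_add_fract c).symm
  have e1 : c + ((-⌊c⌋ : ℤ) : ℝ) = Int.fract c := by push_cast; linarith
  have e2 : c + ((-⌊c⌋ - 1 : ℤ) : ℝ) = Int.fract c - 1 := by push_cast; linarith
  rw [e1, e2]
  unfold tent
  rw [abs_of_nonneg h0, abs_of_nonpos (by linarith), max_eq_right (by linarith),
    max_eq_right (by linarith)]
  ring

theorem tent_out (c : ℝ) (j : ℤ) (h : j ∉ ({-⌊c⌋, -⌊c⌋ - 1} : Finset ℤ)) : tent (c + j) = 0 := by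
  apply tent_eq_zero
  simp only [Finset.mem_insert, Finset.mem_singleton, not_or] at h
  have h0 := Int.fract_nonneg c
  have h1 := Int.fract_lt_one c
  have e : c = ⌊c⌋ + Int.fract c := (Int.floor_add_fract c).symm
  rcases lt_or_ge j (-⌊c⌋ - 1) with h2 | h2
  · have : (j : ℝ) ≤ -⌊c⌋ - 2 := by exact_mod_cast (by omega : j ≤ -⌊c⌋ - 2)
    rw [le_abs]; right; linarith
  · have : (j : ℝ) ≥ -⌊c⌋ + 1 := by exact_mod_cast (by omega : j ≥ -⌊c⌋ + 1)
    rw [le_abs]; left; linarith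

theorem tent_prod_sum {r : ℕ} (c : Fin r → ℝ) :
    ∑' e : Fin r → ℤ, ENNReal.ofReal (∏ i, tent (c i + e i)) = 1 := by
  rw [tsum_eq_sum (s := Fintype.piFinset fun i => ({-⌊c i⌋, -⌊c i⌋ - 1} : Finset ℤ))]
  · rw [← ENNReal.ofReal_sum_of_nonneg (fun e _ => Finset.prod_nonneg fun i _ => tent_nonneg _),
      ← Finset.prod_univ_sum (fun i => ({-⌊c i⌋, -⌊c i⌋ - 1} : Finset ℤ)) (fun i j => tent (c i + j))]
    simp [tent_sum]
  · intro e he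
    rw [Fintype.mem_piFinset, not_forall] at he
    obtain ⟨i, hi⟩ := he
    rw [Finset.prod_eq_zero (Finset.mem_univ i) (tent_out _ _ hi), ENNReal.ofReal_zero]

theorem prod_sub_prod_le {ι : Type*} (s : Finset ι) (f g : ι → ℝ) (hf0 : ∀ i, 0 ≤ f i)
    (hf : ∀ i, f i ≤ 1) (hg0 : ∀ i, 0 ≤ g i) (hg : ∀ i, g i ≤ 1) :
    |∏ i ∈ s, f i - ∏ i ∈ s, g i| ≤ ∑ i ∈ s, |f i - g i| := by
  classical
  induction s using Finset.induction_on with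
  | empty => simp
  | insert a s ha ih =>
    rw [Finset.prod_insert ha, Finset.prod_insert ha, Finset.sum_insert ha]
    have e : f a * ∏ i ∈ s, f i - g a * ∏ i ∈ s, g i
      = f a * (∏ i ∈ s, f i - ∏ i ∈ s, g i) + (f a - g a) * ∏ i ∈ s, g i := by ring
    rw [e]
    refine (abs_add_le _ _).trans ?_
    rw [abs_mul, abs_mul, abs_of_nonneg (hf0 a),
      abs_of_nonneg (Finset.prod_nonneg fun i _ => hg0 i)]
    have h1 : ∏ i ∈ s, g i ≤ 1 := Finset.prod_le_one (fun i _ => hg0 i) fun i _ => hg i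
    have h2 := mul_le_mul (hf a) ih (abs_nonneg _) zero_le_one
    have h3 := mul_le_mul_of_nonneg_left h1 (abs_nonneg (f a - g a))
    linarith

section
open NumberField NumberField.Units NumberField.Units.dirichletUnitTheorem NumberField.mixedEmbedding
  NumberField.InfinitePlace
open scoped Classical
variable (K : Type*) [Field K] [NumberField K]

/-- real basis of log space -/
noncomputable def logBasis : Module.Basis (Fin (Units.rank K)) ℝ (logSpace K) :=
  (basisUnitLattice K).ofZLatticeBasis ℝ (unitLattice K)

/-- smooth cut-off -/
noncomputable def chiK (y : logSpace K) : ℝ := ∏ i, tent ((logBasis K).repr y i)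

theorem chiK_nonneg (y : logSpace K) : 0 ≤ chiK K y := Finset.prod_nonneg fun _ _ => tent_nonneg _
theorem chiK_le_one (y : logSpace K) : chiK K y ≤ 1 :=
  Finset.prod_le_one (fun _ _ => tent_nonneg _) fun _ _ => tent_le_one _
theorem chiK_zero : chiK K 0 = 1 := by simp [chiK, tent_zero]

/-- units as product -/
noncomputable def unitsEquiv : torsion K × (Fin (Units.rank K) → ℤ) ≃ (𝓞 K)ˣ :=
  Equiv.ofBijective (fun ζe => (ζe.1 : (𝓞 K)ˣ) * ∏ i, (fundSystem K i) ^ (ζe.2 i)) (by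
    rw [Function.bijective_iff_existsUnique]
    intro x
    obtain ⟨z, hz, hu⟩ := exist_unique_eq_mul_prod K x
    exact ⟨z, hz.symm, fun y hy => hu y hy.symm⟩)

theorem logBasis_repr_unit (z : torsion K × (Fin (Units.rank K) → ℤ)) (i) :
    (logBasis K).repr (logEmbedding K (Additive.ofMul (unitsEquiv K z))) i = z.2 i := by
  have h : logEmbedding K (Additive.ofMul (unitsEquiv K z)) = ∑ i, (z.2 i : ℝ) • logBasis K i := by
    have h1 : logEmbedding K (Additive.ofMul (z.1 : (𝓞 K)ˣ)) = 0 :=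
      logEmbedding_eq_zero_iff.2 z.1.2
    unfold unitsEquiv
    rw [Equiv.ofBijective_apply, ofMul_mul, map_add, h1, zero_add, ofMul_prod, map_sum]
    refine Finset.sum_congr rfl fun i _ => ?_
    rw [ofMul_zpow, map_zsmul, logEmbedding_fundSystem, logBasis, Module.Basis.ofZLatticeBasis_apply,
      Int.cast_smul_eq_zsmul]
  rw [h, Module.Basis.repr_sum_self]

theorem units_sum (y : logSpace K) :
    ∑' u : (𝓞 K)ˣ, ENNReal.ofReal (chiK K (logEmbedding K (Additive.ofMul u) + y))
      = torsionOrder K := by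
  rw [← (unitsEquiv K).tsum_eq, ENNReal.tsum_prod (f := fun (ζ : torsion K) (e : Fin (Units.rank K) → ℤ) =>
    ENNReal.ofReal (chiK K (logEmbedding K (Additive.ofMul (unitsEquiv K (ζ, e))) + y)))]
  have : ∀ ζ : torsion K, ∑' e : Fin (Units.rank K) → ℤ, ENNReal.ofReal
      (chiK K (logEmbedding K (Additive.ofMul (unitsEquiv K (ζ, e))) + y)) = 1 := by
    intro ζ
    rw [← tent_prod_sum (fun i => (logBasis K).repr y i)]
    refine tsum_congr fun e => ?_
    unfold chiK
    congr 1
    refine Finset.prod_congr rfl fun i _ => ?_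
    rw [map_add, Finsupp.add_apply, logBasis_repr_unit, add_comm]
  simp_rw [this]
  haveI : Fintype (torsion K) := Fintype.ofFinite _
  rw [tsum_fintype]
  simp [torsionOrder, Nat.card_eq_fintype_card]

theorem chiK_lip : ∃ M : ℝ, 0 ≤ M ∧ ∀ y z : logSpace K, |chiK K y - chiK K z| ≤ M * ‖y - z‖ := by
  set T : logSpace K →L[ℝ] (Fin (Units.rank K) → ℝ) :=
    LinearMap.toContinuousLinearMap ((logBasis K).equivFun : logSpace K →ₗ[ℝ] _)
  refine ⟨Units.rank K * ‖T‖, by positivity, fun y z => ?_⟩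
  refine (prod_sub_prod_le _ _ _ (fun _ => tent_nonneg _) (fun _ => tent_le_one _)
    (fun _ => tent_nonneg _) (fun _ => tent_le_one _)).trans ?_
  refine (Finset.sum_le_card_nsmul _ _ (‖T‖ * ‖y - z‖) ?_).trans ?_
  · intro i _
    refine (tent_lip _ _).trans ?_
    have h1 := norm_le_pi_norm (T (y - z)) i
    have h2 := T.le_opNorm (y - z)
    refine le_trans (le_of_eq ?_) (h1.trans h2)
    simp [T]
  · simp [mul_assoc]

theorem chiK_support : ∃ Λ : ℝ, 0 ≤ Λ ∧ ∀ y : logSpace K, chiK K y ≠ 0 → ‖y‖ ≤ Λ := by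
  refine ⟨∑ i, ‖logBasis K i‖, by positivity, fun y hy => ?_⟩
  rw [← (logBasis K).sum_repr y]
  refine (norm_sum_le _ _).trans (Finset.sum_le_sum fun i _ => ?_)
  rw [_root_.norm_smul]
  have : ‖(logBasis K).repr y i‖ ≤ 1 := by
    by_contra h
    apply hy
    exact Finset.prod_eq_zero (Finset.mem_univ i) (tent_eq_zero (not_le.1 h).le)
  exact mul_le_of_le_one_left (norm_nonneg _) this

/-- the smoothed weight on the mixed space -/
noncomputable def phiK (x : mixedSpace K) : ℝ := gg (mixedEmbedding.norm x) * chiK K (logMap x)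

theorem phiK_nonneg (x : mixedSpace K) : 0 ≤ phiK K x :=
  mul_nonneg (gg_nonneg (mixedEmbedding.norm_nonneg _)) (chiK_nonneg K _)

theorem phiK_zero : phiK K 0 = 0 := by simp [phiK, gg_zero]

theorem normAtPlace_le_norm (w : InfinitePlace K) (x : mixedSpace K) : normAtPlace w x ≤ ‖x‖ := by
  rw [norm_eq_sup'_normAtPlace]
  exact Finset.le_sup' (fun w => normAtPlace w x) (Finset.mem_univ w)

theorem normAtPlace_lip (w : InfinitePlace K) (x y : mixedSpace K) :
    |normAtPlace w x - normAtPlace w y| ≤ ‖x - y‖ := by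
  have h1 := normAtPlace_add_le w (x - y) y
  have h2 := normAtPlace_add_le w (y - x) x
  rw [sub_add_cancel] at h1 h2
  have h3 := normAtPlace_le_norm K w (x - y)
  have h4 := normAtPlace_le_norm K w (y - x)
  rw [norm_sub_rev] at h4
  rw [abs_le]
  constructor <;> linarith

theorem phiK_props : ∃ M R : ℝ, 0 ≤ M ∧ 0 ≤ R ∧
    (∀ x y, |phiK K x - phiK K y| ≤ M * ‖x - y‖) ∧ (∀ x, R < ‖x‖ → phiK K x = 0) := by
  obtain ⟨M1, hM1, hl⟩ := chiK_lip K
  obtain ⟨Λ1, hΛ1, hs⟩ := chiK_support K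
  set m : InfinitePlace K → ℕ := fun w => mult w with hm
  set n : ℕ := Module.finrank ℚ K with hn
  have hmn : ∑ w, m w = n := sum_mult_eq
  set χ : (InfinitePlace K → ℝ) → ℝ :=
    fun y => chiK K (fun w => (m w.1 : ℝ) * y w.1) with hχ
  have hm0 : ∀ w, m w ≠ 0 := fun w => mult_ne_zero
  have hm1 : ∀ w, (1 : ℝ) ≤ m w := fun w => by exact_mod_cast Nat.one_le_iff_ne_zero.2 (hm0 w)
  have hm2 : ∀ w, (m w : ℝ) ≤ n := fun w => by
    rw [← hmn]
    exact_mod_cast Finset.single_le_sum (f := m) (fun _ _ => Nat.zero_le _) (Finset.mem_univ w)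
  obtain ⟨hA, M, hM, hB⟩ := lip_abs m hm0 (χ := χ) (M0 := M1 * n)
    (Λ := Λ1 + Fintype.card (InfinitePlace K) * Λ1)
    (by positivity) (by positivity) (fun y => chiK_nonneg K _) (fun y => chiK_le_one K _)
    (by
      intro y z D hD
      refine (hl _ _).trans ?_
      rw [mul_assoc]
      refine mul_le_mul_of_nonneg_left ?_ hM1
      have hD0 : 0 ≤ D := (abs_nonneg _).trans (hD w₀)
      rw [pi_norm_le_iff_of_nonneg (by positivity)]
      intro w
      simp only [Pi.sub_apply]
      rw [← mul_sub, norm_mul, Real.norm_eq_abs, Real.norm_eq_abs, Nat.abs_cast]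
      exact mul_le_mul (hm2 _) (hD _) (abs_nonneg _) (by positivity))
    (by
      intro y hy0 hne
      have h1 := hs _ hne
      have h2 : ∀ w, w ≠ w₀ → |m w * y w| ≤ Λ1 := by
        intro w hw
        have := norm_le_pi_norm (fun w : {w : InfinitePlace K // w ≠ w₀} => (m w.1 : ℝ) * y w.1) ⟨w, hw⟩
        exact this.trans h1
      have h3 : |m w₀ * y w₀| ≤ Fintype.card (InfinitePlace K) * Λ1 := by
        classical
        rw [← Finset.add_sum_erase _ _ (Finset.mem_univ w₀)] at hy0
        rw [eq_neg_of_add_eq_zero_left hy0, abs_neg]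
        refine (Finset.abs_sum_le_sum_abs _ _).trans ?_
        refine (Finset.sum_le_card_nsmul _ _ Λ1 ?_).trans ?_
        · intro w hw; exact h2 w (Finset.ne_of_mem_erase hw)
        · rw [nsmul_eq_mul]
          refine mul_le_mul_of_nonneg_right ?_ hΛ1
          exact_mod_cast Finset.card_le_univ _
      intro w
      have h4 : |y w| ≤ |m w * y w| := by
        rw [abs_mul, Nat.abs_cast]
        exact le_mul_of_one_le_left (abs_nonneg _) (hm1 w)
      refine h4.trans ?_
      by_cases hw : w = w₀
      · rw [hw]; linarith
      · have := h2 w hw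
        have : 0 ≤ (Fintype.card (InfinitePlace K) : ℝ) * Λ1 := by positivity
        linarith)
  have hphi : ∀ x : mixedSpace K, phiK K x =
      gg (NN m (fun w => normAtPlace w x)) * χ (YY m (fun w => normAtPlace w x)) := by
    intro x
    unfold phiK
    congr 2
    ext w
    simp only [logMap_apply, YY]
    rw [hmn, div_eq_mul_inv]
    rfl
  refine ⟨M, Real.exp (Λ1 + Fintype.card (InfinitePlace K) * Λ1), hM, (Real.exp_pos _).le, ?_, ?_⟩
  · intro x y
    rw [hphi, hphi]
    exact hB _ _ (fun w => normAtPlace_nonneg w x) (fun w => normAtPlace_nonneg w y) _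
      (fun w => normAtPlace_lip K w x y)
  · intro x hx
    by_contra hne
    rw [hphi] at hne
    have := hA _ (fun w => normAtPlace_nonneg w x) hne
    refine absurd hx (not_lt.2 ?_)
    rw [norm_eq_sup'_normAtPlace]
    exact Finset.sup'_le _ _ fun w _ => this w

theorem phiK_integral_pos : 0 < ∫ x, phiK K x := by
  obtain ⟨M, R, hM, hR, hL, hs⟩ := phiK_props K
  have hcont : Continuous (phiK K) := by
    have : LipschitzWith (Real.toNNReal M) (phiK K) := by
      refine LipschitzWith.of_dist_le_mul ?_
      intro x y
      rw [Real.dist_eq, dist_eq_norm, Real.coe_toNNReal _ hM]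
      exact hL x y
    exact this.continuous
  have hcs : HasCompactSupport (phiK K) := by
    refine HasCompactSupport.intro (isCompact_closedBall (0 : mixedSpace K) R) ?_
    intro x hx
    apply hs
    simpa using hx
  refine hcont.integral_pos_of_hasCompactSupport_nonneg_nonzero hcs (phiK_nonneg K) 
    (x := (1 / 2 : ℝ) • (1 : mixedSpace K)) ?_
  unfold phiK
  rw [logMap_real, chiK_zero, mixedEmbedding.norm_smul, map_one, mul_one, mul_one]
  have h1 : (|1 / 2| : ℝ) ^ Module.finrank ℚ K < 1 :=
    pow_lt_one₀ (abs_nonneg _) (by rw [abs_of_pos] <;> norm_num) Module.finrank_pos.ne'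
  have h0 : 0 < (|1 / 2| : ℝ) ^ Module.finrank ℚ K := by positivity
  unfold gg
  rw [max_eq_right (by linarith)]
  have : 0 < 1 - (|1 / 2| : ℝ) ^ Module.finrank ℚ K := by linarith
  positivity

end
end PIT
end

section
open Filter Topology MeasureTheory Set
open scoped Pointwise
namespace PIT
section
open NumberField NumberField.Units NumberField.Units.dirichletUnitTheorem NumberField.mixedEmbedding
  NumberField.InfinitePlace
open scoped Classical nonZeroDivisors
variable (K : Type*) [Field K] [NumberField K]

theorem tsum_bij {A B D : Type*} (Ψ : A × B → D) (hΨ : Function.Bijective Ψ) (F : D → ENNReal) :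
    ∑' d, F d = ∑' a, ∑' b, F (Ψ (a, b)) := by
  rw [← (Equiv.ofBijective Ψ hΨ).tsum_eq]
  exact ENNReal.tsum_prod (f := fun a b => F (Ψ (a, b)))

theorem class_gen {C : ClassGroup (𝓞 K)} {J : (Ideal (𝓞 K))⁰} (hJ : ClassGroup.mk0 J = C⁻¹)
    (I : {I : (Ideal (𝓞 K))⁰ // ClassGroup.mk0 I = C}) : ∃ α : 𝓞 K,
      Ideal.span {α} = (I.1 : Ideal (𝓞 K)) * J := by
  have : ClassGroup.mk0 (I.1 * J) = 1 := by rw [map_mul, I.2, hJ, mul_inv_cancel]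
  rw [ClassGroup.mk0_eq_one_iff (I.1 * J).2] at this
  obtain ⟨α, hα⟩ := this
  exact ⟨α, by simpa using hα.symm⟩

theorem class_inj {J : (Ideal (𝓞 K))⁰} {I I' : (Ideal (𝓞 K))⁰} {g g' : 𝓞 K}
    (hg : Ideal.span {g} = (I : Ideal (𝓞 K)) * J) (hg' : Ideal.span {g'} = (I' : Ideal (𝓞 K)) * J)
    {u u' : (𝓞 K)ˣ} (h2 : (u : 𝓞 K) * g = u' * g') : I = I' := by
  have hJ0 : (J : Ideal (𝓞 K)) ≠ 0 := nonZeroDivisors.coe_ne_zero J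
  have h3 : Ideal.span {g} = Ideal.span {g'} := by
    rw [Ideal.span_singleton_eq_span_singleton]
    have a1 : Associated g ((u : 𝓞 K) * g) := associated_unit_mul_right _ _ u.isUnit
    have a2 : Associated g' ((u' : 𝓞 K) * g') := associated_unit_mul_right _ _ u'.isUnit
    rw [h2] at a1
    exact a1.trans a2.symm
  rw [hg, hg'] at h3
  exact Subtype.ext (mul_right_cancel₀ hJ0 h3)

theorem class_surj {C : ClassGroup (𝓞 K)} {J : (Ideal (𝓞 K))⁰} (hJ : ClassGroup.mk0 J = C⁻¹)
    {α : 𝓞 K} (hα : α ∈ (J : Ideal (𝓞 K))) (hα0 : α ≠ 0) :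
    ∃ I : (Ideal (𝓞 K))⁰, ClassGroup.mk0 I = C ∧ (I : Ideal (𝓞 K)) * J = Ideal.span {α} := by
  have hd : (J : Ideal (𝓞 K)) ∣ Ideal.span {α} := by
    rw [Ideal.dvd_iff_le, Ideal.span_singleton_le_iff_mem]; exact hα
  obtain ⟨I, hI⟩ := hd
  have hI0 : I ≠ 0 := by
    rintro rfl
    rw [mul_zero] at hI
    exact hα0 (Ideal.span_singleton_eq_bot.1 hI)
  refine ⟨⟨I, mem_nonZeroDivisors_of_ne_zero hI0⟩, ?_, by rw [hI, mul_comm]⟩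
  have h2 : ClassGroup.mk0 (J * ⟨I, mem_nonZeroDivisors_of_ne_zero hI0⟩) = 1 := by
    rw [ClassGroup.mk0_eq_one_iff (J * ⟨I, mem_nonZeroDivisors_of_ne_zero hI0⟩).2]
    refine ⟨α, ?_⟩
    exact hI.symm
  rw [map_mul, hJ, inv_mul_eq_one] at h2
  exact h2.symm

theorem class_bij {C : ClassGroup (𝓞 K)} {J : (Ideal (𝓞 K))⁰} (hJ : ClassGroup.mk0 J = C⁻¹) :
    ∃ gen : {I : (Ideal (𝓞 K))⁰ // ClassGroup.mk0 I = C} → 𝓞 K,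
      (∀ I, Ideal.span {gen I} = (I.1 : Ideal (𝓞 K)) * J) ∧ (∀ I, gen I ≠ 0) ∧
      ∀ F : 𝓞 K → ENNReal, ∑' α : {α : 𝓞 K // α ∈ (J : Ideal (𝓞 K)) ∧ α ≠ 0}, F α =
        ∑' I : {I : (Ideal (𝓞 K))⁰ // ClassGroup.mk0 I = C}, ∑' u : (𝓞 K)ˣ, F (u * gen I) := by
  choose gen hgen using class_gen K hJ
  have hJ0 : (J : Ideal (𝓞 K)) ≠ 0 := nonZeroDivisors.coe_ne_zero J
  have hne : ∀ I, gen I ≠ 0 := by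
    intro I h
    have h2 := hgen I
    rw [h, Ideal.span_singleton_zero] at h2
    exact mul_ne_zero (nonZeroDivisors.coe_ne_zero I.1) hJ0 h2.symm
  have hmem : ∀ I, gen I ∈ (J : Ideal (𝓞 K)) := by
    intro I
    have h1 := Ideal.mem_span_singleton_self (gen I)
    rw [hgen] at h1
    exact Ideal.mul_le_right h1
  have hmem2 : ∀ I (u : (𝓞 K)ˣ), (u : 𝓞 K) * gen I ∈ (J : Ideal (𝓞 K)) ∧ (u : 𝓞 K) * gen I ≠ 0 := by
    intro I u
    constructor
    · exact (J : Ideal (𝓞 K)).mul_mem_left (u : 𝓞 K) (hmem I)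
    · exact mul_ne_zero u.ne_zero (hne I)
  refine ⟨gen, hgen, hne, fun F => ?_⟩
  refine tsum_bij (fun z : {I : (Ideal (𝓞 K))⁰ // ClassGroup.mk0 I = C} × (𝓞 K)ˣ =>
    (⟨(z.2 : 𝓞 K) * gen z.1, hmem2 z.1 z.2⟩ :
      {α : 𝓞 K // α ∈ (J : Ideal (𝓞 K)) ∧ α ≠ 0})) ⟨?_, ?_⟩ (fun α => F α.1)
  · rintro ⟨I, u⟩ ⟨I', u'⟩ h
    have h2 : (u : 𝓞 K) * gen I = u' * gen I' := congrArg Subtype.val h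
    have h5 : I = I' := Subtype.ext (class_inj K (hgen I) (hgen I') h2)
    subst h5
    have h6 : u = u' := Units.ext (mul_right_cancel₀ (hne I) h2)
    rw [h6]
  · rintro ⟨α, hα, hα0⟩
    obtain ⟨I, hc, hI⟩ := class_surj K hJ hα hα0
    have h3 : Ideal.span {gen ⟨I, hc⟩} = Ideal.span {α} := by
      rw [hgen, hI]
    rw [Ideal.span_singleton_eq_span_singleton] at h3
    obtain ⟨u, hu⟩ := h3
    refine ⟨⟨⟨I, hc⟩, u⟩, Subtype.ext ?_⟩
    exact (mul_comm _ _).trans hu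

theorem phi_sum {C : ClassGroup (𝓞 K)} {J : (Ideal (𝓞 K))⁰} (hJ : ClassGroup.mk0 J = C⁻¹)
    {x t : ℝ} (hx : 0 < x) (ht : 0 < t) (htx : t ^ Module.finrank ℚ K = Ideal.absNorm (J : Ideal (𝓞 K)) * x) :
    ∑' α : {α : 𝓞 K // α ∈ (J : Ideal (𝓞 K)) ∧ α ≠ 0},
      ENNReal.ofReal (phiK K (t⁻¹ • mixedEmbedding K (α : 𝓞 K))) =
    torsionOrder K * ∑' I : {I : (Ideal (𝓞 K))⁰ // ClassGroup.mk0 I = C},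
      ENNReal.ofReal (gg (Ideal.absNorm (I.1 : Ideal (𝓞 K)) / x)) := by
  obtain ⟨gen, hgen, hne, hF⟩ := class_bij K hJ
  rw [hF (fun α => ENNReal.ofReal (phiK K (t⁻¹ • mixedEmbedding K (α : 𝓞 K)))), ← ENNReal.tsum_mul_left]
  refine tsum_congr fun I => ?_
  have hN0 : mixedEmbedding.norm (mixedEmbedding K (gen I : K)) ≠ 0 := by
    rw [mixedEmbedding.norm_ne_zero_iff]
    intro w
    rw [normAtPlace_apply]
    simpa using hne I
  have hti : t⁻¹ ≠ 0 := inv_ne_zero ht.ne'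
  have hJN : (Ideal.absNorm (J : Ideal (𝓞 K)) : ℝ) ≠ 0 :=
    Nat.cast_ne_zero.2 (Ideal.absNorm_ne_zero_of_nonZeroDivisors J)
  have hN : mixedEmbedding.norm (mixedEmbedding K (gen I : K)) =
      Ideal.absNorm (I.1 : Ideal (𝓞 K)) * Ideal.absNorm (J : Ideal (𝓞 K)) := by
    have h1 := congrArg Ideal.absNorm (hgen I)
    rw [Ideal.absNorm_span_singleton, map_mul] at h1
    rw [mixedEmbedding.norm_eq_norm]
    have h2 : ((Algebra.norm ℤ (gen I)).natAbs : ℝ) = Ideal.absNorm (I.1 : Ideal (𝓞 K)) * Ideal.absNorm (J : Ideal (𝓞 K)) := by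
      rw [h1, Nat.cast_mul]
    rw [← h2, Nat.cast_natAbs, ← Algebra.coe_norm_int]
    push_cast
    rfl
  have hu : ∀ u : (𝓞 K)ˣ, phiK K (t⁻¹ • mixedEmbedding K ((u * gen I : 𝓞 K) : K)) =
      gg (Ideal.absNorm (I.1 : Ideal (𝓞 K)) / x) *
        chiK K (logEmbedding K (Additive.ofMul u) + logMap (mixedEmbedding K (gen I : K))) := by
    intro u
    have e : mixedEmbedding K ((u * gen I : 𝓞 K) : K) = u • mixedEmbedding K (gen I : K) := by
      rw [unitSMul_smul, ← map_mul]
      congr 1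
    rw [e]
    unfold phiK
    rw [logMap_real_smul (by rw [norm_unit_smul]; exact hN0) hti, logMap_unit_smul u hN0,
      mixedEmbedding.norm_smul, norm_unit_smul, hN, abs_of_pos (inv_pos.2 ht), inv_pow, htx]
    congr 2
    field_simp
  have hg : 0 ≤ gg (Ideal.absNorm (I.1 : Ideal (𝓞 K)) / x) := gg_nonneg (by positivity)
  simp_rw [hu, ENNReal.ofReal_mul hg]
  rw [ENNReal.tsum_mul_left, units_sum, mul_comm]

theorem lattice_tsum (J : (Ideal (𝓞 K))⁰) (F : mixedSpace K → ENNReal) (hF : F 0 = 0) :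
    ∑' l : Submodule.span ℤ (Set.range (fractionalIdealLatticeBasis K (FractionalIdeal.mk0 K J))),
      F (l : mixedSpace K) =
    ∑' α : {α : 𝓞 K // α ∈ (J : Ideal (𝓞 K)) ∧ α ≠ 0}, F (mixedEmbedding K (α : 𝓞 K)) := by
  have hmem : ∀ x : mixedSpace K,
      x ∈ Submodule.span ℤ (Set.range (fractionalIdealLatticeBasis K (FractionalIdeal.mk0 K J))) ↔
      ∃ α : 𝓞 K, α ∈ (J : Ideal (𝓞 K)) ∧ mixedEmbedding K (α : K) = x := by
    intro x
    rw [mem_span_fractionalIdealLatticeBasis]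
    simp only [FractionalIdeal.coe_mk0, Set.mem_image, SetLike.mem_coe, FractionalIdeal.mem_coeIdeal]
    constructor
    · rintro ⟨_, ⟨α, hα, rfl⟩, h⟩; exact ⟨α, hα, h⟩
    · rintro ⟨α, hα, h⟩; exact ⟨_, ⟨α, hα, rfl⟩, h⟩
  let Ψ : {α : 𝓞 K // α ∈ (J : Ideal (𝓞 K)) ∧ α ≠ 0} →
    Submodule.span ℤ (Set.range (fractionalIdealLatticeBasis K (FractionalIdeal.mk0 K J))) :=
    fun α => ⟨mixedEmbedding K (α : 𝓞 K), (hmem _).2 ⟨α, α.2.1, rfl⟩⟩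
  have hinj : Function.Injective Ψ := by
    intro α β h
    have h2 := congrArg Subtype.val h
    have h3 := mixedEmbedding_injective K h2
    exact Subtype.ext (RingOfIntegers.ext h3)
  have := hinj.tsum_eq (f := fun l : Submodule.span ℤ (Set.range (fractionalIdealLatticeBasis K (FractionalIdeal.mk0 K J))) => F (l : mixedSpace K)) ?_
  · exact this.symm
  · intro l hl
    obtain ⟨α, hα, h⟩ := (hmem l).1 l.2
    refine ⟨⟨α, hα, ?_⟩, Subtype.ext h⟩
    rintro rfl
    apply hl
    change F (l : mixedSpace K) = 0
    rw [← h]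
    simpa using hF

theorem class_count (C : ClassGroup (𝓞 K)) : ∃ c B : ℝ, 0 < c ∧ ∀ x : ℝ, 1 ≤ x →
    ∃ s : ℝ, 0 ≤ s ∧ ∑' I : {I : (Ideal (𝓞 K))⁰ // ClassGroup.mk0 I = C},
      ENNReal.ofReal (gg (Ideal.absNorm (I.1 : Ideal (𝓞 K)) / x)) = ENNReal.ofReal s ∧
      |s - c * x| ≤ B * x ^ (1 - 1 / (Module.finrank ℚ K : ℝ)) := by
  obtain ⟨J, hJ⟩ := ClassGroup.mk0_surjective C⁻¹
  obtain ⟨M, R, hM, hR, hL, hs⟩ := phiK_props K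
  set n := Module.finrank ℚ K with hn
  have hn1 : 1 ≤ n := Module.finrank_pos
  have hn0 : (0 : ℝ) < n := by exact_mod_cast hn1
  set b := fractionalIdealLatticeBasis K (FractionalIdeal.mk0 K J) with hb
  obtain ⟨C0, hC0, hlat⟩ := lattice_sum (volume : Measure (mixedSpace K)) b hM hR hL hs
  rw [show Module.finrank ℝ (mixedSpace K) = n from mixedEmbedding.finrank K] at hlat
  set v := (volume : Measure (mixedSpace K)).real (ZSpan.fundamentalDomain b)
  have hv0 : 0 < v := ENNReal.toReal_pos (ZSpan.measure_fundamentalDomain_ne_zero b)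
    (ZSpan.fundamentalDomain_isBounded b).measure_lt_top.ne
  have hI := phiK_integral_pos K
  set A : ℝ := ∫ x, phiK K x
  set w : ℝ := (torsionOrder K : ℝ) with hw
  have hw0 : 0 < w := by rw [hw]; exact_mod_cast (torsionOrder_pos K)
  set q : ℝ := (Ideal.absNorm (J : Ideal (𝓞 K)) : ℝ) with hq
  have hq1 : 1 ≤ q := by
    rw [hq]
    exact_mod_cast Nat.one_le_iff_ne_zero.2 (Ideal.absNorm_ne_zero_of_nonZeroDivisors J)
  refine ⟨A / v * q / w, C0 * q ^ (1 - 1 / (n : ℝ)) / w, by positivity, fun x hx => ?_⟩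
  set t : ℝ := (q * x) ^ (1 / (n : ℝ)) with ht
  have hqx : 1 ≤ q * x := by nlinarith
  have ht1 : 1 ≤ t := Real.one_le_rpow hqx (by positivity)
  have ht0 : 0 < t := by linarith
  have htn : t ^ n = q * x := by
    rw [ht, ← Real.rpow_natCast, ← Real.rpow_mul (by linarith), one_div_mul_cancel hn0.ne', Real.rpow_one]
  set S : ℝ := ∑' l : Submodule.span ℤ (Set.range b), phiK K (t⁻¹ • (l : mixedSpace K)) with hS
  have hS0 : 0 ≤ S := tsum_nonneg fun l => phiK_nonneg K _
  have hsum : Summable (fun l : Submodule.span ℤ (Set.range b) => phiK K (t⁻¹ • (l : mixedSpace K))) := by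
    refine summable_of_hasFiniteSupport ((lattice_support b (R * t)).subset ?_)
    intro l hl
    by_contra h
    apply hl
    apply hs
    rw [_root_.norm_smul, norm_inv, Real.norm_of_nonneg ht0.le, inv_mul_eq_div, lt_div_iff₀ ht0]
    exact not_le.1 h
  have e1 : ENNReal.ofReal S = ENNReal.ofReal w * ∑' I : {I : (Ideal (𝓞 K))⁰ // ClassGroup.mk0 I = C},
      ENNReal.ofReal (gg (Ideal.absNorm (I.1 : Ideal (𝓞 K)) / x)) := by
    rw [hS, ENNReal.ofReal_tsum_of_nonneg (fun l => phiK_nonneg K _) hsum]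
    rw [lattice_tsum K J (fun y => ENNReal.ofReal (phiK K (t⁻¹ • y))) (by simp [phiK_zero])]
    rw [phi_sum K hJ (by linarith) ht0 htn, hw, ENNReal.ofReal_natCast]
  refine ⟨S / w, by positivity, ?_, ?_⟩
  · rw [ENNReal.ofReal_div_of_pos hw0, e1, mul_comm, mul_div_assoc, ENNReal.div_self, mul_one]
    · simpa using hw0
    · exact ENNReal.ofReal_ne_top
  · have h1 := hlat t ht1
    rw [htn] at h1
    have e2 : S / w - A / v * q / w * x = (S - A / v * (q * x)) / w := by field_simp
    rw [e2, abs_div, abs_of_pos hw0, div_mul_eq_mul_div (C0 * q ^ (1 - 1 / (n : ℝ)))]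
    refine div_le_div_of_nonneg_right ?_ hw0.le
    refine h1.trans (le_of_eq ?_)
    rw [mul_assoc, ← Real.mul_rpow (by linarith) (by linarith), ht, Real.rpow_sub (by linarith),
      Real.rpow_one]

/-- number of ideals of norm `n` -/
noncomputable def aK (n : ℕ) : ℝ := Nat.card {I : Ideal (𝓞 K) // Ideal.absNorm I = n}

theorem Wf_aK {x : ℝ} (hx : 1 ≤ x) : ENNReal.ofReal (Wf (aK K) x) =
    ∑' I : (Ideal (𝓞 K))⁰, ENNReal.ofReal (gg (Ideal.absNorm (I : Ideal (𝓞 K)) / x)) := by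
  rw [← (Equiv.sigmaFiberEquiv (fun I : (Ideal (𝓞 K))⁰ => Ideal.absNorm (I : Ideal (𝓞 K)))).tsum_eq,
    ENNReal.tsum_sigma']
  have hx0 : 0 < x := by linarith
  have hin : ∀ n : ℕ, 1 ≤ n → ∑' I : {I : (Ideal (𝓞 K))⁰ // Ideal.absNorm (I : Ideal (𝓞 K)) = n},
      ENNReal.ofReal (gg (Ideal.absNorm ((Equiv.sigmaFiberEquiv (fun I : (Ideal (𝓞 K))⁰ => Ideal.absNorm (I : Ideal (𝓞 K)))
        ⟨n, I⟩ : (Ideal (𝓞 K))⁰) : Ideal (𝓞 K)) / x)) = ENNReal.ofReal (aK K n * gg (n / x)) := by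
    intro n hn
    have h1 : ∀ I : {I : (Ideal (𝓞 K))⁰ // Ideal.absNorm (I : Ideal (𝓞 K)) = n},
      ENNReal.ofReal (gg (Ideal.absNorm ((Equiv.sigmaFiberEquiv (fun I : (Ideal (𝓞 K))⁰ => Ideal.absNorm (I : Ideal (𝓞 K)))
        ⟨n, I⟩ : (Ideal (𝓞 K))⁰) : Ideal (𝓞 K)) / x)) = ENNReal.ofReal (gg (n / x)) := by
      intro I
      have : (Equiv.sigmaFiberEquiv (fun I : (Ideal (𝓞 K))⁰ => Ideal.absNorm (I : Ideal (𝓞 K))) ⟨n, I⟩) = I.1 := rfl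
      rw [this, I.2]
    simp_rw [h1]
    have e : {I : (Ideal (𝓞 K))⁰ // Ideal.absNorm (I : Ideal (𝓞 K)) = n} ≃ {I : Ideal (𝓞 K) // Ideal.absNorm I = n} :=
      { toFun := fun I => ⟨I.1, I.2⟩
        invFun := fun I => ⟨⟨I.1, mem_nonZeroDivisors_of_ne_zero (by
          intro h0
          have := I.2
          rw [h0] at this
          simp at this
          omega)⟩, I.2⟩
        left_inv := fun I => rfl
        right_inv := fun I => rfl }
    have hfin : Finite {I : Ideal (𝓞 K) // Ideal.absNorm I = n} := Ideal.finite_setOfPred_absNorm_eq n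
    haveI : Finite {I : (Ideal (𝓞 K))⁰ // Ideal.absNorm (I : Ideal (𝓞 K)) = n} := Finite.of_equiv _ e.symm
    haveI : Fintype {I : (Ideal (𝓞 K))⁰ // Ideal.absNorm (I : Ideal (𝓞 K)) = n} := Fintype.ofFinite _
    rw [tsum_fintype, Finset.sum_const, nsmul_eq_mul, ENNReal.ofReal_mul (by unfold aK; positivity)]
    unfold aK
    rw [← Nat.card_congr e, Nat.card_eq_fintype_card, ENNReal.ofReal_natCast]
    rfl
  have h0 : ∀ n : ℕ, n ∉ Finset.Icc 1 ⌊x⌋₊ → ∑' I : {I : (Ideal (𝓞 K))⁰ // Ideal.absNorm (I : Ideal (𝓞 K)) = n},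
      ENNReal.ofReal (gg (Ideal.absNorm ((Equiv.sigmaFiberEquiv (fun I : (Ideal (𝓞 K))⁰ => Ideal.absNorm (I : Ideal (𝓞 K)))
        ⟨n, I⟩ : (Ideal (𝓞 K))⁰) : Ideal (𝓞 K)) / x)) = 0 := by
    intro n hn
    rcases Nat.eq_zero_or_pos n with rfl | hn1
    · have : IsEmpty {I : (Ideal (𝓞 K))⁰ // Ideal.absNorm (I : Ideal (𝓞 K)) = 0} :=
        ⟨fun I => Ideal.absNorm_ne_zero_of_nonZeroDivisors I.1 I.2⟩
      exact tsum_empty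
    · rw [hin n hn1, gg_eq_zero, mul_zero, ENNReal.ofReal_zero]
      rw [Finset.mem_Icc, not_and, not_le] at hn
      rw [one_le_div hx0]
      exact (Nat.lt_of_floor_lt (hn hn1)).le
  rw [tsum_eq_sum (fun n hn => h0 n hn)]
  unfold Wf
  rw [ENNReal.ofReal_sum_of_nonneg]
  · refine Finset.sum_congr rfl fun n hn => ?_
    rw [Finset.mem_Icc] at hn
    rw [hin n hn.1]
    have hle : (n : ℝ) ≤ x := (Nat.le_floor_iff hx0.le).1 hn.2
    unfold gg
    rw [max_eq_right (sub_nonneg.2 ((div_le_one hx0).2 hle))]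
  · intro n hn
    rw [Finset.mem_Icc] at hn
    have hle : (n : ℝ) ≤ x := (Nat.le_floor_iff hx0.le).1 hn.2
    have := (div_le_one hx0).2 hle
    have : 0 ≤ (1 - (n : ℝ) / x) := by linarith
    unfold aK
    positivity

theorem Wf_aK_asymp : ∃ c B : ℝ, 0 < c ∧ ∀ x : ℝ, 1 ≤ x →
    |Wf (aK K) x - c * x| ≤ B * x ^ (1 - 1 / (Module.finrank ℚ K : ℝ)) := by
  choose c B hc h using class_count K
  refine ⟨∑ C, c C, ∑ C, B C, Finset.sum_pos (fun C _ => hc C) Finset.univ_nonempty, fun x hx => ?_⟩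
  choose s hs0 hs1 hs2 using fun C => h C x hx
  have hW0 : 0 ≤ Wf (aK K) x := by
    unfold Wf
    refine Finset.sum_nonneg fun n hn => ?_
    rw [Finset.mem_Icc] at hn
    have hx0 : 0 < x := by linarith
    have hle : (n : ℝ) ≤ x := (Nat.le_floor_iff hx0.le).1 hn.2
    have := (div_le_one hx0).2 hle
    have : 0 ≤ (1 - (n : ℝ) / x) := by linarith
    unfold aK
    positivity
  have e : Wf (aK K) x = ∑ C, s C := by
    have h1 : ENNReal.ofReal (Wf (aK K) x) = ENNReal.ofReal (∑ C, s C) := by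
      rw [Wf_aK K hx, ← (Equiv.sigmaFiberEquiv (fun I : (Ideal (𝓞 K))⁰ => ClassGroup.mk0 I)).tsum_eq,
        ENNReal.tsum_sigma', tsum_fintype, ENNReal.ofReal_sum_of_nonneg (fun C _ => hs0 C)]
      refine Finset.sum_congr rfl fun C _ => ?_
      rw [← hs1 C]
      rfl
    rwa [ENNReal.ofReal_eq_ofReal_iff hW0 (Finset.sum_nonneg fun C _ => hs0 C)] at h1
  rw [e, Finset.sum_mul, Finset.sum_mul, ← Finset.sum_sub_distrib]
  exact (Finset.abs_sum_le_sum_abs _ _).trans (Finset.sum_le_sum fun C _ => hs2 C)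

end
end PIT
end

section
open Filter Topology MeasureTheory Set
namespace PIT
section
open UniqueFactorizationMonoid
open scoped Classical
variable (R : Type*) [CommRing R] [IsDedekindDomain R] [Module.Free ℤ R] [Module.Finite ℤ R] [CharZero R]

noncomputable def SR (n : ℕ) : Finset (Ideal R) := (Ideal.finite_setOfPred_absNorm_eq (S := R) n).toFinset

theorem mem_SR {n : ℕ} {I : Ideal R} : I ∈ SR R n ↔ Ideal.absNorm I = n := by
  simp [SR]

noncomputable def TR (n : ℕ) : Finset (Ideal R × ℕ) :=
  ((Ideal.finite_setOfPred_absNorm_le (S := R) n).toFinset ×ˢ Finset.Icc 1 n).filter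
    (fun z => Prime z.1 ∧ Ideal.absNorm z.1 ^ z.2 = n)

theorem two_le_absNorm {P : Ideal R} (hP : Prime P) : 2 ≤ Ideal.absNorm P := by
  have h0 : Ideal.absNorm P ≠ 0 := by
    rw [Ne, Ideal.absNorm_eq_zero_iff]; exact hP.ne_zero
  have h1 : Ideal.absNorm P ≠ 1 := by
    rw [Ne, Ideal.absNorm_eq_one_iff]
    intro h
    apply hP.not_isUnit
    rw [h, ← Ideal.one_eq_top]
    exact isUnit_one
  omega

theorem mem_TR {n : ℕ} {z : Ideal R × ℕ} :
    z ∈ TR R n ↔ Prime z.1 ∧ 1 ≤ z.2 ∧ Ideal.absNorm z.1 ^ z.2 = n := by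
  simp only [TR, Finset.mem_filter, Finset.mem_product, Set.Finite.mem_toFinset, Set.mem_ofPred_eq,
    Finset.mem_Icc]
  constructor
  · rintro ⟨⟨-, h2⟩, h3, h4⟩; exact ⟨h3, h2.1, h4⟩
  · rintro ⟨h1, h2, h3⟩
    have h4 := two_le_absNorm R h1
    refine ⟨⟨?_, h2, ?_⟩, h1, h3⟩
    · rw [← h3]; exact Nat.le_self_pow (by omega) _
    · rw [← h3]; exact (Nat.lt_pow_self (by omega)).le

noncomputable def LR (n : ℕ) : ℝ := ∑ z ∈ TR R n, Real.log (Ideal.absNorm z.1)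

theorem LR_nonneg (n : ℕ) : 0 ≤ LR R n :=
  Finset.sum_nonneg fun _ _ => Real.log_natCast_nonneg _

theorem LR_le (n : ℕ) : LR R n ≤ Module.finrank ℤ R * ArithmeticFunction.vonMangoldt n := by
  rcases (TR R n).eq_empty_or_nonempty with h | ⟨⟨P, k⟩, h⟩
  · unfold LR
    rw [h, Finset.sum_empty]
    exact mul_nonneg (Nat.cast_nonneg _) ArithmeticFunction.vonMangoldt_nonneg
  · rw [mem_TR] at h
    obtain ⟨hP, hk, hn⟩ := h
    simp only at hP hk hn
    have : P.IsPrime := Ideal.isPrime_of_prime hP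
    have : P.IsMaximal := this.isMaximal hP.ne_zero
    obtain ⟨p, m, hm, hpP, hp, hN⟩ := Ideal.exists_prime_and_absNorm_eq_pow P
    rw [← hn, hN, ArithmeticFunction.vonMangoldt_apply_pow (by omega),
      ArithmeticFunction.vonMangoldt_apply_pow (by omega), ArithmeticFunction.vonMangoldt_apply_prime hp]
    rw [hN] at hn
    rw [hn]
    have hinj : Set.InjOn Prod.fst (TR R n : Set (Ideal R × ℕ)) := by
      rintro ⟨Q, j⟩ h1 ⟨Q', j'⟩ h2 (h3 : Q = Q')
      subst h3
      rw [Finset.mem_coe, mem_TR] at h1 h2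
      have h4 : Ideal.absNorm Q ^ j = Ideal.absNorm Q ^ j' := h1.2.2.trans h2.2.2.symm
      have h5 := Nat.pow_right_injective (two_le_absNorm R h1.1) h4
      rw [h5]
    have e : LR R n = ∑ Q ∈ (TR R n).image Prod.fst, Real.log (Ideal.absNorm Q) :=
      (Finset.sum_image (f := fun Q => Real.log (Ideal.absNorm Q)) hinj).symm
    have hpr : ∀ Q ∈ (TR R n).image Prod.fst, Prime Q ∧ Q ∣ Ideal.span {(p : R)} := by
      intro Q hQ
      rw [Finset.mem_image] at hQ
      obtain ⟨⟨Q', j⟩, h1, rfl⟩ := hQ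
      rw [mem_TR] at h1
      obtain ⟨a1, a2, a3⟩ := h1
      simp only at a1 a2 a3 ⊢
      refine ⟨a1, ?_⟩
      have : Q'.IsPrime := Ideal.isPrime_of_prime a1
      rw [Ideal.dvd_iff_le, Ideal.span_singleton_le_iff_mem]
      have h2 := Ideal.absNorm_mem Q'
      have h3 : ((Ideal.absNorm Q' ^ j : ℕ) : R) ∈ Q' := by
        rw [Nat.cast_pow]; exact Ideal.pow_mem_of_mem _ h2 _ (by omega)
      rw [a3, ← hn, Nat.cast_pow, Nat.cast_pow] at h3
      exact Ideal.IsPrime.mem_of_pow_mem this _ (Ideal.IsPrime.mem_of_pow_mem this _ h3)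
    have hd : ∏ Q ∈ (TR R n).image Prod.fst, Q ∣ Ideal.span {(p : R)} :=
      Finset.prod_primes_dvd _ (fun Q hQ => (hpr Q hQ).1) (fun Q hQ => (hpr Q hQ).2)
    have hd2 := map_dvd Ideal.absNorm hd
    rw [map_prod, Ideal.absNorm_span_natCast] at hd2
    have hle := Nat.le_of_dvd (pow_pos hp.pos _) hd2
    rw [e, ← Real.log_prod, ← Real.log_pow]
    · refine Real.log_le_log ?_ (by exact_mod_cast hle)
      refine Finset.prod_pos fun Q hQ => ?_
      have := two_le_absNorm R (hpr Q hQ).1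
      positivity
    · intro Q hQ
      have := two_le_absNorm R (hpr Q hQ).1
      positivity

theorem LR_prime {p : ℕ} (hp : p.Prime) : LR R p = (SR R p).card * Real.log p := by
  have e : TR R p = (SR R p).image (fun P => (P, 1)) := by
    ext ⟨P, k⟩
    rw [mem_TR, Finset.mem_image]
    simp only [mem_SR, Prod.mk.injEq]
    constructor
    · rintro ⟨h1, h2, h3⟩
      have hk : k = 1 := by
        have h4 : (Ideal.absNorm P ^ k).Prime := by rw [h3]; exact hp
        exact h4.eq_one_of_pow
      subst hk
      exact ⟨P, by simpa using h3, rfl, rfl⟩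
    · rintro ⟨P, h1, rfl, rfl⟩
      refine ⟨?_, le_rfl, by simpa using h1⟩
      refine Ideal.prime_of_isPrime ?_ ?_
      · rintro rfl
        rw [Ideal.absNorm_bot] at h1
        exact hp.ne_zero h1.symm
      · apply Ideal.isPrime_of_irreducible_absNorm
        rw [h1]; exact hp
  unfold LR
  rw [e, Finset.sum_image (by intro a _ b _ h; exact (Prod.mk.inj h).1)]
  rw [Finset.sum_congr rfl (g := fun _ => Real.log p), Finset.sum_const, nsmul_eq_mul]
  intro P hP
  rw [mem_SR] at hP
  simp only [hP]

theorem le_count_iff {I P : Ideal R} (hI : I ≠ 0) (hP : Prime P) (k : ℕ) :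
    k ≤ Multiset.count P (normalizedFactors I) ↔ P ^ k ∣ I := by
  rw [pow_dvd_iff_le_emultiplicity, emultiplicity_eq_count_normalizedFactors hP.irreducible hI, normalize_eq]
  exact Nat.cast_le.symm

theorem log_absNorm {I : Ideal R} (hI : I ≠ 0) : Real.log (Ideal.absNorm I) =
    ∑ P ∈ (normalizedFactors I).toFinset, ∑ _k ∈ Finset.Icc 1 (Multiset.count P (normalizedFactors I)),
      Real.log (Ideal.absNorm P) := by
  have h1 : (normalizedFactors I).prod = I := Ideal.prod_normalizedFactors_eq_self hI
  rw [Finset.prod_multiset_count] at h1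
  have h2 := congrArg Ideal.absNorm h1
  rw [map_prod] at h2
  rw [← h2]
  push_cast
  rw [Real.log_prod]
  · refine Finset.sum_congr rfl fun P hP => ?_
    rw [map_pow, Nat.cast_pow, Real.log_pow, Finset.sum_const, Nat.card_Icc, nsmul_eq_mul]
    simp
  · intro P hP
    rw [Multiset.mem_toFinset] at hP
    have := two_le_absNorm R (prime_of_normalized_factor P hP)
    rw [map_pow]
    positivity

theorem LR_conv (n : ℕ) : ∑ p ∈ n.divisorsAntidiagonal, ((SR R p.1).card : ℝ) * LR R p.2 =
    (SR R n).card * Real.log n := by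
  rcases Nat.eq_zero_or_pos n with rfl | hn
  · simp
  have hR : ((SR R n).card : ℝ) * Real.log n = ∑ I ∈ SR R n, Real.log (Ideal.absNorm I) := by
    rw [Finset.sum_congr rfl (g := fun _ => Real.log n), Finset.sum_const, nsmul_eq_mul]
    intro I hI
    rw [mem_SR] at hI
    simp only [hI]
  have hS0 : ∀ I ∈ SR R n, I ≠ 0 := by
    rintro I hI rfl
    rw [mem_SR] at hI
    simp at hI
    omega
  rw [hR, Finset.sum_congr rfl (fun I hI => log_absNorm R (hS0 I hI))]
  have hL : ∀ p : ℕ × ℕ, ((SR R p.1).card : ℝ) * LR R p.2 =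
      ∑ y ∈ SR R p.1 ×ˢ TR R p.2, Real.log (Ideal.absNorm y.2.1) := by
    intro p
    rw [Finset.sum_product]
    simp only [Finset.sum_const, nsmul_eq_mul, LR]
  simp_rw [hL]
  rw [Finset.sum_sigma']
  simp_rw [Finset.sum_sigma']
  refine Finset.sum_bij (fun x _ => ⟨x.2.1 * x.2.2.1 ^ x.2.2.2, x.2.2.1, x.2.2.2⟩) ?_ ?_ ?_ ?_
  · rintro ⟨⟨a, b⟩, A, P, k⟩ h
    simp only [Finset.mem_sigma, Nat.mem_divisorsAntidiagonal, Finset.mem_product, mem_SR, mem_TR] at h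
    obtain ⟨⟨h1, -⟩, h2, h3, h4, h5⟩ := h
    have hn' : Ideal.absNorm (A * P ^ k) = n := by rw [map_mul, map_pow, h2, h5, h1]
    have h0 : A * P ^ k ≠ 0 := hS0 _ (by rw [mem_SR]; exact hn')
    have hc : k ≤ Multiset.count P (normalizedFactors (A * P ^ k)) := by
      rw [le_count_iff R h0 h3]; exact dvd_mul_left _ _
    simp only [Finset.mem_sigma, mem_SR, Finset.mem_Icc, Multiset.mem_toFinset]
    refine ⟨hn', ?_, h4, hc⟩
    rw [← Multiset.one_le_count_iff_mem]
    omega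
  · rintro ⟨⟨a, b⟩, A, P, k⟩ h ⟨⟨a', b'⟩, A', P', k'⟩ h' e
    simp only [Finset.mem_sigma, Nat.mem_divisorsAntidiagonal, Finset.mem_product, mem_SR, mem_TR] at h h'
    simp only [Sigma.mk.injEq, heq_eq_eq] at e
    obtain ⟨e1, rfl, rfl⟩ := e
    obtain ⟨⟨h1, -⟩, h2, h3, h4, h5⟩ := h
    obtain ⟨⟨h1', -⟩, h2', h3', h4', h5'⟩ := h'
    have e2 : A = A' := mul_right_cancel₀ (pow_ne_zero _ h3.ne_zero) e1
    subst e2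
    subst h2 h2' h5 h5'
    rfl
  · rintro ⟨I, P, k⟩ h
    simp only [Finset.mem_sigma, mem_SR, Finset.mem_Icc, Multiset.mem_toFinset] at h
    obtain ⟨h1, h2, h3, h4⟩ := h
    have hP := prime_of_normalized_factor P h2
    have h0 : I ≠ 0 := hS0 I (by rw [mem_SR]; exact h1)
    rw [le_count_iff R h0 hP] at h4
    obtain ⟨A, rfl⟩ := h4
    refine ⟨⟨⟨Ideal.absNorm A, Ideal.absNorm P ^ k⟩, A, P, k⟩, ?_, ?_⟩
    · simp only [Finset.mem_sigma, Nat.mem_divisorsAntidiagonal, Finset.mem_product, mem_SR, mem_TR]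
      rw [map_mul, map_pow] at h1
      exact ⟨⟨by rw [mul_comm]; exact h1, by omega⟩, trivial, hP, h3, trivial⟩
    · simp only [mul_comm]
  · rintro ⟨⟨a, b⟩, A, P, k⟩ h
    rfl

end
section
open NumberField
variable (K : Type*) [Field K] [NumberField K]

theorem aK_eq (n : ℕ) : aK K n = (SR (𝓞 K) n).card := by
  unfold aK SR
  rw [← Set.ncard_eq_toFinset_card _ (Ideal.finite_setOfPred_absNorm_eq (S := 𝓞 K) n)]
  rfl

/-- The prime ideal theorem (degree one primes). -/
theorem prime_ideal_theorem :
    Tendsto (fun x : ℝ => (∑ p ∈ (Finset.Icc 1 ⌊x⌋₊).filter Nat.Prime, aK K p) / (x / Real.log x))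
      atTop (𝓝 1) := by
  obtain ⟨c, B, hc, hW⟩ := Wf_aK_asymp K
  have hδ : (0 : ℝ) < 1 / (Module.finrank ℚ K : ℝ) := by
    have : 0 < Module.finrank ℚ K := Module.finrank_pos
    positivity
  have h := abstract_pnt (a := aK K) (b := LR (𝓞 K)) (fun n => by unfold aK; positivity)
    (LR_nonneg (𝓞 K)) (D := Module.finrank ℤ (𝓞 K)) (Nat.cast_nonneg _) (LR_le (𝓞 K))
    (fun n => by simp_rw [aK_eq]; exact LR_conv (𝓞 K) n) hδ hc hW
  exact partial_summation (LR_nonneg (𝓞 K)) (D := Module.finrank ℤ (𝓞 K)) (Nat.cast_nonneg _)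
    (LR_le (𝓞 K)) (fun p hp => by rw [aK_eq, LR_prime (𝓞 K) hp]) h
end
end PIT
end

section
open Filter Topology MeasureTheory Set
namespace PIT
section
open NumberField Polynomial UniqueFactorizationMonoid
variable {K : Type*} [Field K] [NumberField K]

theorem exponent_ne_zero (θ : 𝓞 K) (hθ : IntermediateField.adjoin ℚ {(θ : K)} = ⊤) :
    RingOfIntegers.exponent θ ≠ 0 := by
  have hint : IsIntegral ℤ θ := θ.isIntegral
  have hr : Module.finrank ℤ (Algebra.adjoin ℤ {θ}) = Module.finrank ℤ (𝓞 K) := by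
    rw [(Algebra.adjoin.powerBasis' hint).finrank, Algebra.adjoin.powerBasis'_dim, RingOfIntegers.rank]
    have h1 : minpoly ℚ (θ : K) = (minpoly ℤ θ).map (algebraMap ℤ ℚ) := by
      rw [← minpoly.isIntegrallyClosed_eq_field_fractions ℚ K hint]
    have h2 : (minpoly ℚ (θ : K)).natDegree = Module.finrank ℚ K := by
      rw [← IntermediateField.adjoin.finrank (Algebra.IsIntegral.isIntegral (R := ℚ) (θ : K)), hθ,
        IntermediateField.finrank_top']
    rw [← h2, h1, (minpoly.monic hint).natDegree_map]
  have hfin : Finite (𝓞 K ⧸ (Subalgebra.toSubmodule (Algebra.adjoin ℤ {θ}))) :=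
    Submodule.finiteQuotientOfFreeOfRankEq _ hr
  have hpos : 0 < Nat.card (𝓞 K ⧸ (Subalgebra.toSubmodule (Algebra.adjoin ℤ {θ}))) := Nat.card_pos
  rw [RingOfIntegers.exponent_eq_sInf]
  have hne : {d : ℕ | 0 < d ∧ (d : 𝓞 K) ∈ conductor ℤ θ}.Nonempty := by
    refine ⟨Nat.card (𝓞 K ⧸ (Subalgebra.toSubmodule (Algebra.adjoin ℤ {θ}))), hpos, ?_⟩
    rw [mem_conductor_iff]
    intro b
    have h3 : Nat.card (𝓞 K ⧸ (Subalgebra.toSubmodule (Algebra.adjoin ℤ {θ}))) •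
        (Submodule.Quotient.mk b : 𝓞 K ⧸ (Subalgebra.toSubmodule (Algebra.adjoin ℤ {θ}))) = 0 :=
      card_nsmul_eq_zero'
    rw [← Submodule.Quotient.mk_smul, Submodule.Quotient.mk_eq_zero, nsmul_eq_mul] at h3
    exact h3
  exact (Nat.sInf_mem hne).1.ne'

theorem card_norm_eq_card_roots (θ : 𝓞 K) {p : ℕ} [hp : Fact p.Prime]
    (h : ¬ p ∣ RingOfIntegers.exponent θ) :
    Nat.card {I : Ideal (𝓞 K) // Ideal.absNorm I = p} =
      Nat.card {n : ZMod p // ((minpoly ℤ θ).map (Int.castRingHom (ZMod p))).IsRoot n} := by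
  classical
  have h0 : (minpoly ℤ θ).map (Int.castRingHom (ZMod p)) ≠ 0 :=
      Polynomial.map_monic_ne_zero (minpoly.monic θ.isIntegral)
  set e := NumberField.Ideal.primesOverSpanEquivMonicFactorsMod h
  have hmem : ∀ Q : (ZMod p)[X], Q ∈ RingOfIntegers.monicFactorsMod θ p ↔
      Irreducible Q ∧ Q.Monic ∧ Q ∣ (minpoly ℤ θ).map (Int.castRingHom (ZMod p)) := by
    intro Q
    rw [Multiset.mem_toFinset, Polynomial.mem_normalizedFactors_iff h0]
  have hnorm : ∀ P : Ideal.primesOver (Ideal.span {(p : ℤ)}) (𝓞 K),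
      Ideal.absNorm P.1 = p ^ (e P).1.natDegree := by
    intro P
    have h1 := NumberField.Ideal.inertiaDeg_primesOverSpanEquivMonicFactorsMod_symm_apply' h (e P).2
    have h2 : e.symm ⟨(e P).1, (e P).2⟩ = P := e.symm_apply_apply P
    rw [h2] at h1
    have := P.2.2
    have hm : (Ideal.span {(p : ℤ)}).IsMaximal := Int.ideal_span_isMaximal_of_prime p
    have : P.1.IsMaximal := Ideal.primesOver.isMaximal P
    rw [Ideal.absNorm_eq_pow_inertiaDeg' P.1 hp.out, ← h1, Ideal.inertiaDeg'_eq_inertiaDeg]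
  have hlin : ∀ n : {n : ZMod p // ((minpoly ℤ θ).map (Int.castRingHom (ZMod p))).IsRoot n},
      (X - C n.1) ∈ RingOfIntegers.monicFactorsMod θ p := by
    intro n
    rw [hmem]
    exact ⟨irreducible_X_sub_C _, monic_X_sub_C _, dvd_iff_isRoot.2 n.2⟩
  refine (Nat.card_eq_of_bijective
    (fun n : {n : ZMod p // ((minpoly ℤ θ).map (Int.castRingHom (ZMod p))).IsRoot n} =>
      (⟨(e.symm ⟨X - C n.1, hlin n⟩).1, by
        rw [hnorm, Equiv.apply_symm_apply, natDegree_X_sub_C, pow_one]⟩ :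
        {I : Ideal (𝓞 K) // Ideal.absNorm I = p})) ⟨?_, ?_⟩).symm
  · intro n n' hnn
    have h1 := congrArg Subtype.val hnn
    have h2 := e.symm.injective (Subtype.ext h1)
    have h3 := congrArg Subtype.val h2
    simp only [sub_right_inj, C_inj] at h3
    exact Subtype.ext h3
  · rintro ⟨I, hI⟩
    have hIp : I.IsPrime := Ideal.isPrime_of_irreducible_absNorm (by rw [hI]; exact hp.out)
    have hpI : (p : 𝓞 K) ∈ I := by rw [← hI]; exact Ideal.absNorm_mem I
    have hl : I.LiesOver (Ideal.span {(p : ℤ)}) := by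
      constructor
      have hm : (Ideal.span {(p : ℤ)}).IsMaximal := Int.ideal_span_isMaximal_of_prime p
      refine hm.eq_of_le (Ideal.IsPrime.ne_top inferInstance) ?_
      rw [Ideal.span_singleton_le_iff_mem, Ideal.mem_comap]
      simpa using hpI
    set P : Ideal.primesOver (Ideal.span {(p : ℤ)}) (𝓞 K) := ⟨I, hIp, hl⟩
    have hN := hnorm P
    have hd : (e P).1.natDegree = 1 := by
      have : p ^ 1 = p ^ (e P).1.natDegree := by rw [← hN, pow_one]; exact hI.symm
      exact (Nat.pow_right_injective hp.out.two_le this).symm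
    obtain ⟨h1, h2, h3⟩ := (hmem _).1 (e P).2
    have h4 : (e P).1 = X - C (-(e P).1.coeff 0) := by
      rw [C_neg, sub_neg_eq_add]
      exact h2.eq_X_add_C hd
    refine ⟨⟨-(e P).1.coeff 0, ?_⟩, ?_⟩
    · rw [← dvd_iff_isRoot, ← h4]; exact h3
    · apply Subtype.ext
      change (e.symm ⟨X - C (-(e P).1.coeff 0), _⟩).1 = I
      have h5 : (⟨X - C (-(e P).1.coeff 0), by rw [← h4]; exact (e P).2⟩ : RingOfIntegers.monicFactorsMod θ p) = e P :=
        Subtype.ext h4.symm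
      rw [h5, Equiv.symm_apply_apply]
end
end PIT
end

section
open Filter Topology MeasureTheory Set
namespace PIT
section
open NumberField Polynomial

theorem frob_fixed {F : Type*} [CommRing F] [IsDomain F] {p : ℕ} [hp : Fact p.Prime] (ι : ZMod p →+* F)
    (x : F) : x ^ p = x ↔ ∃ n, ι n = x := by
  classical
  constructor
  · intro h
    by_contra hn
    have h2 : (X ^ p - X : F[X]).natDegree = p := by
      rw [natDegree_sub_eq_left_of_natDegree_lt, natDegree_X_pow]
      rw [natDegree_X_pow, natDegree_X]
      exact hp.out.one_lt
    have h1 : (X ^ p - X : F[X]) ≠ 0 := by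
      intro h0
      rw [h0, natDegree_zero] at h2
      exact hp.out.ne_zero h2.symm
    have h3 : insert x (Finset.univ.image ι) ⊆ (X ^ p - X : F[X]).roots.toFinset := by
      intro y hy
      rw [Multiset.mem_toFinset, mem_roots h1]
      rw [Finset.mem_insert, Finset.mem_image] at hy
      rcases hy with rfl | ⟨n, -, rfl⟩
      · simp [h]
      · simp [← map_pow, ZMod.pow_card]
    have h4 := Finset.card_le_card h3
    rw [Finset.card_insert_of_notMem (by simpa using hn), Finset.card_image_of_injective _ ι.injective,
      Finset.card_univ, ZMod.card] at h4
    have h5 := (Multiset.toFinset_card_le (X ^ p - X : F[X]).roots).trans (card_roots' _)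
    omega
  · rintro ⟨n, rfl⟩
    rw [← map_pow, ZMod.pow_card]

theorem count_fixed {S : Type*} [CommRing S] (Q : Ideal S) [Q.IsPrime] {p : ℕ} [hp : Fact p.Prime]
    (s : S → S) (hs : ∀ x, s x - x ^ p ∈ Q) (Ω : Finset S) (hΩ : ∀ β ∈ Ω, s β ∈ Ω)
    (hinj : ∀ β ∈ Ω, ∀ γ ∈ Ω, β - γ ∈ Q → β = γ) (ι : ZMod p →+* S ⧸ Q) :
    Nat.card {n : ZMod p // ∃ β ∈ Ω, ι n = Ideal.Quotient.mk Q β} = Nat.card {β : S // β ∈ Ω ∧ s β = β} := by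
  have h1 : ∀ β ∈ Ω, (s β = β ↔ ∃ n, ι n = Ideal.Quotient.mk Q β) := by
    intro β hβ
    rw [← frob_fixed, ← map_pow]
    have h2 : Ideal.Quotient.mk Q (s β) = Ideal.Quotient.mk Q (β ^ p) := Ideal.Quotient.eq.2 (hs β)
    rw [← h2]
    constructor
    · intro h; rw [h]
    · intro h
      exact hinj _ (hΩ β hβ) _ hβ (Ideal.Quotient.eq.1 h)
  choose f hf1 hf2 using fun n : {n : ZMod p // ∃ β ∈ Ω, ι n = Ideal.Quotient.mk Q β} => n.2
  refine Nat.card_eq_of_bijective (fun n => ⟨f n, hf1 n, (h1 _ (hf1 n)).2 ⟨n, hf2 n⟩⟩) ⟨?_, ?_⟩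
  · intro n n' h
    have h2 : f n = f n' := congrArg Subtype.val h
    apply Subtype.ext
    apply ι.injective
    rw [hf2, hf2, h2]
  · rintro ⟨β, h2, h3⟩
    obtain ⟨n, hn⟩ := (h1 β h2).1 h3
    refine ⟨⟨n, β, h2, hn⟩, Subtype.ext ?_⟩
    apply hinj _ (hf1 _) _ h2
    rw [← Ideal.Quotient.eq, ← hf2, hn]

theorem eval_red {S : Type*} [CommRing S] (Q : Ideal S) {p : ℕ} (ι : ZMod p →+* S ⧸ Q) (g : ℤ[X]) (n : ZMod p) :
    ι (eval n (g.map (Int.castRingHom (ZMod p)))) =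
      eval (ι n) ((g.map (algebraMap ℤ S)).map (Ideal.Quotient.mk Q)) := by
  rw [Polynomial.map_map, ← Polynomial.eval_map_apply, Polynomial.map_map]
  congr 2
  exact RingHom.ext_int _ _

variable (L : Type*) [Field L] [NumberField L]

theorem bad_primes (Ω : Finset (𝓞 L)) : ∃ M : ℕ, M ≠ 0 ∧ ∀ p : ℕ, p.Prime → ¬ p ∣ M →
    ∀ Q : Ideal (𝓞 L), Q.IsPrime → (p : 𝓞 L) ∈ Q → ∀ β ∈ Ω, ∀ γ ∈ Ω, β - γ ∈ Q → β = γ := by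
  classical
  set Δ : 𝓞 L := ∏ z ∈ Ω.offDiag, (z.1 - z.2)
  refine ⟨Ideal.absNorm (Ideal.span {Δ}), ?_, ?_⟩
  · rw [Ne, Ideal.absNorm_eq_zero_iff, Ideal.span_singleton_eq_bot, Finset.prod_eq_zero_iff]
    rintro ⟨z, hz, h0⟩
    rw [Finset.mem_offDiag] at hz
    exact hz.2.2 (sub_eq_zero.1 h0)
  · intro p hp hpM Q hQ hpQ β hβ γ hγ h
    by_contra hne
    have h1 : Δ ∈ Q := by
      apply Ideal.mem_of_dvd Q ?_ h
      exact Finset.dvd_prod_of_mem (fun z : 𝓞 L × 𝓞 L => z.1 - z.2) (a := (β, γ))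
        (Finset.mem_offDiag.2 ⟨hβ, hγ, hne⟩)
    have h2 : ((Ideal.absNorm (Ideal.span {Δ}) : ℕ) : 𝓞 L) ∈ Q :=
      (Ideal.span_singleton_le_iff_mem Q).2 h1 (Ideal.absNorm_mem _)
    have hc := Nat.isCoprime_iff_coprime.2 ((Nat.Prime.coprime_iff_not_dvd hp).2 hpM)
    obtain ⟨a, b, hab⟩ := hc
    apply hQ.ne_top
    rw [Ideal.eq_top_iff_one]
    have h3 : (1 : 𝓞 L) = (a : 𝓞 L) * (p : 𝓞 L) + (b : 𝓞 L) * ((Ideal.absNorm (Ideal.span {Δ}) : ℕ) : 𝓞 L) := by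
      have := congrArg (Int.cast : ℤ → 𝓞 L) hab
      push_cast at this
      exact this.symm
    rw [h3]
    exact Q.add_mem (Q.mul_mem_left _ hpQ) (Q.mul_mem_left _ h2)

variable [IsGalois ℚ L]

theorem exists_frob (p : ℕ) (hp : p.Prime) : ∃ Q : Ideal (𝓞 L), Q.IsPrime ∧ (p : 𝓞 L) ∈ Q ∧
    Nonempty (ZMod p →+* 𝓞 L ⧸ Q) ∧
    ∃ σ : L ≃ₐ[ℚ] L, ∀ x : 𝓞 L, σ • x - x ^ p ∈ Q := by
  haveI : Fact p.Prime := ⟨hp⟩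
  have hm : (Ideal.span {(p : ℤ)}).IsMaximal := Int.ideal_span_isMaximal_of_prime p
  obtain ⟨Q, hQ, hl⟩ := Ideal.exists_maximal_ideal_liesOver_of_isIntegral (S := 𝓞 L) (Ideal.span {(p : ℤ)})
  have hu : Q.under ℤ = Ideal.span {(p : ℤ)} := hl.over.symm
  have hpQ : (p : 𝓞 L) ∈ Q := by
    have : (p : ℤ) ∈ Q.under ℤ := by rw [hu]; exact Ideal.mem_span_singleton_self _
    simpa [Ideal.mem_comap] using this
  have hQ0 : Q ≠ ⊥ := by
    rintro rfl
    have h0 : (p : 𝓞 L) = 0 := by simpa using hpQ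
    exact hp.ne_zero (by exact_mod_cast h0)
  haveI : Finite (𝓞 L ⧸ Q) := Ring.HasFiniteQuotients.finiteQuotient hQ0
  haveI := hQ.isPrime
  obtain ⟨σ, hσ⟩ := IsArithFrobAt.exists_of_isInvariant ℤ (L ≃ₐ[ℚ] L) Q
  refine ⟨Q, hQ.isPrime, hpQ, ⟨?_⟩, σ, fun x => ?_⟩
  · refine (Ideal.Quotient.lift (Ideal.span {(p : ℤ)}) (Int.castRingHom (𝓞 L ⧸ Q)) ?_).comp
      (Int.quotientSpanNatEquivZMod p).symm.toRingHom
    intro a ha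
    rw [Ideal.mem_span_singleton] at ha
    obtain ⟨c, rfl⟩ := ha
    have h0 : ((p : ℕ) : 𝓞 L ⧸ Q) = 0 := by
      have := Ideal.Quotient.eq_zero_iff_mem.2 hpQ
      simpa using this
    simp [h0]
  · have := hσ x
    rw [hu] at this
    rw [Nat.card_congr (Int.quotientSpanNatEquivZMod p).toEquiv, Nat.card_zmod] at this
    exact this
end
end PIT
end

section
open Filter Topology MeasureTheory Set
namespace PIT
section
open NumberField Polynomial

/-- sums over primes up to x, normalised -/
noncomputable def pavg (a : ℕ → ℝ) (x : ℝ) : ℝ :=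
  (∑ p ∈ (Finset.Icc 1 ⌊x⌋₊).filter Nat.Prime, a p) / (x / Real.log x)

theorem pavg_congr (a b : ℕ → ℝ) (M : ℕ) (hM : M ≠ 0)
    (h : ∀ p : ℕ, p.Prime → ¬ p ∣ M → a p = b p) (l : ℝ)
    (ha : Tendsto (pavg a) atTop (𝓝 l)) : Tendsto (pavg b) atTop (𝓝 l) := by
  have hinf : Tendsto (fun x : ℝ => x / Real.log x) atTop atTop := by
    have h1 : Tendsto (fun x : ℝ => Real.log x / x) atTop (𝓝[>] 0) := by
      rw [tendsto_nhdsWithin_iff]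
      constructor
      · have := Real.isLittleO_log_id_atTop.tendsto_div_nhds_zero
        exact this
      · filter_upwards [eventually_gt_atTop 1] with x hx
        exact div_pos (Real.log_pos hx) (by linarith)
    have h2 := h1.inv_tendsto_nhdsGT_zero
    refine h2.congr fun x => ?_
    simp
  have hdiff : Tendsto (fun x => pavg b x - pavg a x) atTop (𝓝 0) := by
    have hC : Tendsto (fun x : ℝ => (∑ p ∈ M.primeFactors, |b p - a p|) / (x / Real.log x)) atTop (𝓝 0) :=
      tendsto_const_nhds.div_atTop hinf
    refine squeeze_zero_norm' ?_ hC
    filter_upwards [hinf.eventually_gt_atTop 0] with x hx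
    rw [pavg, pavg, ← sub_div, ← Finset.sum_sub_distrib, norm_div, Real.norm_of_nonneg hx.le]
    refine div_le_div_of_nonneg_right ?_ hx.le
    refine (norm_sum_le _ _).trans ?_
    simp only [Real.norm_eq_abs]
    rw [← Finset.sum_filter_add_sum_filter_not _ (fun p => p ∣ M)]
    rw [Finset.sum_eq_zero (s := Finset.filter (fun p => ¬ p ∣ M) _), add_zero]
    · refine Finset.sum_le_sum_of_subset_of_nonneg ?_ (fun _ _ _ => abs_nonneg _)
      intro p hp
      simp only [Finset.mem_filter] at hp
      exact Nat.mem_primeFactors.2 ⟨hp.1.2, hp.2, hM⟩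
    · intro p hp
      simp only [Finset.mem_filter] at hp
      rw [h p hp.1.2 hp.2]; simp
  have := ha.add hdiff
  simpa using this

variable (L : Type*) [Field L] [NumberField L] [IsGalois ℚ L]

open Classical in
/-- a chosen Frobenius element -/
noncomputable def frob (p : ℕ) : L ≃ₐ[ℚ] L :=
  if hp : p.Prime then (exists_frob L p hp).choose_spec.2.2.2.choose else 1

theorem frob_spec (p : ℕ) (hp : p.Prime) : ∃ Q : Ideal (𝓞 L), Q.IsPrime ∧ (p : 𝓞 L) ∈ Q ∧
    Nonempty (ZMod p →+* 𝓞 L ⧸ Q) ∧ ∀ x : 𝓞 L, frob L p • x - x ^ p ∈ Q := by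
  have h := (exists_frob L p hp).choose_spec
  refine ⟨_, h.1, h.2.1, h.2.2.1, ?_⟩
  rw [frob, dif_pos hp]
  exact h.2.2.2.choose_spec

variable {L}
theorem minpoly_prod (θ : 𝓞 L) (Ω : Finset (𝓞 L)) (hΩ : ∀ β, β ∈ Ω ↔ β ∈ MulAction.orbit (L ≃ₐ[ℚ] L) θ) :
    (minpoly ℤ θ).map (algebraMap ℤ (𝓞 L)) = ∏ β ∈ Ω, (X - C β) := by
  classical
  have hinj : Function.Injective (algebraMap (𝓞 L) L) := RingOfIntegers.coe_injective
  apply Polynomial.map_injective _ hinj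
  rw [Polynomial.map_map, Polynomial.map_prod]
  have h1 : minpoly ℚ (θ : L) = (minpoly ℤ θ).map (algebraMap ℤ ℚ) := by
      rw [← minpoly.isIntegrallyClosed_eq_field_fractions ℚ L θ.isIntegral]
  have h2 : (minpoly ℤ θ).map ((algebraMap (𝓞 L) L).comp (algebraMap ℤ (𝓞 L))) =
      (minpoly ℚ (θ : L)).map (algebraMap ℚ L) := by
    rw [h1, Polynomial.map_map]
    congr 1
    exact RingHom.ext_int _ _
  rw [h2]
  have hθ : IsIntegral ℚ (θ : L) := Algebra.IsIntegral.isIntegral _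
  have hs : ((minpoly ℚ (θ : L)).map (algebraMap ℚ L)).Splits := Normal.splits inferInstance (θ : L)
  have hm : ((minpoly ℚ (θ : L)).map (algebraMap ℚ L)).Monic := (minpoly.monic hθ).map _
  have hsep : ((minpoly ℚ (θ : L)).map (algebraMap ℚ L)).Separable :=
    Polynomial.Separable.map (IsGalois.separable ℚ (θ : L))
  have hnd := Polynomial.nodup_roots hsep
  have hprod := hs.eq_prod_roots_of_monic hm
  have hroots : ((minpoly ℚ (θ : L)).map (algebraMap ℚ L)).roots = (Ω.image (algebraMap (𝓞 L) L)).val := by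
    rw [Multiset.Nodup.ext hnd (Finset.nodup _)]
    intro y
    rw [Finset.mem_val, Finset.mem_image, mem_roots hm.ne_zero]
    have h3 : ((minpoly ℚ (θ : L)).map (algebraMap ℚ L)).IsRoot y ↔ IsConjRoot ℚ (θ : L) y := by
      rw [isConjRoot_iff_mem_minpoly_rootSet hθ, mem_rootSet, aeval_def, eval₂_eq_eval_map]
      simp [minpoly.ne_zero hθ]
    rw [h3, isConjRoot_iff_exists_algEquiv]
    constructor
    · rintro ⟨σ, hσ⟩
      refine ⟨σ⁻¹ • θ, (hΩ _).2 ⟨_, rfl⟩, ?_⟩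
      change σ⁻¹ (θ : L) = y
      rw [← hσ]
      exact σ.symm_apply_apply y
    · rintro ⟨β, hβ, rfl⟩
      obtain ⟨σ, rfl⟩ := (hΩ _).1 hβ
      refine ⟨σ⁻¹, ?_⟩
      exact σ.symm_apply_apply (θ : L)
  rw [hprod, hroots, ← Finset.prod_eq_multiset_prod, Finset.prod_image (fun _ _ _ _ h => hinj h)]
  simp

theorem card_roots_eq (θ : 𝓞 L) : ∃ M : ℕ, M ≠ 0 ∧ ∀ p : ℕ, p.Prime → ¬ p ∣ M →
    Nat.card {n : ZMod p // ((minpoly ℤ θ).map (Int.castRingHom (ZMod p))).IsRoot n} =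
    Nat.card {β : 𝓞 L // β ∈ MulAction.orbit (L ≃ₐ[ℚ] L) θ ∧ frob L p • β = β} := by
  classical
  have hfin : (MulAction.orbit (L ≃ₐ[ℚ] L) θ).Finite := Set.finite_range _
  set Ω := hfin.toFinset with hΩdef
  have hΩ : ∀ β, β ∈ Ω ↔ β ∈ MulAction.orbit (L ≃ₐ[ℚ] L) θ := fun β => hfin.mem_toFinset
  obtain ⟨M, hM, hbad⟩ := bad_primes L Ω
  refine ⟨M, hM, fun p hp hpM => ?_⟩
  have : Fact p.Prime := ⟨hp⟩
  obtain ⟨Q, hQ, hpQ, ⟨ι⟩, hfr⟩ := frob_spec L p hp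
  have h1 := count_fixed Q (fun x => frob L p • x) hfr Ω
    (fun β hβ => by rw [hΩ] at hβ ⊢; exact MulAction.mem_orbit_of_mem_orbit _ hβ)
    (hbad p hp hpM Q hQ hpQ) ι
  simp only [hΩ] at h1
  rw [← h1]
  refine Nat.card_congr (Equiv.subtypeEquivRight fun n => ?_)
  have h2 := eval_red Q ι (minpoly ℤ θ) n
  rw [minpoly_prod θ Ω hΩ, Polynomial.map_prod, eval_prod] at h2
  rw [IsRoot.def, ← map_eq_zero_iff ι ι.injective, h2, Finset.prod_eq_zero_iff]
  simp only [Polynomial.map_sub, map_X, map_C, eval_sub, eval_X, eval_C, sub_eq_zero, hΩ]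

theorem adjoin_top_alg {E : Type*} [Field E] (a1 a2 : Algebra ℚ E) (S : Set E)
    (h : @IntermediateField.adjoin ℚ _ E _ a1 S = ⊤) : @IntermediateField.adjoin ℚ _ E _ a2 S = ⊤ := by
  cases Subsingleton.elim a1 a2
  exact h

theorem good_theta (θ : 𝓞 L) : Tendsto (pavg fun p =>
    (Nat.card {β : 𝓞 L // β ∈ MulAction.orbit (L ≃ₐ[ℚ] L) θ ∧ frob L p • β = β} : ℝ)) atTop (𝓝 1) := by
  set E := IntermediateField.adjoin ℚ {(θ : L)} with hE
  have hEint : IsIntegral ℤ (IntermediateField.AdjoinSimple.gen ℚ (θ : L)) := by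
    have h0 : IsIntegral ℤ (θ : L) := θ.isIntegral_coe
    refine (isIntegral_algebraMap_iff (R := ℤ) (algebraMap E L).injective).1 ?_
    rw [IntermediateField.AdjoinSimple.algebraMap_gen ℚ (θ : L)]
    exact h0
  set θE : 𝓞 E := ⟨IntermediateField.AdjoinSimple.gen ℚ (θ : L), hEint⟩ with hθE
  have htop : IntermediateField.adjoin ℚ {(θE : E)} = ⊤ := by
    refine adjoin_top_alg E.algebra' _ _ ?_
    apply IntermediateField.map_injective E.val
    rw [IntermediateField.adjoin_map, ← AlgHom.fieldRange_eq_map, IntermediateField.fieldRange_val,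
      Set.image_singleton]
    rfl
  have hmin : minpoly ℤ θE = minpoly ℤ θ := by
    rw [← minpoly.algebraMap_eq (A := ℤ) (B := 𝓞 E) (B' := E) RingOfIntegers.coe_injective,
      ← minpoly.algebraMap_eq (A := ℤ) (B := 𝓞 L) (B' := L) RingOfIntegers.coe_injective,
      ← minpoly.algebraMap_eq (A := ℤ) (B := E) (B' := L) (algebraMap E L).injective]
    rfl
  obtain ⟨M, hM, h⟩ := card_roots_eq θ
  refine pavg_congr _ _ (M * RingOfIntegers.exponent θE) (mul_ne_zero hM (exponent_ne_zero θE htop)) ?_ 1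
    (prime_ideal_theorem E)
  intro p hp hpM
  have : Fact p.Prime := ⟨hp⟩
  rw [aK, card_norm_eq_card_roots θE (fun h => hpM (Dvd.dvd.mul_left h _)), hmin,
    h p hp (fun h => hpM (Dvd.dvd.mul_right h _))]
end
end PIT
end

section
open Filter Topology MeasureTheory Set
namespace PIT
section
open NumberField Polynomial

theorem orbit_fix_card {G X : Type*} [Group G] [MulAction G X] (v : X) (H : Subgroup G)
    (hH : MulAction.stabilizer G v = H) (σ : G) :
    Nat.card {w : X // w ∈ MulAction.orbit G v ∧ σ • w = w} = Nat.card {q : G ⧸ H // σ • q = q} := by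
  subst hH
  symm
  refine Nat.card_eq_of_bijective (fun q => ⟨MulAction.ofQuotientStabilizer G v q.1,
    MulAction.ofQuotientStabilizer_mem_orbit G v q.1, by
      rw [← MulAction.ofQuotientStabilizer_smul, q.2]⟩) ⟨?_, ?_⟩
  · intro q q' h
    exact Subtype.ext (MulAction.injective_ofQuotientStabilizer G v (congrArg Subtype.val h))
  · rintro ⟨w, ⟨g, rfl⟩, hw⟩
    refine ⟨⟨(g : G ⧸ MulAction.stabilizer G v), ?_⟩, ?_⟩
    · apply MulAction.injective_ofQuotientStabilizer G v
      rw [MulAction.ofQuotientStabilizer_smul]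
      exact hw
    · rfl

theorem fix_decomp {G X : Type*} [Group G] [MulAction G X] [Finite X] (σ : G)
    [Fintype (MulAction.orbitRel.Quotient G X)] :
    Nat.card {w : X // σ • w = w} = ∑ ω : MulAction.orbitRel.Quotient G X,
      Nat.card {w : X // w ∈ MulAction.orbit G ω.out ∧ σ • w = w} := by
  rw [← Nat.card_sigma]
  refine Nat.card_congr ((Equiv.sigmaFiberEquiv (fun w : {w : X // σ • w = w} =>
    (Quotient.mk'' w.1 : MulAction.orbitRel.Quotient G X))).symm.trans
      (Equiv.sigmaCongrRight fun ω => ?_))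
  refine (Equiv.subtypeSubtypeEquivSubtypeInter _ (fun w : X => (Quotient.mk'' w : MulAction.orbitRel.Quotient G X) = ω)).trans
    (Equiv.subtypeEquivRight fun w => ?_)
  rw [and_comm, ← MulAction.orbitRel.Quotient.mem_orbit, MulAction.orbitRel.Quotient.orbit_eq_orbit_out _ Quotient.out_eq']

variable {L : Type*} [Field L] [NumberField L] [IsGalois ℚ L]

theorem exists_theta (H : Subgroup (L ≃ₐ[ℚ] L)) :
    ∃ θ : 𝓞 L, MulAction.stabilizer (L ≃ₐ[ℚ] L) θ = H := by
  obtain ⟨α, hα⟩ := Field.exists_primitive_element ℚ (IntermediateField.fixedField H)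
  replace hα := adjoin_top_alg _ (IntermediateField.fixedField H).algebra' _ hα
  have hE : IntermediateField.adjoin ℚ {(α : L)} = IntermediateField.fixedField H := by
    have h1 := congrArg (IntermediateField.map (IntermediateField.fixedField H).val) hα
    rw [IntermediateField.adjoin_map, ← AlgHom.fieldRange_eq_map, IntermediateField.fieldRange_val,
      Set.image_singleton] at h1
    exact h1
  have halg : IsAlgebraic ℤ (α : L) :=
    (IsFractionRing.isAlgebraic_iff ℤ ℚ L).2 (Algebra.IsAlgebraic.isAlgebraic (α : L))
  obtain ⟨y, hy, hint⟩ := halg.exists_integral_multiple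
  obtain ⟨θ, hθ⟩ : ∃ θ : 𝓞 L, (θ : L) = y • (α : L) := ⟨⟨y • (α : L), hint⟩, rfl⟩
  refine ⟨θ, ?_⟩
  ext g
  have h2 : g ∈ MulAction.stabilizer (L ≃ₐ[ℚ] L) θ ↔ g (α : L) = α := by
    rw [MulAction.mem_stabilizer_iff, RingOfIntegers.ext_iff]
    change g (θ : L) = (θ : L) ↔ _
    rw [hθ, map_zsmul]
    constructor
    · intro h
      exact smul_right_injective L hy h
    · intro h; rw [h]
  rw [h2]
  conv_rhs => rw [← IntermediateField.fixingSubgroup_fixedField H, ← hE, IntermediateField.mem_fixingSubgroup_iff]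
  constructor
  · intro h x hx
    have h3 : IntermediateField.adjoin ℚ {(α : L)} ≤ IntermediateField.fixedField (Subgroup.zpowers g) := by
      rw [IntermediateField.adjoin_le_iff, Set.singleton_subset_iff, SetLike.mem_coe,
        IntermediateField.mem_fixedField_iff]
      have h4 : Subgroup.zpowers g ≤ MulAction.stabilizer (L ≃ₐ[ℚ] L) (α : L) := by
        rw [Subgroup.zpowers_le]; exact h
      intro f hf
      exact h4 hf
    exact (IntermediateField.mem_fixedField_iff _ _).1 (h3 hx) g (Subgroup.mem_zpowers g)
  · intro h
    exact h _ (IntermediateField.mem_adjoin_simple_self ℚ (α : L))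

theorem pavg_add (a b : ℕ → ℝ) (x : ℝ) : pavg (fun p => a p + b p) x = pavg a x + pavg b x := by
  simp only [pavg, Finset.sum_add_distrib, add_div]

theorem pavg_mul (c : ℝ) (a : ℕ → ℝ) (x : ℝ) : pavg (fun p => c * a p) x = c * pavg a x := by
  simp only [pavg, ← Finset.mul_sum, mul_div_assoc]

theorem pavg_sum {ι : Type*} (s : Finset ι) (a : ι → ℕ → ℝ) (x : ℝ) :
    pavg (fun p => ∑ i ∈ s, a i p) x = ∑ i ∈ s, pavg (a i) x := by
  simp only [pavg]
  rw [Finset.sum_comm, Finset.sum_div]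

theorem good_fix (X : Type*) [MulAction (L ≃ₐ[ℚ] L) X] [Finite X] :
    Tendsto (pavg fun p => (Nat.card {w : X // frob L p • w = w} : ℝ)) atTop
      (𝓝 ((∑ σ : L ≃ₐ[ℚ] L, (Nat.card {w : X // σ • w = w} : ℝ)) / Nat.card (L ≃ₐ[ℚ] L))) := by
  classical
  have : Fintype X := Fintype.ofFinite X
  have : Fintype (MulAction.orbitRel.Quotient (L ≃ₐ[ℚ] L) X) := Fintype.ofFinite _
  have hB := MulAction.sum_card_fixedBy_eq_card_orbits_mul_card_group (L ≃ₐ[ℚ] L) X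
  have hB' : (∑ σ : L ≃ₐ[ℚ] L, (Nat.card {w : X // σ • w = w} : ℝ)) / Nat.card (L ≃ₐ[ℚ] L) =
      ∑ ω : MulAction.orbitRel.Quotient (L ≃ₐ[ℚ] L) X, (1 : ℝ) := by
    have h0 : (Nat.card (L ≃ₐ[ℚ] L) : ℝ) ≠ 0 := by exact_mod_cast Nat.card_pos.ne'
    rw [div_eq_iff h0]
    simp only [Finset.sum_const, Finset.card_univ, nsmul_eq_mul, mul_one]
    rw [Nat.card_eq_fintype_card (α := L ≃ₐ[ℚ] L)]
    norm_cast
    refine Eq.trans ?_ (hB.trans ?_)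
    · refine Finset.sum_congr rfl fun σ _ => ?_
      rw [← Nat.card_eq_fintype_card]; rfl
    · congr 1
  rw [hB']
  have h1 : ∀ ω : MulAction.orbitRel.Quotient (L ≃ₐ[ℚ] L) X, Tendsto (pavg fun p =>
      (Nat.card {w : X // w ∈ MulAction.orbit (L ≃ₐ[ℚ] L) ω.out ∧ frob L p • w = w} : ℝ)) atTop (𝓝 1) := by
    intro ω
    obtain ⟨θ, hθ⟩ := exists_theta (MulAction.stabilizer (L ≃ₐ[ℚ] L) ω.out)
    have h2 := good_theta θ
    simp_rw [orbit_fix_card θ _ hθ] at h2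
    simp_rw [orbit_fix_card ω.out _ rfl]
    exact h2
  have h3 := tendsto_finsetSum Finset.univ (fun ω _ => h1 ω)
  refine h3.congr fun x => ?_
  rw [← pavg_sum]
  congr 1
  funext p
  rw [fix_decomp]
  push_cast
  rfl

theorem good_fix_pow (X : Type*) [MulAction (L ≃ₐ[ℚ] L) X] [Finite X] (k : ℕ) :
    Tendsto (pavg fun p => (Nat.card {w : X // frob L p • w = w} : ℝ) ^ k) atTop
      (𝓝 ((∑ σ : L ≃ₐ[ℚ] L, (Nat.card {w : X // σ • w = w} : ℝ) ^ k) / Nat.card (L ≃ₐ[ℚ] L))) := by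
  have h : ∀ σ : L ≃ₐ[ℚ] L, (Nat.card {w : X // σ • w = w} : ℝ) ^ k =
      Nat.card {w : Fin k → X // σ • w = w} := by
    intro σ
    rw [← Nat.cast_pow]
    congr 1
    rw [← Nat.card_fin k, ← Nat.card_fun, Nat.card_fin]
    refine Nat.card_congr ⟨fun w => ⟨fun i => (w i).1, funext fun i => (w i).2⟩,
      fun w i => ⟨w.1 i, congrFun w.2 i⟩, fun _ => rfl, fun _ => rfl⟩
  simp_rw [h]
  exact good_fix (Fin k → X)

theorem good_ind (X : Type*) [MulAction (L ≃ₐ[ℚ] L) X] [Finite X] (ν : ℕ) :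
    Tendsto (pavg fun p => if Nat.card {w : X // frob L p • w = w} = ν then (1 : ℝ) else 0) atTop
      (𝓝 ((Nat.card {σ : L ≃ₐ[ℚ] L // Nat.card {w : X // σ • w = w} = ν} : ℝ) / Nat.card (L ≃ₐ[ℚ] L))) := by
  classical
  set P : ℝ[X] := Lagrange.interpolate (Finset.range (Nat.card X + 1)) (fun i : ℕ => (i : ℝ))
    (fun i => if i = ν then (1 : ℝ) else 0) with hP
  have hPe : ∀ σ : L ≃ₐ[ℚ] L, (if Nat.card {w : X // σ • w = w} = ν then (1 : ℝ) else 0) =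
      ∑ k ∈ Finset.range (P.natDegree + 1), P.coeff k * (Nat.card {w : X // σ • w = w} : ℝ) ^ k := by
    intro σ
    rw [← eval_eq_sum_range, hP]
    have hle : Nat.card {w : X // σ • w = w} ≤ Nat.card X :=
      Nat.card_le_card_of_injective _ Subtype.val_injective
    rw [Lagrange.eval_interpolate_at_node (v := fun i : ℕ => (i : ℝ)) _ (fun a _ b _ hab => Nat.cast_injective hab)
      (Finset.mem_range.2 (Nat.lt_succ_of_le hle))]
  have hlim : (Nat.card {σ : L ≃ₐ[ℚ] L // Nat.card {w : X // σ • w = w} = ν} : ℝ) / Nat.card (L ≃ₐ[ℚ] L) =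
      ∑ k ∈ Finset.range (P.natDegree + 1), P.coeff k *
        ((∑ σ : L ≃ₐ[ℚ] L, (Nat.card {w : X // σ • w = w} : ℝ) ^ k) / Nat.card (L ≃ₐ[ℚ] L)) := by
    simp_rw [← mul_div_assoc, Finset.mul_sum]
    rw [← Finset.sum_div, Finset.sum_comm]
    simp_rw [← hPe]
    rw [Finset.sum_boole, Nat.card_eq_fintype_card, Fintype.card_subtype]
  rw [hlim]
  have h3 := tendsto_finsetSum (Finset.range (P.natDegree + 1))
    (fun k _ => (good_fix_pow (L := L) X k).const_mul (P.coeff k))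
  refine h3.congr fun x => ?_
  simp_rw [← pavg_mul]
  rw [← pavg_sum]
  simp_rw [← hPe]
end
end PIT
end

section
open Filter Topology MeasureTheory Set
namespace PIT
section
open NumberField Polynomial

theorem scaled_minpoly {L : Type*} [Field L] [NumberField L] (f : ℚ[X]) (hirr : Irreducible f)
    (α : L) (hα : aeval α f = 0) (y : ℤ) (hy : y ≠ 0) (θ : 𝓞 L) (hθ : (θ : L) = y • α) :
    ∃ A B : ℤ, A ≠ 0 ∧ B ≠ 0 ∧ ∀ m v : ℤ, (v : ℚ) = f.eval (m : ℚ) →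
      B * (minpoly ℤ θ).eval (y * m) = A * v := by
  have h1 : minpoly ℚ (θ : L) = (minpoly ℤ θ).map (algebraMap ℤ ℚ) := by
    rw [← minpoly.isIntegrallyClosed_eq_field_fractions ℚ L θ.isIntegral]
  have hyQ : (y : ℚ) ≠ 0 := by exact_mod_cast hy
  have hθi : IsIntegral ℚ (θ : L) := Algebra.IsIntegral.isIntegral _
  have : Invertible (y : ℚ) := invertibleOfNonzero hyQ
  set e := algEquivCMulXAddC (y : ℚ) 0 with he
  have he2 : ∀ q : ℚ[X], e q = q.comp (C (y : ℚ) * X) := by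
    intro q
    simp [he, algEquivCMulXAddC, comp, aeval_def]
  have hirr2 : Irreducible (e (minpoly ℚ (θ : L))) :=
    (MulEquiv.irreducible_iff e).2 (minpoly.irreducible hθi)
  have hz : aeval α (e (minpoly ℚ (θ : L))) = 0 := by
    rw [he2, aeval_comp]
    have : aeval α (C (y : ℚ) * X) = (θ : L) := by
      simp [hθ]
    rw [this, minpoly.aeval]
  have h2 := (minpoly.eq_of_irreducible hirr2 hz).trans (minpoly.eq_of_irreducible hirr hα).symm
  rw [he2] at h2 hirr2
  set a := ((minpoly ℚ (θ : L)).comp (C (y : ℚ) * X)).leadingCoeff⁻¹ with ha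
  set b := f.leadingCoeff⁻¹ with hb
  have ha0 : a ≠ 0 := inv_ne_zero (leadingCoeff_ne_zero.2 hirr2.ne_zero)
  have hb0 : b ≠ 0 := inv_ne_zero (leadingCoeff_ne_zero.2 hirr.ne_zero)
  refine ⟨b.num * a.den, a.num * b.den, mul_ne_zero (Rat.num_ne_zero.2 hb0) (by exact_mod_cast a.den_ne_zero),
    mul_ne_zero (Rat.num_ne_zero.2 ha0) (by exact_mod_cast b.den_ne_zero), fun m v hv => ?_⟩
  have h3 := congrArg (eval (m : ℚ)) h2
  have h4 : eval ((y : ℚ) * m) ((minpoly ℤ θ).map (algebraMap ℤ ℚ)) = (((minpoly ℤ θ).eval (y * m) : ℤ) : ℚ) := by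
    have := eval_intCast_map (algebraMap ℤ ℚ) (minpoly ℤ θ) (y * m)
    simpa using this
  rw [eval_mul, eval_mul, eval_C, eval_C, ← hv, eval_comp, eval_mul, eval_C, eval_X, h1, h4] at h3
  have hda : (a.den : ℚ) ≠ 0 := by exact_mod_cast a.den_ne_zero
  have hdb : (b.den : ℚ) ≠ 0 := by exact_mod_cast b.den_ne_zero
  have : (((a.num * b.den) * (minpoly ℤ θ).eval (y * m) : ℤ) : ℚ) = ((b.num * a.den * v : ℤ) : ℚ) := by
    push_cast
    have e1 : (a.num : ℚ) = a * a.den := (Rat.mul_den_eq_num a).symm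
    have e2 : (b.num : ℚ) = b * b.den := (Rat.mul_den_eq_num b).symm
    rw [e1, e2]
    linear_combination (a.den : ℚ) * b.den * h3
  exact_mod_cast this

theorem card_I (f : ℚ[X]) (d : ℕ) (hint : ∀ n : ℤ, ∃ m : ℤ, f.eval (n : ℚ) = (m : ℚ))
    (I : ∀ p : ℕ, Finset (ZMod p))
    (hI : ∀ p, p.Prime → d < p → ∀ nres : ZMod p, nres ∈ I p ↔
      ∃ m : ℤ, ((m : ZMod p) = nres ∧ ∀ v : ℤ, (v : ℚ) = f.eval (m : ℚ) → (p : ℤ) ∣ v))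
    (g : ℤ[X]) (y A B : ℤ) (hy : y ≠ 0) (hA : A ≠ 0) (hB : B ≠ 0)
    (hg : ∀ m v : ℤ, (v : ℚ) = f.eval (m : ℚ) → B * g.eval (y * m) = A * v) :
    ∃ M : ℕ, M ≠ 0 ∧ ∀ p : ℕ, p.Prime → ¬ p ∣ M → (I p).card =
      Nat.card {n : ZMod p // (g.map (Int.castRingHom (ZMod p))).IsRoot n} := by
  refine ⟨(y * A * B).natAbs * d.factorial, mul_ne_zero (by simp [hy, hA, hB]) (Nat.factorial_ne_zero d), ?_⟩
  intro p hp hpM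
  have : Fact p.Prime := ⟨hp⟩
  have hd : d < p := by
    by_contra h
    exact hpM (Dvd.dvd.mul_left ((hp.dvd_factorial).2 (not_lt.1 h)) _)
  have hpp : Prime (p : ℤ) := Nat.prime_iff_prime_int.1 hp
  have hyAB : ¬ (p : ℤ) ∣ y * A * B := fun h => hpM (Dvd.dvd.mul_right (Int.natCast_dvd.1 h) _)
  have hpy : ¬ (p : ℤ) ∣ y := fun h => hyAB ((h.mul_right _).mul_right _)
  have hpA : ¬ (p : ℤ) ∣ A := fun h => hyAB ((h.mul_left _).mul_right _)
  have hpB : ¬ (p : ℤ) ∣ B := fun h => hyAB (h.mul_left _)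
  have hy0 : (y : ZMod p) ≠ 0 := by rwa [Ne, ZMod.intCast_zmod_eq_zero_iff_dvd]
  have key : ∀ m : ℤ, (∀ v : ℤ, (v : ℚ) = f.eval (m : ℚ) → (p : ℤ) ∣ v) ↔
      (g.map (Int.castRingHom (ZMod p))).IsRoot ((y : ZMod p) * (m : ZMod p)) := by
    intro m
    have h4 : eval ((y : ZMod p) * m) (g.map (Int.castRingHom (ZMod p))) = ((g.eval (y * m) : ℤ) : ZMod p) := by
      have := eval_intCast_map (Int.castRingHom (ZMod p)) g (y * m)
      simpa using this
    rw [IsRoot.def, h4, ZMod.intCast_zmod_eq_zero_iff_dvd]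
    obtain ⟨v, hv⟩ := hint m
    have h5 := hg m v hv.symm
    constructor
    · intro h
      have := h v hv.symm
      have h6 : (p : ℤ) ∣ B * g.eval (y * m) := by rw [h5]; exact this.mul_left _
      exact (hpp.dvd_or_dvd h6).resolve_left hpB
    · intro h w hw
      have hwv : w = v := by exact_mod_cast hw.trans hv
      rw [hwv]
      have h6 : (p : ℤ) ∣ A * v := by rw [← h5]; exact h.mul_left _
      exact (hpp.dvd_or_dvd h6).resolve_left hpA
  have hmem : ∀ n : ZMod p, n ∈ I p ↔ (g.map (Int.castRingHom (ZMod p))).IsRoot ((y : ZMod p) * n) := by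
    intro n
    rw [hI p hp hd]
    constructor
    · rintro ⟨m, rfl, h⟩
      exact (key m).1 h
    · intro h
      obtain ⟨m, rfl⟩ := ZMod.intCast_surjective n
      exact ⟨m, rfl, (key m).2 h⟩
  have hc : (I p).card = Nat.card {n : ZMod p // n ∈ I p} := by
    rw [Nat.card_eq_fintype_card, Fintype.card_coe]
  rw [hc]
  refine Nat.card_congr (Equiv.subtypeEquiv (Equiv.mulLeft₀ (y : ZMod p) hy0) fun n => ?_)
  exact hmem n

theorem core {L : Type*} [Field L] [NumberField L] [IsGalois ℚ L] (f : ℚ[X]) (d : ℕ)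
    (hdeg : f.natDegree = d) (hd1 : 1 ≤ d) (hint : ∀ n : ℤ, ∃ m : ℤ, f.eval (n : ℚ) = (m : ℚ))
    (hirr : Irreducible f) (hsp : (f.map (algebraMap ℚ L)).Splits)
    (I : ∀ p : ℕ, Finset (ZMod p))
    (hI : ∀ p, p.Prime → d < p → ∀ nres : ZMod p, nres ∈ I p ↔
      ∃ m : ℤ, ((m : ZMod p) = nres ∧ ∀ v : ℤ, (v : ℚ) = f.eval (m : ℚ) → (p : ℤ) ∣ v)) (ν : ℕ) :
    Tendsto (pavg fun p => if (I p).card = ν then (1 : ℝ) else 0) atTop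
      (𝓝 ((Nat.card {σ : L ≃ₐ[ℚ] L // Set.ncard {rr : L | rr ∈ f.rootSet L ∧ σ rr = rr} = ν} : ℝ) /
        (Nat.card (L ≃ₐ[ℚ] L) : ℝ))) := by
  classical
  obtain ⟨α, hα⟩ : ∃ α : L, aeval α f = 0 := by
    obtain ⟨α, hα⟩ := hsp.exists_eval_eq_zero (by
      rw [degree_map]
      exact (natDegree_pos_iff_degree_pos.1 (by omega)).ne')
    exact ⟨α, by rwa [aeval_def, eval₂_eq_eval_map]⟩
  have halg : IsAlgebraic ℤ α :=
    (IsFractionRing.isAlgebraic_iff ℤ ℚ L).2 (Algebra.IsAlgebraic.isAlgebraic α)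
  obtain ⟨y, hy, hyint⟩ := halg.exists_integral_multiple
  obtain ⟨θ, hθ⟩ : ∃ θ : 𝓞 L, (θ : L) = y • α := ⟨⟨y • α, hyint⟩, rfl⟩
  obtain ⟨A, B, hA, hB, hg⟩ := scaled_minpoly f hirr α hα y hy θ hθ
  obtain ⟨M1, hM1, h1⟩ := card_I f d hint I hI (minpoly ℤ θ) y A B hy hA hB hg
  obtain ⟨M2, hM2, h2⟩ := card_roots_eq θ
  have : Finite (MulAction.orbit (L ≃ₐ[ℚ] L) θ) := (Set.finite_range _).to_subtype
  have hX : ∀ σ : L ≃ₐ[ℚ] L, Nat.card {w : MulAction.orbit (L ≃ₐ[ℚ] L) θ // σ • w = w} =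
      Nat.card {β : 𝓞 L // β ∈ MulAction.orbit (L ≃ₐ[ℚ] L) θ ∧ σ • β = β} := by
    intro σ
    refine Nat.card_congr ((Equiv.subtypeEquivRight fun w => ?_).trans
      (Equiv.subtypeSubtypeEquivSubtypeInter _ (fun β : 𝓞 L => σ • β = β)))
    rw [Subtype.ext_iff]; rfl
  have hroot : ∀ r : L, r ∈ f.rootSet L ↔ ∃ σ : L ≃ₐ[ℚ] L, σ α = r := by
    intro r
    rw [mem_rootSet]
    constructor
    · rintro ⟨-, hr⟩
      have hc : IsConjRoot ℚ r α := by
        rw [IsConjRoot, ← minpoly.eq_of_irreducible hirr hα, ← minpoly.eq_of_irreducible hirr hr]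
      exact (isConjRoot_iff_exists_algEquiv).1 hc
    · rintro ⟨σ, rfl⟩
      refine ⟨hirr.ne_zero, ?_⟩
      have h0 := aeval_algHom_apply (σ : L →ₐ[ℚ] L) α f
      rw [hα, map_zero] at h0
      exact h0
  have hR : ∀ σ : L ≃ₐ[ℚ] L, Set.ncard {rr : L | rr ∈ f.rootSet L ∧ σ rr = rr} =
      Nat.card {w : MulAction.orbit (L ≃ₐ[ℚ] L) θ // σ • w = w} := by
    intro σ
    rw [hX, ← Nat.card_coe_set_eq]
    have hyr : ∀ g : L ≃ₐ[ℚ] L, ((g • θ : 𝓞 L) : L) = y • g α := by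
      intro g
      change g (θ : L) = _
      rw [hθ, map_zsmul]
    have hyL : (y : L) ≠ 0 := by exact_mod_cast hy
    symm
    refine Nat.card_eq_of_bijective (fun β => ⟨(y : L)⁻¹ * (β.1 : L), ?_⟩) ⟨?_, ?_⟩
    · obtain ⟨β, ⟨g, rfl⟩, hβ⟩ := β
      refine ⟨(hroot _).2 ⟨g, ?_⟩, ?_⟩
      · change _ = (y : L)⁻¹ * ((g • θ : 𝓞 L) : L)
        rw [hyr, zsmul_eq_mul, inv_mul_cancel_left₀ hyL]
      · have hβ2 : σ ((g • θ : 𝓞 L) : L) = ((g • θ : 𝓞 L) : L) := congrArg (algebraMap (𝓞 L) L) hβ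
        change σ ((y : L)⁻¹ * ((g • θ : 𝓞 L) : L)) = (y : L)⁻¹ * ((g • θ : 𝓞 L) : L)
        rw [map_mul, map_inv₀, map_intCast, hβ2]
    · intro β γ h
      have h3 := congrArg Subtype.val h
      exact Subtype.ext (RingOfIntegers.coe_injective (mul_left_cancel₀ (inv_ne_zero hyL) h3))
    · rintro ⟨r, hr, hσr⟩
      obtain ⟨g, rfl⟩ := (hroot r).1 hr
      refine ⟨⟨g • θ, ⟨g, rfl⟩, ?_⟩, ?_⟩
      · apply RingOfIntegers.coe_injective
        change σ ((g • θ : 𝓞 L) : L) = ((g • θ : 𝓞 L) : L)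
        rw [hyr, map_zsmul, hσr]
      · apply Subtype.ext
        change (y : L)⁻¹ * ((g • θ : 𝓞 L) : L) = g α
        rw [hyr, zsmul_eq_mul, inv_mul_cancel_left₀ hyL]
  simp_rw [hR]
  refine pavg_congr _ _ (M1 * M2) (mul_ne_zero hM1 hM2) ?_ _
    (good_ind (L := L) (MulAction.orbit (L ≃ₐ[ℚ] L) θ) ν)
  intro p hp hpM
  rw [hX, ← h2 p hp (fun h => hpM (h.mul_left _)), ← h1 p hp (fun h => hpM (h.mul_right _))]

theorem core' {L : Type*} [Field L] [CharZero L] [a : Algebra ℚ L] [FiniteDimensional ℚ L] [IsGalois ℚ L]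
    (f : ℚ[X]) (d : ℕ)
    (hdeg : f.natDegree = d) (hd1 : 1 ≤ d) (hint : ∀ n : ℤ, ∃ m : ℤ, f.eval (n : ℚ) = (m : ℚ))
    (hirr : Irreducible f) (hsp : (f.map (algebraMap ℚ L)).Splits) (S : Set L) (hS : S = f.rootSet L)
    (I : ∀ p : ℕ, Finset (ZMod p))
    (hI : ∀ p, p.Prime → d < p → ∀ nres : ZMod p, nres ∈ I p ↔
      ∃ m : ℤ, ((m : ZMod p) = nres ∧ ∀ v : ℤ, (v : ℚ) = f.eval (m : ℚ) → (p : ℤ) ∣ v)) (ν : ℕ) :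
    Tendsto (pavg fun p => if (I p).card = ν then (1 : ℝ) else 0) atTop
      (𝓝 ((Nat.card {σ : L ≃ₐ[ℚ] L // Set.ncard {rr : L | rr ∈ S ∧ σ rr = rr} = ν} : ℝ) /
        (Nat.card (L ≃ₐ[ℚ] L) : ℝ))) := by
  subst hS
  obtain rfl : a = DivisionRing.toRatAlgebra := Subsingleton.elim _ _
  have : NumberField L := { to_charZero := inferInstance, to_finiteDimensional := inferInstance }
  exact core f d hdeg hd1 hint hirr hsp I hI ν

theorem rootSet_alg {L : Type*} [Field L] (a b : Algebra ℚ L) (f : ℚ[X]) :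
    @Polynomial.rootSet ℚ _ f L _ _ a = @Polynomial.rootSet ℚ _ f L _ _ b := by
  cases Subsingleton.elim a b
  rfl

theorem gal_gen {K : Type*} [Field K] [CharZero K] (f : K[X]) (hirr : Irreducible f) :
    IsGalois K f.SplittingField := IsGalois.of_separable_splitting_field hirr.separable

theorem fd_gen {K : Type*} [Field K] (f : K[X]) : FiniteDimensional K f.SplittingField := inferInstance

theorem count_eq_pavg (P : ℕ → Prop) [DecidablePred P] (x : ℝ) (hx : 0 ≤ x) (s : Finset ℕ)
    (hs : ∀ p, p ∈ s ↔ (p.Prime ∧ (p : ℝ) ≤ x)) (c : ℕ) (hc : c = (s.filter P).card) :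
    (c : ℝ) / (x / Real.log x) = pavg (fun p => if P p then (1 : ℝ) else 0) x := by
  rw [pavg, Finset.sum_boole, hc]
  congr 3
  ext p
  simp only [Finset.mem_filter, hs, Finset.mem_Icc, Nat.le_floor_iff hx]
  constructor
  · rintro ⟨⟨h1, h2⟩, h3⟩
    exact ⟨⟨⟨h1.one_le, h2⟩, h1⟩, h3⟩
  · rintro ⟨⟨⟨-, h2⟩, h1⟩, h3⟩
    exact ⟨⟨h1, h2⟩, h3⟩
end
end PIT
end


open scoped BigOperators Classical

noncomputable section

/-- The set of primes `p ≤ t`. -/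
def primesLe (t : ℝ) : Finset ℕ :=
  ((Finset.range (⌊t⌋₊ + 1)).filter Nat.Prime).filter (fun p => (p : ℝ) ≤ t)

/-- **Hypothesis (e) for polynomial sieving systems (Chebotarev).**  For every
`ν ≥ 0` the density `ρ_ν = lim_{x→∞} #{p ≤ x : |I_p| = ν}/(x/log x)` exists and
equals the proportion of elements of the Galois group of (the splitting field of) `f`
which fix exactly `ν` of the roots of `f`. -/
theorem stmt16 (f : Polynomial ℚ) (d : ℕ) (hdeg : f.natDegree = d) (hd1 : 1 ≤ d)
    (hint : ∀ n : ℤ, ∃ m : ℤ, f.eval (n : ℚ) = (m : ℚ))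
    (hlead : 0 < f.leadingCoeff)
    (hirr : Irreducible f)
    -- the polynomial sieving system of `f`
    (I : ∀ p : ℕ, Finset (ZMod p))
    (hI : ∀ p : ℕ, p.Prime →
      (p ≤ d → I p = ∅) ∧
      (d < p → ∀ nres : ZMod p, nres ∈ I p ↔
        ∃ m : ℤ, ((m : ZMod p) = nres ∧ ∀ v : ℤ, (v : ℚ) = f.eval (m : ℚ) → (p : ℤ) ∣ v)))
    :
    ∀ ν : ℕ,
      Filter.Tendsto (fun x : ℝ =>
          (((primesLe x).filter (fun p => (I p).card = ν)).card : ℝ) / (x / Real.log x))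
        Filter.atTop
        (nhds ((Nat.card {σ : f.Gal //
            Set.ncard {rr : f.SplittingField | rr ∈ f.rootSet f.SplittingField ∧ σ rr = rr}
              = ν} : ℝ) / (Nat.card f.Gal : ℝ))) := by
  intro ν
  have h := @PIT.core' f.SplittingField _ (algebraRat.charZero _) _ (PIT.fd_gen f) (PIT.gal_gen f hirr)
    f d hdeg hd1 hint hirr (Polynomial.SplittingField.splits f)
    (f.rootSet f.SplittingField) (PIT.rootSet_alg _ _ f) I (fun p hp => (hI p hp).2) ν
  refine Filter.Tendsto.congr' ?_ h
  filter_upwards [Filter.eventually_ge_atTop (0 : ℝ)] with x hx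
  have hs : ∀ p, p ∈ primesLe x ↔ (p.Prime ∧ (p : ℝ) ≤ x) := by
    intro p
    simp only [primesLe, Finset.mem_filter, Finset.mem_range, Nat.lt_succ_iff, Nat.le_floor_iff hx]
    tauto
  rw [PIT.count_eq_pavg (fun p => (I p).card = ν) x hx (primesLe x) hs _ rfl]

end
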